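/- For every θ ∈ Θ_M°, the 4×4 Fisher information matrix I_θ with entries I_{θiθj}(θ) = ∫_ℝ (f_{θi}f_{θj}/f)(x;θ) dx is positive definite; in particular it is nonsingular. -/

import Mathlib

open MeasureTheory Filter

noncomputable section

def ThetaInt : Set (Fin 4 → ℝ) :=
  {θ | 0 < θ 1 ∧ θ 2 ∈ Set.Ioo (0:ℝ) 2 ∧ θ 3 ∈ Set.Ioo (-1:ℝ) 1}

/-- Cumulant (log characteristic function) of the continuous (M₀) parameterization,
with `θ = (μ, σ, α, β)`. -/
def psiM (θ : Fin 4 → ℝ) (t : ℝ) : ℂ :=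
  if θ 2 = 1 then
    ((-(|θ 1 * t|) : ℝ) : ℂ)
      - Complex.I * (((2 * θ 3 / Real.pi) * (θ 1 * t) * Real.log |θ 1 * t| : ℝ) : ℂ)
      + Complex.I * ((θ 0 * t : ℝ) : ℂ)
  else
    ((-(|θ 1 * t| ^ (θ 2)) : ℝ) : ℂ) *
        (1 + Complex.I * ((θ 3 * Real.sign t * Real.tan (Real.pi * θ 2 / 2)
            * (|θ 1 * t| ^ (1 - θ 2) - 1) : ℝ) : ℂ))
      + Complex.I * ((θ 0 * t : ℝ) : ℂ)

/-- Characteristic function of the (M₀) parameterization. -/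
def phiM (θ : Fin 4 → ℝ) (t : ℝ) : ℂ := Complex.exp (psiM θ t)

/-- Stable density in the (M₀) parameterization, via Fourier inversion. -/
def fM (θ : Fin 4 → ℝ) (x : ℝ) : ℝ :=
  (1 / (2 * Real.pi)) *
    (∫ t : ℝ, Complex.exp (-Complex.I * (t : ℂ) * (x : ℂ)) * phiM θ t).re

/-- Partial derivative of the density in parameter `i`. -/
def fP (i : Fin 4) (θ : Fin 4 → ℝ) (x : ℝ) : ℝ :=
  deriv (fun s => fM (Function.update θ i s) x) (θ i)

/-- Second partial derivative of the density in parameters `i`, `j`. -/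
def fPP (i j : Fin 4) (θ : Fin 4 → ℝ) (x : ℝ) : ℝ :=
  deriv (fun s => fP i (Function.update θ j s) x) (θ j)

/-- Derivative of the density in `x`. -/
def fX (θ : Fin 4 → ℝ) (x : ℝ) : ℝ := deriv (fun y => fM θ y) x

/-- Mixed derivative `∂²f/∂x∂θᵢ`. -/
def fPX (i : Fin 4) (θ : Fin 4 → ℝ) (x : ℝ) : ℝ := deriv (fun y => fP i θ y) x

/-- Score functions. -/
def ellP (i : Fin 4) (θ : Fin 4 → ℝ) (x : ℝ) : ℝ := fP i θ x / fM θ x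

/-- Derivative of the score in `x`. -/
def ellPX (i : Fin 4) (θ : Fin 4 → ℝ) (x : ℝ) : ℝ := deriv (fun y => ellP i θ y) x

/-- Derivative of the score `ℓ_{θᵢ}` in the parameter `θⱼ`. -/
def ellPP (i j : Fin 4) (θ : Fin 4 → ℝ) (x : ℝ) : ℝ :=
  deriv (fun s => ellP i (Function.update θ j s) x) (θ j)

/-- `h = O(r)` as `|x| → ∞`. -/
def IsBigOAtInfty (h r : ℝ → ℝ) : Prop :=
  ∃ c > 0, ∃ M > 0, ∀ x : ℝ, M ≤ |x| → |h x| ≤ c * r x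


/-- Fisher information matrix of the (M₀) stable family. -/
def FisherInfo (θ : Fin 4 → ℝ) : Matrix (Fin 4) (Fin 4) ℝ :=
  Matrix.of fun i j => ∫ x : ℝ, fP i θ x * fP j θ x / fM θ x

end

section
open MeasureTheory Filter Topology

lemma aux_exists_charFun {μ : ℕ → Measure ℝ} [∀ i, IsProbabilityMeasure (μ i)] {f : ℝ → ℂ}
    (hf : ContinuousAt f 0) (h : ∀ t, Tendsto (fun n ↦ charFun (μ n) t) atTop (𝓝 (f t))) :
    ∃ Q : Measure ℝ, IsProbabilityMeasure Q ∧ ∀ t, charFun Q t = f t := by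
  have ht := isTightMeasureSet_of_tendsto_charFun hf h
  let μ' : ℕ → ProbabilityMeasure ℝ := fun n => ⟨μ n, inferInstance⟩
  have h_compact : IsCompact (closure {μ' n | n}) := by
    refine isCompact_closure_of_isTightMeasureSet ?_
    convert ht using 1
    ext ν
    constructor
    · rintro ⟨Q, ⟨n, rfl⟩, rfl⟩
      exact ⟨n, rfl⟩
    · rintro ⟨n, rfl⟩
      exact ⟨μ' n, ⟨n, rfl⟩, rfl⟩
  obtain ⟨Q, -, hQ⟩ := h_compact.ultrafilter_le_nhds ((hyperfilter ℕ).map μ')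
    (.trans (by simp) (monotone_principal subset_closure))
  refine ⟨Q, inferInstance, fun t => ?_⟩
  have hQ' : Tendsto μ' (hyperfilter ℕ : Filter ℕ) (𝓝 Q) := hQ
  rw [ProbabilityMeasure.tendsto_iff_forall_integral_rclike_tendsto ℂ] at hQ'
  have h1 := hQ' (BoundedContinuousFunction.innerProbChar t)
  have h2 := (h t).mono_left Nat.hyperfilter_le_atTop
  simp_rw [charFun_eq_integral_innerProbChar] at h2 ⊢
  exact tendsto_nhds_unique h1 h2

noncomputable def aux_kpow (ν : Measure ℝ) : ℕ → Measure ℝ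
  | 0 => Measure.dirac 0
  | n+1 => ν.conv (aux_kpow ν n)

instance aux_kpow_fin (ν : Measure ℝ) [IsFiniteMeasure ν] (n : ℕ) : IsFiniteMeasure (aux_kpow ν n) := by
  induction n with
  | zero => unfold aux_kpow; infer_instance
  | succ n ih => unfold aux_kpow; infer_instance

lemma aux_kpow_charFun (ν : Measure ℝ) [IsFiniteMeasure ν] (n : ℕ) (t : ℝ) :
    charFun (aux_kpow ν n) t = (charFun ν t)^n := by
  induction n with
  | zero => simp [aux_kpow]
  | succ n ih => rw [aux_kpow, charFun_conv, ih, pow_succ']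

lemma aux_kpow_mass (ν : Measure ℝ) [IsFiniteMeasure ν] (n : ℕ) :
    (aux_kpow ν n).real Set.univ = (ν.real Set.univ)^n := by
  have h := aux_kpow_charFun ν n 0
  simp only [charFun_zero] at h
  exact_mod_cast h

lemma aux_cp (ν : Measure ℝ) [IsFiniteMeasure ν] :
    ∃ Q : Measure ℝ, IsProbabilityMeasure Q ∧
      (∀ t, charFun Q t = Complex.exp (charFun ν t - charFun ν 0)) ∧
      ENNReal.ofReal (Real.exp (-ν.real Set.univ)) • ν ≤ Q := by
  set l := ν.real Set.univ with hl
  have hl0 : 0 ≤ l := measureReal_nonneg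
  let w : ℕ → ℝ := fun n => Real.exp (-l) * (n.factorial : ℝ)⁻¹
  have hw : ∀ n, 0 ≤ w n := fun n => by positivity
  let M : ℕ → Measure ℝ := fun n => ENNReal.ofReal (w n) • aux_kpow ν n
  let Q := Measure.sum M
  have hmass : ∀ n, M n Set.univ = ENNReal.ofReal (w n * l^n) := by
    intro n
    simp only [M, Measure.smul_apply, smul_eq_mul]
    rw [ENNReal.ofReal_mul (hw n), ← aux_kpow_mass, ofReal_measureReal]
  have hs : HasSum (fun n => w n * l^n) 1 := by
    have := (NormedSpace.expSeries_div_hasSum_exp (𝔸 := ℝ) l).mul_left (Real.exp (-l))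
    rw [← Real.exp_eq_exp_ℝ, ← Real.exp_add] at this
    simp only [neg_add_cancel, Real.exp_zero] at this
    convert! this using 2 with n
    simp [w]; ring
  have hQ : IsProbabilityMeasure Q := by
    constructor
    simp only [Q, Measure.sum_apply _ MeasurableSet.univ, hmass]
    rw [← ENNReal.ofReal_tsum_of_nonneg (fun n => by have := hw n; positivity) hs.summable, hs.tsum_eq]
    simp
  refine ⟨Q, hQ, fun t => ?_, ?_⟩
  · have hint : Integrable (fun x : ℝ => Complex.exp (t * x * Complex.I)) (Measure.sum M) := by
      have : IsFiniteMeasure (Measure.sum M) := by change IsFiniteMeasure Q; infer_instance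
      refine Integrable.of_bound (C := 1) (by fun_prop) (Eventually.of_forall fun x => ?_)
      rw [← Complex.ofReal_mul, Complex.norm_exp_ofReal_mul_I]
    have h1 := hasSum_integral_measure hint
    simp only [charFun_apply_real, Q]
    refine h1.unique ?_
    have h2 := (NormedSpace.expSeries_div_hasSum_exp (𝔸 := ℂ) (charFun ν t)).mul_left (Complex.exp (-charFun ν 0))
    rw [← Complex.exp_eq_exp_ℂ, ← Complex.exp_add] at h2
    rw [← charFun_apply_real, ← charFun_apply_real, sub_eq_neg_add]
    convert! h2 using 2 with n
    simp only [M]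
    rw [integral_smul_measure, ← charFun_apply_real, aux_kpow_charFun,
      ENNReal.toReal_ofReal (hw n)]
    simp only [w, charFun_zero, ← hl]
    rw [Complex.real_smul]
    push_cast
    ring
  · have : M 1 ≤ Q := Measure.le_sum M 1
    convert this using 1
    simp [M, w, aux_kpow]

end

section
open MeasureTheory Filter Topology

noncomputable def aux_e2 (y : ℝ) : ℂ := Complex.exp (y * Complex.I) - 1 - y * Complex.I

lemma aux_e2_cont : Continuous aux_e2 := by unfold aux_e2; fun_prop

lemma aux_e2_bound (y : ℝ) : ‖aux_e2 y‖ ≤ 3 * y^2 := by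
  unfold aux_e2
  rcases le_or_gt |y| 1 with h | h
  · have := Complex.norm_exp_sub_one_sub_id_le (x := y * Complex.I) (by simpa using h)
    simp only [norm_mul, Complex.norm_I, mul_one, Complex.norm_real, Real.norm_eq_abs, sq_abs] at this
    nlinarith [sq_nonneg y]
  · have h1 : ‖Complex.exp (y * Complex.I) - 1 - y * Complex.I‖ ≤ 1 + 1 + |y| := by
      refine (norm_sub_le _ _).trans (add_le_add ((norm_sub_le _ _).trans ?_) ?_)
      · rw [Complex.norm_exp_ofReal_mul_I]; simp
      · simp
    nlinarith [sq_abs y]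

lemma aux_levy_integrable {n : ℝ → ℝ} (hm : Measurable n) (h2 : Integrable (fun x => x^2 * n x)) (t : ℝ) :
    Integrable (fun x => aux_e2 (t * x) * (n x : ℂ)) := by
  refine (h2.norm.const_mul (3 * t^2)).mono' ?_ (Eventually.of_forall fun x => ?_)
  · exact ((aux_e2_cont.comp (by fun_prop)).measurable.mul
      (Complex.measurable_ofReal.comp hm)).aestronglyMeasurable
  · rw [norm_mul, Complex.norm_real]
    have := aux_e2_bound (t * x)
    calc _ ≤ (3 * (t*x)^2) * ‖n x‖ := by gcongr
      _ = _ := by rw [norm_mul, Real.norm_eq_abs (x^2), abs_of_nonneg (sq_nonneg x)]; ring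

lemma aux_levy {n : ℝ → ℝ} (hm : Measurable n) (h0 : ∀ x, 0 ≤ n x)
    (h2 : Integrable (fun x => x^2 * n x)) (b : ℝ) :
    ∃ Q : Measure ℝ, IsProbabilityMeasure Q ∧
      ∀ t : ℝ, charFun Q t = Complex.exp ((∫ x, aux_e2 (t * x) * (n x : ℂ)) + b * t * Complex.I) := by
  let S : ℕ → Set ℝ := fun m => {x | 1 ≤ (m + 1) * |x|}
  have hS : ∀ m, MeasurableSet (S m) := fun m => measurableSet_le (by fun_prop) (by fun_prop)
  let nm : ℕ → ℝ → ℝ := fun m => (S m).indicator n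
  have hnm : ∀ m, Measurable (nm m) := fun m => hm.indicator (hS m)
  have hnm0 : ∀ m x, 0 ≤ nm m x := fun m x => Set.indicator_nonneg (fun x _ => h0 x) x
  have hle : ∀ m x, nm m x ≤ n x := fun m x => Set.indicator_le_self' (fun x _ => h0 x) x
  have hi0 : ∀ m, Integrable (nm m) := by
    intro m
    refine (h2.const_mul ((m+1)^2)).mono' (hnm m).aestronglyMeasurable (Eventually.of_forall fun x => ?_)
    by_cases hx : x ∈ S m
    · simp only [nm, Set.indicator_of_mem hx]
      rw [Real.norm_of_nonneg (h0 x)]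
      have hx' : 1 ≤ (m + 1) * |x| := hx
      have : 1 ≤ ((m + 1) * |x|)^2 := by nlinarith
      rw [mul_pow, sq_abs] at this
      nlinarith [h0 x]
    · simp only [nm, Set.indicator_of_notMem hx]
      have := h0 x
      simp; positivity
  have hi1 : ∀ m, Integrable (fun x => x * nm m x) := by
    intro m
    refine ((h2.const_mul (m+1))).mono' (measurable_id.mul (hnm m)).aestronglyMeasurable (Eventually.of_forall fun x => ?_)
    by_cases hx : x ∈ S m
    · simp only [nm, Set.indicator_of_mem hx]
      rw [norm_mul, Real.norm_of_nonneg (h0 x), Real.norm_eq_abs]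
      have hx' : 1 ≤ (m + 1) * |x| := hx
      have : |x| ≤ (m+1) * x^2 := by nlinarith [sq_abs x, abs_nonneg x]
      nlinarith [h0 x]
    · simp only [nm, Set.indicator_of_notMem hx]
      have := h0 x
      simp; positivity
  have hi2 : ∀ m, Integrable (fun x => x^2 * nm m x) := by
    intro m
    refine h2.mono' (by fun_prop) (Eventually.of_forall fun x => ?_)
    have := hnm0 m x
    rw [Real.norm_of_nonneg (by positivity)]
    exact mul_le_mul_of_nonneg_left (hle m x) (sq_nonneg x)
  let ν : ℕ → Measure ℝ := fun m => volume.withDensity (fun x => ENNReal.ofReal (nm m x))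
  have hν : ∀ m, IsFiniteMeasure (ν m) := fun m => isFiniteMeasure_withDensity_ofReal (hi0 m).2
  choose Q hQp hQ _ using fun m => aux_cp (ν m)
  let R : ℕ → Measure ℝ := fun m => (Q m).conv (Measure.dirac (b - ∫ x, x * nm m x))
  have hcν : ∀ m t, charFun (ν m) t = ∫ x : ℝ, Complex.exp (t * x * Complex.I) * (nm m x : ℂ) := by
    intro m t
    rw [charFun_apply_real]
    simp only [ν]
    rw [integral_withDensity_eq_integral_toReal_smul (by fun_prop) (by simp)]
    refine integral_congr_ae (Eventually.of_forall fun x => ?_)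
    simp only [ENNReal.toReal_ofReal (hnm0 m x)]
    rw [Complex.real_smul, mul_comm]
  have hR : ∀ m t, charFun (R m) t = Complex.exp ((∫ x, aux_e2 (t * x) * (nm m x : ℂ)) + b * t * Complex.I) := by
    intro m t
    simp only [R]
    rw [charFun_conv, hQ, charFun_dirac, hcν, hcν, ← Complex.exp_add]
    congr 1
    have e1 : ∀ t : ℝ, Integrable (fun x : ℝ => Complex.exp (t * x * Complex.I) * (nm m x : ℂ)) := by
      intro t
      refine ((hi0 m).ofReal (𝕜 := ℂ)).bdd_mul (c := 1) (by fun_prop) (Eventually.of_forall fun x => ?_)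
      rw [← Complex.ofReal_mul, Complex.norm_exp_ofReal_mul_I]
    have e3 : Integrable (fun x : ℝ => (t * Complex.I) * ((x * nm m x : ℝ) : ℂ)) := ((hi1 m).ofReal).const_mul _
    have : ∫ x, aux_e2 (t * x) * (nm m x : ℂ) =
       (∫ x : ℝ, Complex.exp (t * x * Complex.I) * (nm m x : ℂ)) - (∫ x : ℝ, Complex.exp ((0:ℝ) * x * Complex.I) * (nm m x : ℂ))
         - (t * Complex.I) * (∫ x, x * nm m x : ℝ) := by
      rw [← integral_complex_ofReal, ← integral_const_mul, ← integral_sub (e1 t) (e1 0), ← integral_sub (by exact (e1 t).sub (e1 0)) e3]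
      refine integral_congr_ae (Eventually.of_forall fun x => ?_)
      simp only [aux_e2]
      push_cast
      simp
      ring
    rw [this]
    simp only [RCLike.inner_apply, conj_trivial]
    push_cast
    ring
  refine aux_exists_charFun (μ := R) ?_ fun t => ?_
  · have : Tendsto (fun t => ∫ x, aux_e2 (t * x) * (n x : ℂ)) (𝓝 0) (𝓝 0) := by
      refine squeeze_zero_norm (a := fun t : ℝ => 3 * t^2 * ∫ x, x^2 * n x) (fun t => ?_) ?_
      · rw [← integral_const_mul]
        refine norm_integral_le_of_norm_le (h2.const_mul _) (Eventually.of_forall fun x => ?_)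
        rw [norm_mul, Complex.norm_real, Real.norm_of_nonneg (h0 x)]
        have := aux_e2_bound (t * x)
        nlinarith [h0 x]
      · have : Continuous fun t : ℝ => 3 * t^2 * ∫ x, x^2 * n x := by fun_prop
        simpa using this.tendsto 0
    have h3 : Tendsto (fun t : ℝ => b * t * Complex.I) (𝓝 0) (𝓝 0) := by
      have : Continuous fun t : ℝ => b * t * Complex.I := by fun_prop
      simpa using this.tendsto 0
    have h4 := (Complex.continuous_exp.tendsto _).comp (this.add h3)
    rw [ContinuousAt]
    simpa [aux_e2, Function.comp_def] using h4
  · simp only [hR]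
    refine (Complex.continuous_exp.tendsto _).comp (Tendsto.add ?_ tendsto_const_nhds)
    refine tendsto_integral_of_dominated_convergence (fun x => 3 * t^2 * (x^2 * n x))
      (fun m => (aux_levy_integrable (hnm m) (hi2 m) t).1) (h2.const_mul _) (fun m => Eventually.of_forall fun x => ?_)
      (Eventually.of_forall fun x => ?_)
    · rw [norm_mul, Complex.norm_real, Real.norm_of_nonneg (hnm0 m x)]
      have := aux_e2_bound (t * x)
      calc _ ≤ (3 * (t*x)^2) * n x := mul_le_mul this (hle m x) (hnm0 m x) (by positivity)
        _ = _ := by ring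
    · by_cases hx : x = 0
      · subst hx; simp [aux_e2]
      · refine Tendsto.const_mul _ ?_
        refine tendsto_const_nhds.congr' ?_
        obtain ⟨N, hN⟩ := exists_nat_ge (1 / |x|)
        filter_upwards [eventually_ge_atTop N] with m hm
        have : x ∈ S m := by
          have hx0 : 0 < |x| := abs_pos.mpr hx
          have h1 : (N:ℝ) ≤ m := by exact_mod_cast hm
          have h2 : 1 / |x| ≤ m + 1 := by linarith
          rw [div_le_iff₀ hx0] at h2
          exact h2
        simp [nm, Set.indicator_of_mem this]

end

section
open MeasureTheory Filter Topology

lemma aux_int_abs {E : Type*} [NormedAddCommGroup E] {F : ℝ → E} (h : IntegrableOn F (Set.Ioi 0)) :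
    Integrable (fun x => F |x|) := by
  have h1 : IntegrableOn (fun x => F |x|) (Set.Ioi 0) :=
    h.congr_fun (fun x hx => by rw [abs_of_pos hx]) measurableSet_Ioi
  have h2 : IntegrableOn (fun x => F |x|) (Set.Iio 0) := by
    have := (Measure.measurePreserving_neg (volume : Measure ℝ)).integrableOn_comp_preimage
      (Homeomorph.neg ℝ).measurableEmbedding (f := fun x => F |x|) (s := Set.Ioi 0)
    have h3 := this.2 h1
    simpa [Function.comp_def] using h3
  rw [← integrableOn_univ, ← Set.Iio_union_Ici (a := (0:ℝ)), integrableOn_union]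
  exact ⟨h2, by rwa [integrableOn_Ici_iff_integrableOn_Ioi]⟩

lemma aux_gamma_int {α ε : ℝ} (hα : α < 2) (hε : 0 < ε) :
    IntegrableOn (fun x : ℝ => x ^ (1 - α) * Real.exp (-ε * x)) (Set.Ioi 0) := by
  have := integrableOn_rpow_mul_exp_neg_mul_rpow (p := 1) (s := 1 - α) (b := ε) (by linarith) (by norm_num) hε
  simpa using this

noncomputable def aux_N (α cp cm ε x : ℝ) : ℝ :=
  (if 0 < x then cp else cm) * |x| ^ (-1 - α) * Real.exp (-ε * |x|)

lemma aux_N_meas (α cp cm ε : ℝ) : Measurable (aux_N α cp cm ε) := by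
  unfold aux_N
  refine Measurable.mul (Measurable.mul ?_ (by fun_prop)) (by fun_prop)
  exact Measurable.ite measurableSet_Ioi measurable_const measurable_const

lemma aux_N_int {α cp cm ε : ℝ} (hα : α < 2) (hp : 0 < cp) (hm : 0 < cm) (hε : 0 < ε) :
    Integrable (fun x => x^2 * aux_N α cp cm ε x) := by
  have h := (aux_int_abs (aux_gamma_int hα hε)).const_mul (cp + cm)
  refine h.mono' ((measurable_id.pow_const 2).mul (aux_N_meas _ _ _ _)).aestronglyMeasurable
    (Eventually.of_forall fun x => ?_)
  unfold aux_N
  rw [Real.norm_of_nonneg (by split_ifs <;> positivity)]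
  rcases eq_or_ne x 0 with rfl | hx
  · simp; positivity
  have hx' : 0 < |x| := abs_pos.mpr hx
  have e : |x| ^ (1 - α) = x^2 * |x| ^ (-1 - α) := by
    rw [show 1 - α = 2 + (-1 - α) by ring, Real.rpow_add hx']
    congr 1
    rw [← sq_abs x]; exact_mod_cast Real.rpow_natCast |x| 2
  rw [e]
  have : (if 0 < x then cp else cm) ≤ cp + cm := by split_ifs <;> linarith
  calc _ = (if 0 < x then cp else cm) * (x^2 * |x| ^ (-1 - α) * Real.exp (-ε * |x|)) := by ring
    _ ≤ _ := by gcongr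

lemma aux_k_int {α : ℝ} (hα : 0 < α) : Integrable (fun x : ℝ => (1 + |x|) ^ (-1 - α)) := by
  have := integrable_one_add_norm (E := ℝ) (μ := volume) (r := 1 + α) (by simp; linarith)
  simpa [show -(1 + α) = -1 - α by ring] using this

lemma aux_L4 {α cp cm : ℝ} (hα0 : 0 < α) (hα : α < 2) (hp : 0 < cp) (hm : 0 < cm) {ψ : ℝ → ℂ}
    (hψ : ContinuousAt ψ 0) (b : ℕ → ℝ)
    (hlim : ∀ t : ℝ, Tendsto (fun m : ℕ => (∫ x, aux_e2 (t * x) * (aux_N α cp cm (1 / ((m:ℝ) + 1)) x : ℂ))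
      + b m * t * Complex.I) atTop (𝓝 (ψ t))) :
    ∃ P : Measure ℝ, IsProbabilityMeasure P ∧ (∀ t, charFun P t = Complex.exp (ψ t)) ∧
      ∃ G : Measure ℝ, IsProbabilityMeasure G ∧ ∃ c : ℝ, 0 < c ∧ ∀ g : ℝ → ENNReal, Measurable g →
        ∫⁻ z, ∫⁻ y, ENNReal.ofReal (c * (1 + |y|) ^ (-1 - α)) * g (z + y) ∂volume ∂G ≤ ∫⁻ x, g x ∂P := by
  set c := min cp cm with hc
  have hc0 : 0 < c := lt_min hp hm
  let k : ℝ → ℝ := fun x => c * (1 + |x|) ^ (-1 - α)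
  have hk0 : ∀ x, 0 ≤ k x := fun x => by positivity
  have hkm : Measurable k := by fun_prop
  have hki : Integrable k := (aux_k_int hα0).const_mul c
  let e : ℕ → ℝ := fun m => 1 / ((m:ℝ) + 1)
  have he : ∀ m, 0 < e m := fun m => by positivity
  let km : ℕ → ℝ → ℝ := fun m x => k x * Real.exp (-e m * |x|)
  have hkmm : ∀ m, Measurable (km m) := fun m => by fun_prop
  have hkm0 : ∀ m x, 0 ≤ km m x := fun m x => by have := hk0 x; positivity
  have hexp1 : ∀ m x, Real.exp (-e m * |x|) ≤ 1 := fun m x => by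
    rw [Real.exp_le_one_iff]; have := he m; have := abs_nonneg x; nlinarith
  have hkmle : ∀ m x, km m x ≤ k x := fun m x => mul_le_of_le_one_right (hk0 x) (hexp1 m x)
  have hkmi : ∀ m, Integrable (km m) := fun m => hki.mono' (hkmm m).aestronglyMeasurable
    (Eventually.of_forall fun x => by rw [Real.norm_of_nonneg (hkm0 m x)]; exact hkmle m x)
  have hkN : ∀ m x, x ≠ 0 → km m x ≤ aux_N α cp cm (e m) x := by
    intro m x hx
    have hx' : 0 < |x| := abs_pos.mpr hx
    unfold aux_N
    simp only [km, k]
    gcongr ?_ * ?_ * _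
    · split_ifs
      · exact min_le_left _ _
      · exact min_le_right _ _
    · exact Real.rpow_le_rpow_of_nonpos hx' (by linarith) (by linarith)
  let n : ℕ → ℝ → ℝ := fun m x => |aux_N α cp cm (e m) x - km m x|
  have hnm : ∀ m, Measurable (n m) := fun m => by
    have := aux_N_meas α cp cm (e m)
    have := hkmm m
    exact (Measurable.sub (by assumption) (by assumption)).abs
  have hnN : ∀ m x, x^2 * n m x = x^2 * aux_N α cp cm (e m) x - x^2 * km m x := by
    intro m x
    rcases eq_or_ne x 0 with rfl | hx
    · simp
    · simp only [n]; rw [abs_of_nonneg (by linarith [hkN m x hx])]; ring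
  have hNi : ∀ m, Integrable (fun x => x^2 * aux_N α cp cm (e m) x) := fun m => aux_N_int hα hp hm (he m)
  have hkm2 : ∀ m, Integrable (fun x => x^2 * km m x) := by
    intro m
    refine (hNi m).mono' (by fun_prop) (Eventually.of_forall fun x => ?_)
    rw [Real.norm_of_nonneg (mul_nonneg (sq_nonneg x) (hkm0 m x))]
    rcases eq_or_ne x 0 with rfl | hx
    · simp
    · gcongr; exact hkN m x hx
  have hkm1 : ∀ m, Integrable (fun x => x * km m x) := by
    intro m
    refine ((hkm2 m).add (hkmi m)).mono' (by fun_prop) (Eventually.of_forall fun x => ?_)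
    rw [norm_mul, Real.norm_of_nonneg (hkm0 m x), Real.norm_eq_abs]
    have : |x| ≤ x^2 + 1 := by nlinarith [sq_abs x, sq_nonneg (|x| - 1)]
    calc _ ≤ (x^2+1) * km m x := mul_le_mul_of_nonneg_right this (hkm0 m x)
      _ = _ := by simp; ring
  have hn2 : ∀ m, Integrable (fun x => x^2 * n m x) := fun m => by
    simp only [hnN]; exact (hNi m).sub (hkm2 m)
  choose Q hQp hQ using fun m => aux_levy (hnm m) (fun x => abs_nonneg _) (hn2 m) (b m - ∫ x, x * km m x)
  have hint1 : ∀ (κ : ℝ → ℝ), Integrable κ → ∀ t : ℝ,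
      Integrable (fun x : ℝ => (Complex.exp (t * x * Complex.I) - 1) * (κ x : ℂ)) := by
    intro κ hκ t
    refine (hκ.ofReal (𝕜 := ℂ)).bdd_mul (c := 2) (by fun_prop) (Eventually.of_forall fun x => ?_)
    refine (norm_sub_le _ _).trans ?_
    rw [← Complex.ofReal_mul, Complex.norm_exp_ofReal_mul_I]; norm_num
  have hQ' : ∀ m (t : ℝ), charFun (Q m) t = Complex.exp
      (((∫ x, aux_e2 (t * x) * (aux_N α cp cm (e m) x : ℂ)) + b m * t * Complex.I)
        - ∫ x : ℝ, (Complex.exp (t * x * Complex.I) - 1) * (km m x : ℂ)) := by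
    intro m t
    rw [hQ]
    congr 1
    have e3 : Integrable (fun x : ℝ => (t * Complex.I) * ((x * km m x : ℝ) : ℂ)) := ((hkm1 m).ofReal).const_mul _
    have : (∫ x, aux_e2 (t * x) * (n m x : ℂ)) = (∫ x, aux_e2 (t * x) * (aux_N α cp cm (e m) x : ℂ))
        - ((∫ x : ℝ, (Complex.exp (t * x * Complex.I) - 1) * (km m x : ℂ)) - (t * Complex.I) * (∫ x, x * km m x : ℝ)) := by
      rw [← integral_complex_ofReal, ← integral_const_mul, ← integral_sub (hint1 _ (hkmi m) t) e3,
        ← integral_sub (aux_levy_integrable (aux_N_meas _ _ _ _) (hNi m) t) (by exact (hint1 _ (hkmi m) t).sub e3)]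
      refine integral_congr_ae (Eventually.of_forall fun x => ?_)
      simp only
      rcases eq_or_ne x 0 with rfl | hx
      · simp [aux_e2]
      · simp only [n]; rw [abs_of_nonneg (by linarith [hkN m x hx])]
        simp only [aux_e2]; push_cast; ring
    rw [this]; push_cast; ring
  have hkt : Continuous (fun t : ℝ => ∫ x : ℝ, (Complex.exp (t * x * Complex.I) - 1) * (k x : ℂ)) := by
    refine continuous_of_dominated (bound := fun x => 2 * k x) (fun t => (hint1 k hki t).1)
      (fun t => Eventually.of_forall fun x => ?_) (hki.const_mul 2) (Eventually.of_forall fun x => by fun_prop)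
    rw [norm_mul, Complex.norm_real, Real.norm_of_nonneg (hk0 x)]
    refine mul_le_mul_of_nonneg_right ?_ (hk0 x)
    refine (norm_sub_le _ _).trans ?_
    rw [← Complex.ofReal_mul, Complex.norm_exp_ofReal_mul_I]; norm_num
  obtain ⟨G, hGp, hG⟩ := aux_exists_charFun (μ := Q)
    (f := fun t => Complex.exp (ψ t - ∫ x : ℝ, (Complex.exp (t * x * Complex.I) - 1) * (k x : ℂ)))
    (by
      have := (hψ.sub hkt.continuousAt)
      exact Complex.continuous_exp.continuousAt.comp this) (by
      intro t
      simp only [hQ']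
      refine (Complex.continuous_exp.tendsto _).comp ((hlim t).sub ?_)
      refine tendsto_integral_of_dominated_convergence (fun x => 2 * k x)
        (fun m => (hint1 _ (hkmi m) t).1) (hki.const_mul 2) (fun m => Eventually.of_forall fun x => ?_)
        (Eventually.of_forall fun x => ?_)
      · rw [norm_mul, Complex.norm_real, Real.norm_of_nonneg (hkm0 m x)]
        refine mul_le_mul ?_ (hkmle m x) (hkm0 m x) (by norm_num)
        refine (norm_sub_le _ _).trans ?_
        rw [← Complex.ofReal_mul, Complex.norm_exp_ofReal_mul_I]; norm_num
      · refine Tendsto.const_mul _ ((Complex.continuous_ofReal.tendsto _).comp ?_)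
        have : Tendsto e atTop (𝓝 0) := tendsto_one_div_add_atTop_nhds_zero_nat
        have h2 : Continuous fun s : ℝ => k x * Real.exp (-s * |x|) := by fun_prop
        simpa [Function.comp_def, km] using (h2.tendsto 0).comp this)
  let ν : Measure ℝ := volume.withDensity (fun x => ENNReal.ofReal (k x))
  have hν : IsFiniteMeasure ν := isFiniteMeasure_withDensity_ofReal hki.2
  have hcν : ∀ t, charFun ν t = ∫ x : ℝ, Complex.exp (t * x * Complex.I) * (k x : ℂ) := by
    intro t
    rw [charFun_apply_real]
    simp only [ν]
    rw [integral_withDensity_eq_integral_toReal_smul (by fun_prop) (by simp)]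
    refine integral_congr_ae (Eventually.of_forall fun x => ?_)
    simp only [ENNReal.toReal_ofReal (hk0 x)]
    rw [Complex.real_smul, mul_comm]
  obtain ⟨R, hRp, hR, hRle⟩ := aux_cp ν
  refine ⟨G.conv R, inferInstance, fun t => ?_, G, hGp, Real.exp (-ν.real Set.univ) * c, by positivity, fun g hg => ?_⟩
  · rw [charFun_conv, hG, hR, ← Complex.exp_add]
    congr 1
    have e1 : ∀ t : ℝ, Integrable (fun x : ℝ => Complex.exp (t * x * Complex.I) * (k x : ℂ)) := by
      intro t
      refine (hki.ofReal (𝕜 := ℂ)).bdd_mul (c := 1) (by fun_prop) (Eventually.of_forall fun x => ?_)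
      rw [← Complex.ofReal_mul, Complex.norm_exp_ofReal_mul_I]
    have : ∫ x : ℝ, (Complex.exp (t * x * Complex.I) - 1) * (k x : ℂ) = charFun ν t - charFun ν 0 := by
      rw [hcν, hcν, ← integral_sub (e1 t) (e1 0)]
      refine integral_congr_ae (Eventually.of_forall fun x => ?_)
      simp only; push_cast; simp; ring
    rw [this]; ring
  · rw [Measure.lintegral_conv hg]
    refine lintegral_mono fun z => ?_
    refine le_trans (le_of_eq ?_) (lintegral_mono' hRle le_rfl)
    rw [lintegral_smul_measure]
    simp only [ν, smul_eq_mul]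
    have hg' : Measurable fun y => g (z + y) := hg.comp (by fun_prop)
    rw [lintegral_withDensity_eq_lintegral_mul _ (by fun_prop) hg', ← lintegral_const_mul _ (by fun_prop)]
    refine lintegral_congr fun y => ?_
    simp only [k, Pi.mul_apply]
    rw [← mul_assoc, ← ENNReal.ofReal_mul (by positivity), mul_assoc (Real.exp _)]

end

section
open MeasureTheory Filter Topology ProbabilityTheory

lemma aux_gauss_id (P : Measure ℝ) [IsProbabilityMeasure P] {d : NNReal} (hd : 0 < d) (x : ℝ) :
    (∫ t : ℝ, Complex.exp (-Complex.I * (t : ℂ) * (x : ℂ)) * charFun P t * Complex.exp (-((d/2 : ℝ) : ℂ) * (t:ℂ)^2))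
      = ((2 * Real.pi * ∫ y, gaussianPDFReal 0 d (x - y) ∂P : ℝ) : ℂ) := by
  have hd' : (0:ℝ) < d := hd
  have hre : 0 < (((d/2 : ℝ)) : ℂ).re := by simpa using hd
  have h1 : ∀ t : ℝ, Complex.exp (-Complex.I * (t : ℂ) * (x : ℂ)) * charFun P t * Complex.exp (-((d/2 : ℝ) : ℂ) * (t:ℂ)^2)
      = ∫ y : ℝ, Complex.exp (Complex.I * ((y - x : ℝ) : ℂ) * t) * Complex.exp (-((d/2 : ℝ) : ℂ) * (t:ℂ)^2) ∂P := by
    intro t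
    rw [charFun_apply_real, ← integral_const_mul, ← integral_mul_const]
    refine integral_congr_ae (Eventually.of_forall fun y => ?_)
    simp only [← Complex.exp_add]
    congr 1
    push_cast; ring
  simp_rw [h1]
  have hg : Integrable (fun t : ℝ => Complex.exp (-((d/2 : ℝ) : ℂ) * (t:ℂ)^2)) := by
    simpa using integrable_cexp_quadratic hre 0 0
  rw [integral_integral_swap]
  · have h2 : ∀ y : ℝ, (∫ t : ℝ, Complex.exp (Complex.I * ((y - x : ℝ) : ℂ) * t) * Complex.exp (-((d/2 : ℝ) : ℂ) * (t:ℂ)^2))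
        = ((2 * Real.pi * gaussianPDFReal 0 d (x - y) : ℝ) : ℂ) := by
      intro y
      rw [fourierIntegral_gaussian hre]
      rw [gaussianPDFReal]
      have e1 : ((Real.pi : ℂ) / ((d/2:ℝ):ℂ)) ^ (1/2 : ℂ) = ((Real.sqrt (Real.pi / (d/2)) : ℝ) : ℂ) := by
        rw [Real.sqrt_eq_rpow, Complex.ofReal_cpow (by positivity)]; push_cast; norm_num
      have e2 : Real.sqrt (Real.pi / (d/2)) = 2 * Real.pi * (Real.sqrt (2 * Real.pi * d))⁻¹ := by
        rw [show Real.pi / ((d:ℝ)/2) = (2 * Real.pi)^2 / (2 * Real.pi * d) by field_simp, Real.sqrt_div (by positivity),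
          Real.sqrt_sq (by positivity), div_eq_mul_inv]
      rw [e1, e2]
      push_cast
      rw [← mul_assoc]
      congr 2
      have : (d:ℂ) ≠ 0 := by exact_mod_cast hd.ne'
      field_simp
      ring
    simp_rw [h2]
    rw [integral_complex_ofReal, integral_const_mul]
  · have : Integrable (fun p : ℝ × ℝ => Complex.exp (-((d/2 : ℝ) : ℂ) * (p.1:ℂ)^2)) (volume.prod P) := hg.comp_fst P
    refine this.bdd_mul (c := 1) (by fun_prop) (Eventually.of_forall fun p => ?_)
    rw [mul_assoc, mul_comm, ← Complex.ofReal_mul, Complex.norm_exp_ofReal_mul_I]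

lemma aux_gauss_mass {d : NNReal} (hd : d ≤ 1/2) :
    1/2 ≤ gaussianReal 0 d {u : ℝ | |u| < 1} := by
  have h := meas_ge_le_variance_div_sq (μ := gaussianReal 0 d) (X := id) (memLp_id_gaussianReal 2) (c := 1) one_pos
  rw [variance_id_gaussianReal] at h
  simp only [id, integral_id_gaussianReal, sub_zero, one_pow, div_one] at h
  have hc : {u : ℝ | |u| < 1} = {u : ℝ | 1 ≤ |u|}ᶜ := by ext; simp
  rw [hc, prob_compl_eq_one_sub (measurableSet_le (by fun_prop) (by fun_prop))]
  have h3 : gaussianReal 0 d {u : ℝ | 1 ≤ |u|} ≤ 1/2 := by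
    refine h.trans ?_
    rw [ENNReal.ofReal_coe_nnreal]
    have : (d : ENNReal) ≤ ((1/2 : NNReal) : ENNReal) := by exact_mod_cast hd
    simpa using this
  calc (1/2 : ENNReal) = 1 - 1/2 := by simp
    _ ≤ _ := tsub_le_tsub_left h3 1

lemma aux_L5 {α : ℝ} (hα0 : 0 < α) {P G : Measure ℝ} [IsProbabilityMeasure P] [IsProbabilityMeasure G]
    {φ : ℝ → ℂ} (hφ : ∀ t, charFun P t = φ t) (hφi : Integrable φ) {c : ℝ} (hc : 0 < c)
    (h : ∀ g : ℝ → ENNReal, Measurable g →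
        ∫⁻ z, ∫⁻ y, ENNReal.ofReal (c * (1 + |y|) ^ (-1 - α)) * g (z + y) ∂volume ∂G ≤ ∫⁻ x, g x ∂P) :
    ∃ C : ℝ, 0 < C ∧ ∀ x : ℝ, C * (1 + |x|) ^ (-1 - α) ≤ 
      (1 / (2 * Real.pi)) * (∫ t : ℝ, Complex.exp (-Complex.I * (t : ℂ) * (x : ℂ)) * φ t).re := by
  let w : ℝ → ℝ := fun z => (2 + |z|) ^ (-1 - α)
  have hw0 : ∀ z, 0 < w z := fun z => by positivity
  have hw1 : ∀ z, w z ≤ 1 := fun z => 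
    Real.rpow_le_one_of_one_le_of_nonpos (by linarith [abs_nonneg z]) (by linarith)
  have hwm : Measurable w := by fun_prop
  have hwi : Integrable w G := Integrable.of_bound (C := 1) hwm.aestronglyMeasurable
    (Eventually.of_forall fun z => by rw [Real.norm_of_nonneg (hw0 z).le]; exact hw1 z)
  let W := ∫ z, w z ∂G
  have hW : 0 < W := by
    rw [integral_pos_iff_support_of_nonneg (fun z => (hw0 z).le) hwi]
    have : Function.support w = Set.univ := by ext z; simp [(hw0 z).ne']
    rw [this]; simp
  refine ⟨c / 2 * W, by positivity, fun x => ?_⟩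
  have key : ∀ d : NNReal, 0 < d → d ≤ 1/2 → c / 2 * W * (1 + |x|) ^ (-1 - α) ≤ ∫ y, gaussianPDFReal 0 d (x - y) ∂P := by
    intro d hd hd2
    have hgm : Measurable (fun y => gaussianPDFReal 0 d (x - y)) := (measurable_gaussianPDFReal 0 d).comp (by fun_prop)
    have hg := h (fun y => ENNReal.ofReal (gaussianPDFReal 0 d (x - y))) (by fun_prop)
    rw [integral_eq_lintegral_of_nonneg_ae (Eventually.of_forall fun y => gaussianPDFReal_nonneg _ _ _) hgm.aestronglyMeasurable]
    have hfin : ∫⁻ y, ENNReal.ofReal (gaussianPDFReal 0 d (x - y)) ∂P ≠ ⊤ := by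
      have : Integrable (fun y => gaussianPDFReal 0 d (x - y)) P := by
        refine Integrable.of_bound (C := (Real.sqrt (2 * Real.pi * d))⁻¹) hgm.aestronglyMeasurable (Eventually.of_forall fun y => ?_)
        rw [Real.norm_of_nonneg (gaussianPDFReal_nonneg _ _ _), gaussianPDFReal]
        refine mul_le_of_le_one_right (by positivity) ?_
        rw [Real.exp_le_one_iff]
        refine div_nonpos_of_nonpos_of_nonneg ?_ (by positivity)
        nlinarith [sq_nonneg (x - y - 0)]
      have h2 := this.lintegral_lt_top
      exact h2.ne
    rw [← ENNReal.ofReal_le_iff_le_toReal hfin]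
    refine le_trans ?_ hg
    have inner : ∀ z, ENNReal.ofReal (c / 2 * (1 + |x|) ^ (-1 - α) * w z) ≤ 
        ∫⁻ y, ENNReal.ofReal (c * (1 + |y|) ^ (-1 - α)) * ENNReal.ofReal (gaussianPDFReal 0 d (x - (z + y))) := by
      intro z
      rw [← lintegral_sub_left_eq_self _ (x - z)]
      have e1 : ∀ y, gaussianPDFReal 0 d (x - (z + (x - z - y))) = gaussianPDFReal 0 d y := fun y => by congr 1; ring
      simp_rw [e1]
      have e2 : ∫⁻ y, ENNReal.ofReal (c * (1 + |x - z - y|) ^ (-1 - α)) * ENNReal.ofReal (gaussianPDFReal 0 d y)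
          = ∫⁻ y, ENNReal.ofReal (c * (1 + |x - z - y|) ^ (-1 - α)) ∂(gaussianReal 0 d) := by
        rw [gaussianReal_of_var_ne_zero _ hd.ne', lintegral_withDensity_eq_lintegral_mul _ (measurable_gaussianPDF 0 d) (by fun_prop)]
        refine lintegral_congr fun y => ?_
        rw [Pi.mul_apply, mul_comm]; rfl
      rw [e2]
      calc ENNReal.ofReal (c / 2 * (1 + |x|) ^ (-1 - α) * w z)
          = ENNReal.ofReal (c * (1 + |x|) ^ (-1 - α) * w z) * (1/2) := by
            rw [show c / 2 * (1 + |x|) ^ (-1 - α) * w z = (c * (1 + |x|) ^ (-1 - α) * w z) * (1/2) by ring,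
              ENNReal.ofReal_mul' (by norm_num)]
            congr 1
            rw [one_div, ENNReal.ofReal_inv_of_pos (by norm_num)]; simp
        _ ≤ ENNReal.ofReal (c * (1 + |x|) ^ (-1 - α) * w z) * gaussianReal 0 d {u : ℝ | |u| < 1} := by
            gcongr; exact aux_gauss_mass hd2
        _ = ∫⁻ y in {u : ℝ | |u| < 1}, ENNReal.ofReal (c * (1 + |x|) ^ (-1 - α) * w z) ∂(gaussianReal 0 d) := by
            rw [setLIntegral_const]
        _ ≤ ∫⁻ y in {u : ℝ | |u| < 1}, ENNReal.ofReal (c * (1 + |x - z - y|) ^ (-1 - α)) ∂(gaussianReal 0 d) := by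
            refine setLIntegral_mono' (measurableSet_lt (by fun_prop) (by fun_prop)) fun y hy => ?_
            refine ENNReal.ofReal_le_ofReal ?_
            rw [mul_assoc, ← Real.mul_rpow (by positivity) (by positivity)]
            refine mul_le_mul_of_nonneg_left ?_ hc.le
            refine Real.rpow_le_rpow_of_nonpos (by positivity) ?_ (by linarith)
            have hy' : |y| < 1 := hy
            have := abs_sub (x - z) y
            have := abs_sub x z
            nlinarith [abs_nonneg x, abs_nonneg z, mul_nonneg (abs_nonneg x) (abs_nonneg z)]
        _ ≤ _ := setLIntegral_le_lintegral _ _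
    calc ENNReal.ofReal (c / 2 * W * (1 + |x|) ^ (-1 - α)) = ∫⁻ z, ENNReal.ofReal (c / 2 * (1 + |x|) ^ (-1 - α) * w z) ∂G := by
          rw [← ofReal_integral_eq_lintegral_ofReal (hwi.const_mul _) 
            (Eventually.of_forall fun z => by have := (hw0 z).le; positivity), integral_const_mul]
          congr 1; simp only [W]; ring
      _ ≤ _ := lintegral_mono inner
  -- limit
  let dm : ℕ → NNReal := fun m => 1 / ((m:NNReal) + 2)
  have hdm : Tendsto (fun m => (dm m : ℝ)) atTop (𝓝 0) := by
    have : Tendsto (fun m : ℕ => (1:ℝ) / (((m+1:ℕ):ℝ) + 1)) atTop (𝓝 0) :=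
      (tendsto_add_atTop_iff_nat (f := fun m : ℕ => (1:ℝ) / ((m:ℝ) + 1)) 1).2 tendsto_one_div_add_atTop_nhds_zero_nat
    refine this.congr fun m => ?_
    simp [dm]; ring
  have hlim : Tendsto (fun m => ∫ t : ℝ, Complex.exp (-Complex.I * (t : ℂ) * (x : ℂ)) * φ t * Complex.exp (-(((dm m : ℝ)/2 : ℝ) : ℂ) * (t:ℂ)^2)) atTop
      (𝓝 (∫ t : ℝ, Complex.exp (-Complex.I * (t : ℂ) * (x : ℂ)) * φ t)) := by
    refine tendsto_integral_of_dominated_convergence (fun t => ‖φ t‖) (fun m => ?_) hφi.norm (fun m => Eventually.of_forall fun t => ?_)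
        (Eventually.of_forall fun t => ?_)
    · have := hφi.1
      fun_prop
    · have n1 : ‖Complex.exp (-Complex.I * (t : ℂ) * (x : ℂ))‖ = 1 := by
        rw [show -Complex.I * (t : ℂ) * (x : ℂ) = ((-(t * x) : ℝ) : ℂ) * Complex.I by push_cast; ring, Complex.norm_exp_ofReal_mul_I]
      have n2 : ‖Complex.exp (-(((dm m : ℝ)/2 : ℝ) : ℂ) * (t:ℂ)^2)‖ ≤ 1 := by
        rw [show -(((dm m : ℝ)/2 : ℝ) : ℂ) * (t:ℂ)^2 = ((-((dm m:ℝ)/2 * t^2) : ℝ) : ℂ) by push_cast; ring, Complex.norm_exp_ofReal, Real.exp_le_one_iff]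
        have : 0 ≤ (dm m : ℝ) := (dm m).2
        have := mul_nonneg (half_pos (zero_lt_one (α := ℝ))).le this
        nlinarith [sq_nonneg t]
      rw [norm_mul, norm_mul, n1, one_mul]
      exact mul_le_of_le_one_right (norm_nonneg _) n2
    · have : Continuous fun s : ℝ => Complex.exp (-Complex.I * (t : ℂ) * (x : ℂ)) * φ t * Complex.exp (-((s/2 : ℝ) : ℂ) * (t:ℂ)^2) := by fun_prop
      simpa [Function.comp_def] using (this.tendsto 0).comp hdm
  have hlim2 := ((Complex.continuous_re.tendsto _).comp hlim).const_mul (1 / (2 * Real.pi))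
  refine ge_of_tendsto hlim2 (Eventually.of_forall fun m => ?_)
  have hd0 : 0 < dm m := by positivity
  have hd1 : dm m ≤ 1/2 := by
    simp only [dm]
    gcongr
    simp
  have := aux_gauss_id P hd0 x
  simp only [Function.comp_apply, ← hφ, this, Complex.ofReal_re]
  rw [← mul_assoc, one_div_mul_cancel (by positivity), one_mul]
  exact key _ hd0 hd1

end

section
open MeasureTheory Filter Topology

lemma aux_expb (y : ℝ) : ‖Complex.exp (y * Complex.I) - 1‖ ≤ |y| := by
  have := Real.norm_exp_I_mul_ofReal_sub_one_le (x := y)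
  rw [mul_comm] at this
  simpa using this

lemma aux_J0 {n : ℝ → ℝ} (hm : Measurable n) (h2 : Integrable (fun x => x^2 * n x)) (t : ℝ) :
    HasDerivAt (fun t : ℝ => ∫ x : ℝ, aux_e2 (t*x) * (n x:ℂ))
      (∫ x : ℝ, ((Complex.exp (((t*x : ℝ):ℂ) * Complex.I) - 1) * Complex.I * x) * (n x:ℂ)) t := by
  have hmc : Measurable (fun x => (n x : ℂ)) := Complex.measurable_ofReal.comp hm
  have := (hasDerivAt_integral_of_dominated_loc_of_deriv_le (μ := volume) (𝕜 := ℝ) (s := Metric.ball t 1)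
    (F := fun (t : ℝ) (x : ℝ) => aux_e2 (t*x) * (n x:ℂ))
    (F' := fun (t : ℝ) (x : ℝ) => ((Complex.exp (((t*x : ℝ):ℂ) * Complex.I) - 1) * Complex.I * x) * (n x:ℂ))
    (bound := fun x => (|t| + 1) * |x^2 * n x|) (x₀ := t) (Metric.ball_mem_nhds _ one_pos) ?_ ?_ ?_ ?_ ?_ ?_).2
  · exact this
  · refine Eventually.of_forall fun s => (aux_levy_integrable hm h2 s).1
  · exact aux_levy_integrable hm h2 t
  · refine Measurable.aestronglyMeasurable ?_
    fun_prop
  · refine Eventually.of_forall fun x s hs => ?_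
    rw [norm_mul, norm_mul, norm_mul, Complex.norm_I, mul_one, abs_mul, abs_pow, sq, Complex.norm_real, Complex.norm_real,
      Real.norm_eq_abs, Real.norm_eq_abs, ← mul_assoc, ← mul_assoc]
    gcongr
    refine (aux_expb _).trans ?_
    rw [abs_mul]
    gcongr
    rw [Metric.mem_ball, Real.dist_eq] at hs
    have := abs_sub_abs_le_abs_sub s t
    linarith
  · exact h2.abs.const_mul _
  · refine Eventually.of_forall fun x s hs => ?_
    refine HasDerivAt.mul_const ?_ _
    unfold aux_e2
    have h1 : HasDerivAt (fun s : ℝ => (((s * x : ℝ) : ℂ) * Complex.I)) ((x:ℂ) * Complex.I) s := by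
      have := ((hasDerivAt_id s).mul_const x).ofReal_comp.mul_const Complex.I
      simpa using this
    convert! (h1.cexp.sub_const 1).sub h1 using 1
    ring

lemma aux_J1 {n : ℝ → ℝ} (hm : Measurable n) (h2 : Integrable (fun x => x^2 * n x)) (t : ℝ) :
    HasDerivAt (fun t : ℝ => ∫ x : ℝ, ((Complex.exp (((t*x : ℝ):ℂ) * Complex.I) - 1) * Complex.I * x) * (n x:ℂ))
      (-∫ x : ℝ, Complex.exp (((t*x : ℝ):ℂ) * Complex.I) * ((x^2 * n x : ℝ):ℂ)) t := by
  have hmc : Measurable (fun x => (n x : ℂ)) := Complex.measurable_ofReal.comp hm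
  have hms : ∀ t : ℝ, AEStronglyMeasurable (fun x : ℝ => ((Complex.exp (((t*x : ℝ):ℂ) * Complex.I) - 1) * Complex.I * x) * (n x:ℂ)) := by
    intro t
    refine Measurable.aestronglyMeasurable ?_
    fun_prop
  have := (hasDerivAt_integral_of_dominated_loc_of_deriv_le (μ := volume) (𝕜 := ℝ) (s := Metric.ball t 1)
    (F := fun (t : ℝ) (x : ℝ) => ((Complex.exp (((t*x : ℝ):ℂ) * Complex.I) - 1) * Complex.I * x) * (n x:ℂ))
    (F' := fun (t : ℝ) (x : ℝ) => -(Complex.exp (((t*x : ℝ):ℂ) * Complex.I) * ((x^2 * n x : ℝ):ℂ)))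
    (bound := fun x => |x^2 * n x|) (x₀ := t) (Metric.ball_mem_nhds _ one_pos) ?_ ?_ ?_ ?_ ?_ ?_).2
  · rwa [integral_neg] at this
  · exact Eventually.of_forall hms
  · refine Integrable.mono' (h2.abs.const_mul |t|) (hms t) (Eventually.of_forall fun x => ?_)
    rw [norm_mul, norm_mul, norm_mul, Complex.norm_I, mul_one, abs_mul, abs_pow, sq, Complex.norm_real, Complex.norm_real,
      Real.norm_eq_abs, Real.norm_eq_abs, ← mul_assoc, ← mul_assoc]
    gcongr
    refine (aux_expb _).trans ?_
    rw [abs_mul]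
  · refine Measurable.aestronglyMeasurable ?_
    fun_prop
  · refine Eventually.of_forall fun x s hs => ?_
    rw [norm_neg, norm_mul, Complex.norm_exp_ofReal_mul_I, one_mul, Complex.norm_real, Real.norm_eq_abs]
  · exact h2.abs
  · refine Eventually.of_forall fun x s hs => ?_
    have h1 : HasDerivAt (fun s : ℝ => (((s * x : ℝ) : ℂ) * Complex.I)) ((x:ℂ) * Complex.I) s := by
      have := ((hasDerivAt_id s).mul_const x).ofReal_comp.mul_const Complex.I
      simpa using this
    convert! (((h1.cexp.sub_const 1).mul_const Complex.I).mul_const (x:ℂ)).mul_const (n x : ℂ) using 1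
    push_cast
    linear_combination (Complex.exp (s*x*Complex.I) * x^2 * n x) * (-Complex.I_sq)

lemma aux_gammaC {s : ℝ} (hs : 0 < s) {w : ℂ} (hw : 0 < w.re) :
    ∫ x in Set.Ioi (0:ℝ), ((x^(s-1) : ℝ) : ℂ) * Complex.exp (-w * x) = Complex.Gamma s * w ^ (-(s:ℂ)) := by
  have hU : IsOpen {w : ℂ | 0 < w.re} := isOpen_lt continuous_const Complex.continuous_re
  have hg : ∀ r : ℝ, 0 < r → IntegrableOn (fun x : ℝ => x^(s-1) * Real.exp (-r * x)) (Set.Ioi 0) := by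
    intro r hr
    have := integrableOn_rpow_mul_exp_neg_mul_rpow (s := s-1) (p := 1) (b := r) (by linarith) one_pos hr
    simpa using this
  have hnorm : ∀ (w : ℂ) (x : ℝ), x ∈ Set.Ioi (0:ℝ) → ‖((x^(s-1) : ℝ) : ℂ) * Complex.exp (-w * x)‖ = x^(s-1) * Real.exp (-w.re*x) := by
    intro w x hx
    rw [norm_mul, Complex.norm_exp, Complex.norm_real, Real.norm_of_nonneg (Real.rpow_nonneg (le_of_lt hx) _)]
    simp
  have hmeas : ∀ w : ℂ, AEStronglyMeasurable (fun x : ℝ => ((x^(s-1) : ℝ) : ℂ) * Complex.exp (-w * x)) (volume.restrict (Set.Ioi 0)) := by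
    intro w
    refine Measurable.aestronglyMeasurable ?_
    fun_prop
  have hd : DifferentiableOn ℂ (fun w : ℂ => ∫ x in Set.Ioi (0:ℝ), ((x^(s-1) : ℝ) : ℂ) * Complex.exp (-w * x)) {w : ℂ | 0 < w.re} := by
    intro w hw
    have hw' : 0 < w.re := hw
    have := (hasDerivAt_integral_of_dominated_loc_of_deriv_le (μ := volume.restrict (Set.Ioi (0:ℝ))) (𝕜 := ℂ) (s := {z : ℂ | w.re/2 < z.re})
      (F := fun (w : ℂ) (x : ℝ) => ((x^(s-1) : ℝ) : ℂ) * Complex.exp (-w * x))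
      (F' := fun (w : ℂ) (x : ℝ) => ((x^(s-1) : ℝ) : ℂ) * (Complex.exp (-w * x) * (-x)))
      (bound := fun x => x^((s+1)-1) * Real.exp (-(w.re/2)*x)) (x₀ := w) ?_ ?_ ?_ ?_ ?_ ?_ ?_).2
    · exact this.differentiableAt.differentiableWithinAt
    · exact (isOpen_lt continuous_const Complex.continuous_re).mem_nhds (by simp only [Set.mem_ofPred_eq]; linarith)
    · exact Eventually.of_forall hmeas
    · refine (hg _ hw').mono' (hmeas w) ?_
      filter_upwards [ae_restrict_mem measurableSet_Ioi] with x hx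
      exact (hnorm w x hx).le
    · refine Measurable.aestronglyMeasurable ?_
      fun_prop
    · filter_upwards [ae_restrict_mem measurableSet_Ioi] with x hx z hz
      rw [← mul_assoc, norm_mul, hnorm z x hx, norm_neg, Complex.norm_real, Real.norm_of_nonneg (le_of_lt hx),
        show s + 1 - 1 = (s-1)+1 by ring, Real.rpow_add_one (ne_of_gt hx)]
      have hx' : 0 < x := hx
      have h3 : Real.exp (-z.re*x) ≤ Real.exp (-(w.re/2)*x) := by
        apply Real.exp_le_exp.2
        have : w.re/2 < z.re := hz
        nlinarith
      have := mul_le_mul_of_nonneg_left h3 (show 0 ≤ x^(s-1)*x by positivity)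
      linarith
    · have := integrableOn_rpow_mul_exp_neg_mul_rpow (s := s+1-1) (p := 1) (b := w.re/2) (by linarith) one_pos (by linarith)
      simpa [IntegrableOn] using this
    · refine Eventually.of_forall fun x z hz => ?_
      have h1 : HasDerivAt (fun z : ℂ => -z * x) (-(x:ℂ)) z := by
        simpa using (hasDerivAt_id z).neg.mul_const (x:ℂ)
      exact h1.cexp.const_mul _
  have hd2 : DifferentiableOn ℂ (fun w : ℂ => Complex.Gamma s * w ^ (-(s:ℂ))) {w : ℂ | 0 < w.re} := by
    intro w hw
    have : w ∈ Complex.slitPlane := Or.inl hw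
    have := (hasDerivAt_id w).cpow_const (c := -(s:ℂ)) this
    exact (this.differentiableAt.const_mul _).differentiableWithinAt
  have hpre : IsPreconnected {w : ℂ | 0 < w.re} := (convex_halfSpace_re_gt 0).isPreconnected
  have hreal : ∀ r : ℝ, 0 < r → (∫ x in Set.Ioi (0:ℝ), ((x^(s-1) : ℝ) : ℂ) * Complex.exp (-(r:ℂ) * x)) = Complex.Gamma s * (r:ℂ) ^ (-(s:ℂ)) := by
    intro r hr
    have := Complex.integral_cpow_mul_exp_neg_mul_Ioi (a := (s:ℂ)) (by simpa using hs) hr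
    rw [one_div, Complex.inv_cpow _ _ (by rw [Complex.arg_ofReal_of_nonneg hr.le]; exact Real.pi_pos.ne), ← Complex.cpow_neg, mul_comm] at this
    rw [← this]
    refine setIntegral_congr_fun measurableSet_Ioi fun x hx => ?_
    have hx' : 0 < x := hx
    rw [Complex.ofReal_cpow hx'.le]
    push_cast
    ring_nf
  have := (hd.analyticOnNhd hU).eqOn_of_preconnected_of_frequently_eq (hd2.analyticOnNhd hU) hpre (z₀ := 1) (by simp) ?_
  · exact this hw
  · have hc : Tendsto (fun k : ℕ => (((1 + 1/((k:ℝ)+1) : ℝ)) : ℂ)) atTop (𝓝[≠] 1) := by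
      rw [tendsto_nhdsWithin_iff]
      constructor
      · have h1 : Tendsto (fun k : ℕ => 1 + 1/((k:ℝ)+1)) atTop (𝓝 (1 + 0)) := tendsto_one_div_add_atTop_nhds_zero_nat.const_add 1
        rw [add_zero] at h1
        have := (Complex.continuous_ofReal.tendsto 1).comp h1
        simpa [Function.comp_def] using this
      · refine Eventually.of_forall fun k => ?_
        simp only [Set.mem_compl_iff, Set.mem_singleton_iff]
        intro h
        have h' : (1 + 1/((k:ℝ)+1) : ℝ) = 1 := by exact_mod_cast h
        have : 0 < 1/((k:ℝ)+1) := by positivity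
        linarith
    refine hc.frequently (Frequently.of_forall fun k => ?_)
    exact hreal _ (by positivity)

lemma aux_J2 {α cp cm ε : ℝ} (hα : α < 2) (hp : 0 < cp) (hm : 0 < cm) (hε : 0 < ε) (t : ℝ) :
    ∫ x : ℝ, Complex.exp (((t*x : ℝ):ℂ) * Complex.I) * ((x^2 * aux_N α cp cm ε x : ℝ):ℂ)
      = Complex.Gamma (2-α : ℝ) * (cp * (ε - t * Complex.I) ^ (-((2-α:ℝ):ℂ)) + cm * (ε + t * Complex.I)^ (-((2-α:ℝ):ℂ))) := by
  have hi : Integrable (fun x : ℝ => Complex.exp (((t*x : ℝ):ℂ) * Complex.I) * ((x^2 * aux_N α cp cm ε x : ℝ):ℂ)) := by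
    refine Integrable.mono' (aux_N_int hα hp hm hε).norm ?_ (Eventually.of_forall fun x => ?_)
    · have := (aux_N_int hα hp hm hε).1
      have h2 := Complex.continuous_ofReal.comp_aestronglyMeasurable this
      refine AEStronglyMeasurable.mul ?_ h2
      fun_prop
    · rw [norm_mul, Complex.norm_exp_ofReal_mul_I, one_mul, Complex.norm_real]
  have hp1 : ∀ x : ℝ, 0 < x → x^2 * x^(-1-α) = x^(2-α-1) := by
    intro x hx
    rw [← Real.rpow_natCast, ← Real.rpow_add hx]
    congr 1
    push_cast; ring
  have hs : (0:ℝ) < 2 - α := by linarith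
  rw [← integral_add_compl (measurableSet_Ioi (a := (0:ℝ))) hi, Set.compl_Ioi, add_comm]
  have e1 : (∫ x in Set.Ioi (0:ℝ), Complex.exp (((t*x : ℝ):ℂ) * Complex.I) * ((x^2 * aux_N α cp cm ε x : ℝ):ℂ))
      = cp * (Complex.Gamma (2-α : ℝ) * (ε - t * Complex.I) ^ (-((2-α:ℝ):ℂ))) := by
    rw [← aux_gammaC hs (w := ε - t*Complex.I) (by simpa using hε), ← integral_const_mul]
    refine setIntegral_congr_fun measurableSet_Ioi fun x hx => ?_
    have hx' : 0 < x := hx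
    simp only [aux_N, if_pos hx', abs_of_pos hx']
    rw [← hp1 x hx', show -(ε - t*Complex.I)*(x:ℂ) = ((t*x:ℝ):ℂ)*Complex.I + ((-ε*x:ℝ):ℂ) by push_cast; ring, Complex.exp_add]
    push_cast
    ring
  have e2 : (∫ x in Set.Iic (0:ℝ), Complex.exp (((t*x : ℝ):ℂ) * Complex.I) * ((x^2 * aux_N α cp cm ε x : ℝ):ℂ))
      = cm * (Complex.Gamma (2-α : ℝ) * (ε + t * Complex.I) ^ (-((2-α:ℝ):ℂ))) := by
    rw [← aux_gammaC hs (w := ε + t*Complex.I) (by simpa using hε), ← integral_const_mul]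
    have := integral_comp_neg_Ioi (0:ℝ) (fun x : ℝ => Complex.exp (((t*x : ℝ):ℂ) * Complex.I) * ((x^2 * aux_N α cp cm ε x : ℝ):ℂ))
    rw [neg_zero] at this
    rw [← this]
    refine setIntegral_congr_fun measurableSet_Ioi fun x hx => ?_
    have hx' : 0 < x := hx
    have hx2 : ¬ (0 < -x) := by linarith
    simp only [aux_N, if_neg hx2, abs_neg, abs_of_pos hx']
    rw [← hp1 x hx', show -(ε + t*Complex.I)*(x:ℂ) = ((t*(-x):ℝ):ℂ)*Complex.I + ((-ε*x:ℝ):ℂ) by push_cast; ring, Complex.exp_add]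
    push_cast
    ring
  rw [e1, e2]
  ring

end

section
open MeasureTheory Filter Topology

lemma aux_Jform {α cp cm ε : ℝ} (hα : α < 2) (hp : 0 < cp) (hm : 0 < cm) (hε : 0 < ε) {H H1 : ℂ → ℂ}
    (hH : ∀ w : ℂ, 0 < w.re → HasDerivAt H (H1 w) w)
    (hH1 : ∀ w : ℂ, 0 < w.re → HasDerivAt H1 (Complex.Gamma (2-α : ℝ) * w ^ (-((2-α:ℝ):ℂ))) w) (t : ℝ) :
    (∫ x : ℝ, aux_e2 (t*x) * (aux_N α cp cm ε x : ℂ)) + (-((cp - cm) * H1 ε)) * t * Complex.I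
      = (cp * H (ε - t * Complex.I) + cm * H (ε + t * Complex.I)) - (cp + cm) * H ε := by
  have d0 := aux_J0 (aux_N_meas α cp cm ε) (aux_N_int hα hp hm hε)
  have d1 := aux_J1 (aux_N_meas α cp cm ε) (aux_N_int hα hp hm hε)
  simp_rw [aux_J2 hα hp hm hε] at d1
  have l1 : ∀ t : ℝ, HasDerivAt (fun t : ℝ => (ε:ℂ) - t * Complex.I) (-Complex.I) t := fun t => by
    simpa using ((hasDerivAt_id t).ofReal_comp.mul_const Complex.I).const_sub (ε:ℂ)
  have l2 : ∀ t : ℝ, HasDerivAt (fun t : ℝ => (ε:ℂ) + t * Complex.I) (Complex.I) t := fun t => by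
    simpa using ((hasDerivAt_id t).ofReal_comp.mul_const Complex.I).const_add (ε:ℂ)
  have r1 : ∀ t : ℝ, 0 < ((ε:ℂ) - t * Complex.I).re := fun t => by simpa using hε
  have r2 : ∀ t : ℝ, 0 < ((ε:ℂ) + t * Complex.I).re := fun t => by simpa using hε
  have q0 : ∀ t : ℝ, HasDerivAt (fun t : ℝ => cp * H (ε - t * Complex.I) + cm * H (ε + t * Complex.I))
      (cp * (H1 (ε - t * Complex.I) * (-Complex.I)) + cm * (H1 (ε + t * Complex.I) * Complex.I)) t := fun t =>
    (((hH _ (r1 t)).comp t (l1 t)).const_mul _).add (((hH _ (r2 t)).comp t (l2 t)).const_mul _)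
  have q1 : ∀ t : ℝ, HasDerivAt (fun t : ℝ => cp * (H1 (ε - t * Complex.I) * (-Complex.I)) + cm * (H1 (ε + t * Complex.I) * Complex.I)) 
      (cp * ((Complex.Gamma (2-α : ℝ) * (ε - t * Complex.I) ^ (-((2-α:ℝ):ℂ)) * (-Complex.I)) * (-Complex.I))
        + cm * ((Complex.Gamma (2-α : ℝ) * (ε + t * Complex.I) ^ (-((2-α:ℝ):ℂ)) * Complex.I) * Complex.I)) t := fun t =>
    ((((hH1 _ (r1 t)).comp t (l1 t)).mul_const _).const_mul _).add ((((hH1 _ (r2 t)).comp t (l2 t)).mul_const _).const_mul _)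
  have c1 := fun t => is_const_of_deriv_eq_zero (f := fun t : ℝ => (∫ x : ℝ, ((Complex.exp (((t*x : ℝ):ℂ) * Complex.I) - 1) * Complex.I * x) * (aux_N α cp cm ε x:ℂ))
      - (cp * (H1 (ε - t * Complex.I) * (-Complex.I)) + cm * (H1 (ε + t * Complex.I) * Complex.I)))
      (fun t => ((d1 t).sub (q1 t)).differentiableAt) (fun t => by
        refine ((d1 t).sub (q1 t)).deriv.trans ?_
        linear_combination (-Complex.Gamma (2-α : ℝ) * (cp * (ε - t * Complex.I) ^ (-((2-α:ℝ):ℂ)) + cm * (ε + t * Complex.I)^ (-((2-α:ℝ):ℂ)))) * Complex.I_sq) t 0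
  simp only [zero_mul, Complex.ofReal_zero, Complex.exp_zero, sub_self, integral_zero, sub_zero, add_zero] at c1
  have l3 : ∀ t : ℝ, HasDerivAt (fun t : ℝ => (-((cp - cm) * H1 ε)) * (t:ℂ) * Complex.I) ((-((cp - cm) * H1 ε)) * Complex.I) t := fun t => by
    simpa using ((hasDerivAt_id t).ofReal_comp.const_mul (-((cp - cm) * H1 ε))).mul_const Complex.I
  have c0 := is_const_of_deriv_eq_zero (f := fun t : ℝ => (∫ x : ℝ, aux_e2 (t*x) * (aux_N α cp cm ε x : ℂ)) + (-((cp - cm) * H1 ε)) * t * Complex.I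
     - (cp * H (ε - t * Complex.I) + cm * H (ε + t * Complex.I))) (fun t => (((d0 t).add (l3 t)).sub (q0 t)).differentiableAt) (fun t => by
        refine (((d0 t).add (l3 t)).sub (q0 t)).deriv.trans ?_
        linear_combination c1 t) t 0
  have e0 : aux_e2 0 = 0 := by simp [aux_e2]
  simp only [zero_mul, mul_zero, Complex.ofReal_zero, e0, integral_zero, sub_zero, add_zero] at c0
  linear_combination c0

lemma aux_L6 {α cp cm : ℝ} (hα0 : 0 < α) (hα : α < 2) (hp : 0 < cp) (hm : 0 < cm) {H H1 : ℂ → ℂ}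
    (hH : ∀ w : ℂ, 0 < w.re → HasDerivAt H (H1 w) w)
    (hH1 : ∀ w : ℂ, 0 < w.re → HasDerivAt H1 (Complex.Gamma (2-α : ℝ) * w ^ (-((2-α:ℝ):ℂ))) w)
    (hre : ∀ ε : ℝ, 0 < ε → ∃ r : ℝ, H1 ε = r)
    (hHc : ∀ t : ℝ, t ≠ 0 → ContinuousAt H (t * Complex.I))
    (hH0 : Tendsto (fun ε : ℝ => H ε) (𝓝[>] 0) (𝓝 0)) {ψ : ℝ → ℂ} (hψc : ContinuousAt ψ 0) (hψ0 : ψ 0 = 0) (d : ℝ)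
    (hψ : ∀ t : ℝ, t ≠ 0 → ψ t = cp * H (((-t : ℝ) : ℂ) * Complex.I) + cm * H (t * Complex.I) + d * t * Complex.I)
    (hint : Integrable (fun t => Complex.exp (ψ t))) :
    ∃ C, 0 < C ∧ ∀ x : ℝ, C*(1+|x|)^(-1-α) ≤ (1/(2*Real.pi)) * (∫ t:ℝ, Complex.exp (-Complex.I*(t:ℂ)*(x:ℂ)) * Complex.exp (ψ t)).re := by
  have he : Tendsto (fun m : ℕ => 1/((m:ℝ)+1)) atTop (𝓝[>] 0) := by
    rw [tendsto_nhdsWithin_iff]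
    exact ⟨tendsto_one_div_add_atTop_nhds_zero_nat, Eventually.of_forall fun m => by simp only [Set.mem_Ioi]; positivity⟩
  have hem : ∀ m : ℕ, 0 < 1/((m:ℝ)+1) := fun m => by positivity
  choose r hr using fun m : ℕ => hre _ (hem m)
  obtain ⟨P, hP, hch, G, hG, c, hc, hg⟩ := aux_L4 hα0 hα hp hm hψc (fun m => -((cp - cm) * r m) + d) (fun t => by
    have key : ∀ m : ℕ, (∫ x : ℝ, aux_e2 (t*x) * (aux_N α cp cm (1/((m:ℝ)+1)) x : ℂ)) + ((-((cp - cm) * r m) + d : ℝ) : ℂ) * t * Complex.I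
        = (cp * H (((1/((m:ℝ)+1) : ℝ) : ℂ) - t * Complex.I) + cm * H (((1/((m:ℝ)+1) : ℝ) : ℂ) + t * Complex.I)) - (cp + cm) * H ((1/((m:ℝ)+1) : ℝ) : ℂ) + d * t * Complex.I := by
      intro m
      rw [← aux_Jform hα hp hm (hem m) hH hH1 t, hr]
      push_cast
      ring
    simp_rw [key]
    by_cases ht : t = 0
    · subst ht
      have : (fun m : ℕ => cp * H (((1/((m:ℝ)+1) : ℝ) : ℂ) - (0:ℝ) * Complex.I) + cm * H (((1/((m:ℝ)+1) : ℝ) : ℂ) + (0:ℝ) * Complex.I) - (cp + cm) * H ((1/((m:ℝ)+1) : ℝ) : ℂ) + d * (0:ℝ) * Complex.I) = fun _ => (0:ℂ) := by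
        ext m
        simp only [Complex.ofReal_zero, zero_mul, mul_zero, sub_zero, add_zero]
        ring
      rw [this, hψ0]
      exact tendsto_const_nhds
    · rw [hψ t ht]
      have h0 : Tendsto (fun m : ℕ => ((1/((m:ℝ)+1) : ℝ) : ℂ)) atTop (𝓝 0) := by
        have := (Complex.continuous_ofReal.tendsto 0).comp tendsto_one_div_add_atTop_nhds_zero_nat
        simpa [Function.comp_def] using this
      have h1 : Tendsto (fun m : ℕ => ((1/((m:ℝ)+1) : ℝ) : ℂ) - t * Complex.I) atTop (𝓝 (((-t : ℝ) : ℂ) * Complex.I)) := by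
        have := h0.sub_const (t * Complex.I)
        simpa using this
      have h2 : Tendsto (fun m : ℕ => ((1/((m:ℝ)+1) : ℝ) : ℂ) + t * Complex.I) atTop (𝓝 (t * Complex.I)) := by
        have := h0.add_const (t * Complex.I)
        simpa using this
      have h3 := (((((hHc _ (neg_ne_zero.2 ht)).tendsto.comp h1).const_mul (cp:ℂ)).add (((hHc _ ht).tendsto.comp h2).const_mul (cm:ℂ))).sub
        ((hH0.comp he).const_mul ((cp:ℂ)+cm))).add_const ((d:ℂ)*t*Complex.I)
      simpa [Function.comp_def] using h3)
  exact aux_L5 hα0 hch hint hc hg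

lemma aux_logI (t : ℝ) (ht : t ≠ 0) : Complex.log (t * Complex.I) = Real.log |t| + (Real.pi/2 * Real.sign t : ℝ) * Complex.I := by
  rcases lt_or_gt_of_ne ht with h | h
  · rw [show (t:ℂ) * Complex.I = ((-t : ℝ) : ℂ) * (-Complex.I) by push_cast; ring, Complex.log_ofReal_mul (by linarith) (by simp),
      Complex.log_neg_I, abs_of_neg h, Real.sign_of_neg h]
    push_cast; ring
  · rw [Complex.log_ofReal_mul h (by simp), Complex.log_I, abs_of_pos h, Real.sign_of_pos h]
    push_cast; ring

lemma aux_slit (t : ℝ) (ht : t ≠ 0) : (t:ℂ) * Complex.I ∈ Complex.slitPlane := by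
  right; simpa using ht

lemma aux_spow (a : ℝ) (ha : 0 < a) : Continuous (fun t : ℝ => Real.sign t * |t| ^ a) := by
  have : (fun t : ℝ => Real.sign t * |t| ^ a) = fun t => (max t 0)^a - (max (-t) 0)^a := by
    ext t
    rcases lt_trichotomy t 0 with h | h | h
    · rw [Real.sign_of_neg h, abs_of_neg h, max_eq_right h.le, max_eq_left (by linarith), Real.zero_rpow ha.ne']; ring
    · subst h; simp
    · rw [Real.sign_of_pos h, abs_of_pos h, max_eq_left h.le, max_eq_right (by linarith), Real.zero_rpow ha.ne']; ring
  rw [this]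
  refine Continuous.sub ?_ ?_
  · exact Continuous.rpow_const (by fun_prop) fun _ => Or.inr ha.le
  · exact Continuous.rpow_const (by fun_prop) fun _ => Or.inr ha.le

lemma aux_sign_mul {s : ℝ} (hs : 0 < s) (t : ℝ) : Real.sign (s * t) = Real.sign t := by
  rcases lt_trichotomy t 0 with h | h | h
  · rw [Real.sign_of_neg h, Real.sign_of_neg (mul_neg_of_pos_of_neg hs h)]
  · simp [h]
  · rw [Real.sign_of_pos h, Real.sign_of_pos (mul_pos hs h)]

lemma aux_sign_abs (t : ℝ) : Real.sign t * |t| = t := by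
  rcases lt_trichotomy t 0 with h | h | h
  · rw [Real.sign_of_neg h, abs_of_neg h]; ring
  · simp [h]
  · rw [Real.sign_of_pos h, abs_of_pos h]; ring

lemma aux_psi_ne {θ : Fin 4 → ℝ} (hθ : θ ∈ ThetaInt) (h1 : θ 2 ≠ 1) (t : ℝ) :
    psiM θ t = ((-(|θ 1 * t| ^ (θ 2)) : ℝ) : ℂ) - Complex.I * ((θ 3 * Real.tan (Real.pi * θ 2 / 2) * (θ 1 * t - Real.sign (θ 1 * t) * |θ 1 * t|^(θ 2)) : ℝ) : ℂ)
      + Complex.I * ((θ 0 * t : ℝ) : ℂ) := by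
  obtain ⟨hs, ⟨ha0, ha2⟩, hb⟩ := hθ
  rw [psiM, if_neg h1]
  have e : |θ 1 * t| ^ (θ 2) * (Real.sign t * (|θ 1 * t| ^ (1 - θ 2) - 1)) = θ 1 * t - Real.sign (θ 1 * t) * |θ 1 * t|^(θ 2) := by
    rw [aux_sign_mul hs]
    by_cases ht : t = 0
    · simp [ht]
    · have hpos : 0 < |θ 1 * t| := abs_pos.2 (mul_ne_zero hs.ne' ht)
      have : |θ 1 * t| ^ (θ 2) * |θ 1 * t| ^ (1 - θ 2) = |θ 1 * t| := by
        rw [← Real.rpow_add hpos]; simp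
      have h3 := aux_sign_abs (θ 1 * t)
      rw [aux_sign_mul hs] at h3
      linear_combination Real.sign t * this + h3
  rw [← e]
  push_cast
  ring

lemma aux_psi_cont {θ : Fin 4 → ℝ} (hθ : θ ∈ ThetaInt) : Continuous (psiM θ) := by
  by_cases h1 : θ 2 = 1
  · have : psiM θ = fun t => ((-(|θ 1 * t|) : ℝ) : ℂ)
      - Complex.I * (((2 * θ 3 / Real.pi) * ((θ 1 * t) * Real.log (θ 1 * t)) : ℝ) : ℂ)
      + Complex.I * ((θ 0 * t : ℝ) : ℂ) := by
      ext t
      rw [psiM, if_pos h1, Real.log_abs, mul_assoc]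
    rw [this]
    have := Real.continuous_mul_log.comp (continuous_const_mul (θ 1))
    simp only [Function.comp_def] at this
    fun_prop
  · rw [funext (aux_psi_ne hθ h1)]
    obtain ⟨hs, ⟨ha0, ha2⟩, hb⟩ := hθ
    have h2 := (aux_spow (θ 2) ha0).comp (continuous_const_mul (θ 1))
    simp only [Function.comp_def] at h2
    have h3 : Continuous (fun t => |θ 1 * t| ^ (θ 2)) := Continuous.rpow_const (by fun_prop) fun _ => Or.inr ha0.le
    fun_prop

lemma aux_psi_re {θ : Fin 4 → ℝ} (t : ℝ) : (psiM θ t).re = -|θ 1 * t| ^ (θ 2) := by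
  unfold psiM
  split_ifs with h
  · simp only [h, Real.rpow_one, Complex.add_re, Complex.sub_re, Complex.ofReal_re, Complex.I_mul_re, Complex.ofReal_im]; ring
  · simp only [Complex.add_re, Complex.mul_re, Complex.ofReal_re, Complex.ofReal_im, Complex.I_re, Complex.one_re]; ring

lemma aux_exp_int {a s : ℝ} (ha : 0 < a) (hs : 0 < s) : Integrable (fun t : ℝ => Real.exp (-|s*t|^a)) := by
  have h0 := integrableOn_rpow_mul_exp_neg_mul_rpow (s := 0) (p := a) (b := 1) (by norm_num) ha one_pos
  have h1 : IntegrableOn (fun t : ℝ => Real.exp (-t^a)) (Set.Ioi 0) := by simpa using h0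
  have := (aux_int_abs h1).comp_mul_left' hs.ne'
  exact this

lemma aux_phi_norm (θ : Fin 4 → ℝ) (t : ℝ) : ‖phiM θ t‖ = Real.exp (-|θ 1 * t| ^ (θ 2)) := by
  rw [phiM, Complex.norm_exp, aux_psi_re]

lemma aux_phi_int {θ : Fin 4 → ℝ} (hθ : θ ∈ ThetaInt) : Integrable (fun t => Complex.exp (psiM θ t)) := by
  refine (aux_exp_int hθ.2.1.1 hθ.1).mono' (Complex.continuous_exp.comp (aux_psi_cont hθ)).aestronglyMeasurable (Eventually.of_forall fun t => ?_)
  exact (aux_phi_norm θ t).le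

theorem aux_lower {θ : Fin 4 → ℝ} (hθ : θ ∈ ThetaInt) : ∃ C, 0 < C ∧ ∀ x : ℝ, C*(1+|x|)^(-1-θ 2) ≤ fM θ x := by
  have hcont := (aux_psi_cont hθ).continuousAt (x := 0)
  have hint := aux_phi_int hθ
  have hθ' := hθ
  obtain ⟨hs, ⟨ha0, ha2⟩, hb1, hb2⟩ := hθ
  have hpi := Real.pi_pos
  have hψ0 : psiM θ 0 = 0 := by
    unfold psiM
    split_ifs <;> simp [Real.zero_rpow ha0.ne']
  by_cases h1 : θ 2 = 1
  · refine aux_L6 (cp := (1 + θ 3) * θ 1 / Real.pi) (cm := (1 - θ 3) * θ 1 / Real.pi) ha0 ha2 (div_pos (mul_pos (by linarith) hs) hpi) (div_pos (mul_pos (by linarith) hs) hpi)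
      (H := fun w => w * Complex.log w) (H1 := fun w => Complex.log w + 1) ?_ ?_ ?_ ?_ ?_ hcont hψ0 (θ 0 - (2 * θ 3 / Real.pi) * θ 1 * Real.log (θ 1)) ?_ hint
    · intro w hw
      have hw0 : w ≠ 0 := by rintro rfl; simp at hw
      convert! (hasDerivAt_id w).mul (Complex.hasDerivAt_log (Or.inl hw : w ∈ Complex.slitPlane)) using 1
      simp only [id]
      field_simp
    · intro w hw
      have hw0 : w ≠ 0 := by rintro rfl; simp at hw
      convert! (Complex.hasDerivAt_log (Or.inl hw : w ∈ Complex.slitPlane)).add_const 1 using 1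
      rw [h1]
      norm_num [Complex.cpow_neg_one]
    · intro ε hε
      exact ⟨Real.log ε + 1, by rw [← Complex.ofReal_log hε.le]; push_cast; rfl⟩
    · intro t ht
      exact continuousAt_id.mul (continuousAt_clog (aux_slit t ht))
    · have h2 : Tendsto (fun ε : ℝ => ((ε * Real.log ε : ℝ) : ℂ)) (𝓝[>] 0) (𝓝 0) := by
        have h3 := (Complex.continuous_ofReal.comp Real.continuous_mul_log).tendsto 0
        simp only [Function.comp_def, zero_mul, Complex.ofReal_zero] at h3
        exact h3.mono_left nhdsWithin_le_nhds
      refine h2.congr' ?_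
      filter_upwards [self_mem_nhdsWithin] with ε hε
      rw [← Complex.ofReal_log (le_of_lt hε)]
      push_cast; rfl
    · intro t ht
      rw [aux_logI t ht, aux_logI (-t) (neg_ne_zero.2 ht), psiM, if_pos h1, abs_neg, abs_mul, abs_of_pos hs, Real.log_mul hs.ne' (abs_ne_zero.2 ht)]
      have e1 := aux_sign_abs t
      rcases lt_or_gt_of_ne ht with h | h
      · rw [Real.sign_of_neg h, Real.sign_of_pos (by linarith), abs_of_neg h]
        push_cast
        have : (Real.pi : ℂ) ≠ 0 := by exact_mod_cast hpi.ne'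
        field_simp
        ring_nf
        simp only [Complex.I_sq]
        ring
      · rw [Real.sign_of_pos h, Real.sign_of_neg (by linarith), abs_of_pos h]
        push_cast
        have : (Real.pi : ℂ) ≠ 0 := by exact_mod_cast hpi.ne'
        field_simp
        ring_nf
        simp only [Complex.I_sq]
        ring
  · have hG : 0 < Real.Gamma (2 - θ 2) := Real.Gamma_pos_of_pos (by linarith)
    have hsub : θ 2 - 1 ≠ 0 := sub_ne_zero.2 h1
    obtain ⟨A, hA⟩ : ∃ A, A = Real.Gamma (2 - θ 2) / (θ 2 * (θ 2 - 1)) := ⟨_, rfl⟩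
    have hAc : A * Real.cos (Real.pi * θ 2 / 2) < 0 := by
      rcases lt_or_gt_of_ne h1 with h | h
      · refine mul_neg_of_neg_of_pos ?_ (Real.cos_pos_of_mem_Ioo ⟨by nlinarith, by nlinarith⟩)
        rw [hA]
        exact div_neg_of_pos_of_neg hG (mul_neg_of_pos_of_neg ha0 (by linarith))
      · refine mul_neg_of_pos_of_neg ?_ (Real.cos_neg_of_pi_div_two_lt_of_lt (by nlinarith) (by nlinarith))
        rw [hA]
        exact div_pos hG (mul_pos ha0 (by linarith))
    have hcos : Real.cos (Real.pi * θ 2 / 2) ≠ 0 := fun h => by rw [h] at hAc; simp at hAc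
    have hA0 : A ≠ 0 := fun h => by rw [h] at hAc; simp at hAc
    obtain ⟨S, hS⟩ : ∃ S, S = θ 1 ^ (θ 2) / (-(A * Real.cos (Real.pi * θ 2 / 2))) := ⟨_, rfl⟩
    have hSpos : 0 < S := by rw [hS]; exact div_pos (Real.rpow_pos_of_pos hs _) (by linarith)
    have hAS : A * S * Real.cos (Real.pi * θ 2 / 2) = - θ 1 ^ (θ 2) := by
      rw [hS]; field_simp
    refine aux_L6 (cp := (1 + θ 3) / 2 * S) (cm := (1 - θ 3) / 2 * S) ha0 ha2 (mul_pos (by linarith) hSpos) (mul_pos (by linarith) hSpos)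
      (H := fun w => A * w ^ (θ 2 : ℂ)) (H1 := fun w => A * (θ 2 * w ^ ((θ 2 : ℂ) - 1))) ?_ ?_ ?_ ?_ ?_ hcont hψ0
      (θ 0 - θ 3 * Real.tan (Real.pi * θ 2 / 2) * θ 1) ?_ hint
    · intro w hw
      have := (((hasDerivAt_id w).cpow_const (c := (θ 2 : ℂ)) (Or.inl hw : w ∈ Complex.slitPlane))).const_mul (A:ℂ)
      simpa using this
    · intro w hw
      have := ((((hasDerivAt_id w).cpow_const (c := (θ 2 : ℂ) - 1) (Or.inl hw : w ∈ Complex.slitPlane))).const_mul (θ 2 : ℂ)).const_mul (A:ℂ)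
      convert! this using 1
      rw [hA, Complex.Gamma_ofReal]
      have n1 : (θ 2 : ℂ) ≠ 0 := by exact_mod_cast ha0.ne'
      have n2 : (θ 2 : ℂ) - 1 ≠ 0 := by exact_mod_cast hsub
      push_cast
      rw [show -(2 - (θ 2 : ℂ)) = θ 2 - 1 - 1 by ring]
      simp only [id]
      field_simp
    · intro ε hε
      refine ⟨A * (θ 2 * ε ^ (θ 2 - 1)), ?_⟩
      rw [Complex.ofReal_mul, Complex.ofReal_mul, Complex.ofReal_cpow hε.le]
      push_cast; rfl
    · intro t ht
      exact (((hasDerivAt_id _).cpow_const (c := (θ 2 : ℂ)) (aux_slit t ht)).continuousAt).const_mul _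
    · have h2 : Tendsto (fun ε : ℝ => ((A * ε ^ (θ 2) : ℝ) : ℂ)) (𝓝[>] 0) (𝓝 0) := by
        have h3 := (Complex.continuous_ofReal.comp ((Continuous.rpow_const continuous_id (fun _ => Or.inr ha0.le) : Continuous fun ε : ℝ => ε ^ (θ 2)).const_mul A)).tendsto 0
        simp only [Function.comp_def, id, Real.zero_rpow ha0.ne', mul_zero, Complex.ofReal_zero] at h3
        exact h3.mono_left nhdsWithin_le_nhds
      refine h2.congr' ?_
      filter_upwards [self_mem_nhdsWithin] with ε hε
      rw [Complex.ofReal_mul, Complex.ofReal_cpow (le_of_lt hε)]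
    · intro t ht
      have hpw : ∀ t : ℝ, t ≠ 0 → ((t:ℂ) * Complex.I)^(θ 2 : ℂ) = ((|t|^(θ 2) : ℝ) : ℂ) * (Real.cos (Real.pi * θ 2 / 2) + Real.sign t * Real.sin (Real.pi * θ 2 / 2) * Complex.I) := by
        intro t ht
        rw [Complex.cpow_def_of_ne_zero (Complex.slitPlane_ne_zero (aux_slit t ht)), aux_logI t ht,
          Real.rpow_def_of_pos (abs_pos.2 ht), add_mul, Complex.exp_add, Complex.ofReal_exp]
        congr 1
        · push_cast; rfl
        rw [show ((Real.pi/2 * Real.sign t : ℝ) : ℂ) * Complex.I * (θ 2 : ℂ) = ((Real.pi * θ 2 / 2 * Real.sign t : ℝ) : ℂ) * Complex.I by push_cast; ring,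
          Complex.exp_mul_I, ← Complex.ofReal_cos, ← Complex.ofReal_sin]
        rcases lt_or_gt_of_ne ht with h | h
        · rw [Real.sign_of_neg h, mul_neg_one, Real.cos_neg, Real.sin_neg]
          push_cast; ring
        · rw [Real.sign_of_pos h, mul_one]
          push_cast; ring
      rw [hpw t ht, hpw (-t) (neg_ne_zero.2 ht), aux_psi_ne hθ' h1, abs_neg, abs_mul, abs_of_pos hs, Real.mul_rpow hs.le (abs_nonneg _), aux_sign_mul hs]
      have htan : Real.tan (Real.pi * θ 2 / 2) * Real.cos (Real.pi * θ 2 / 2) = Real.sin (Real.pi * θ 2 / 2) := by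
        rw [Real.tan_mul_cos hcos]
      have hsn : Real.sign (-t) = - Real.sign t := by
        rcases lt_or_gt_of_ne ht with h | h
        · rw [Real.sign_of_neg h, Real.sign_of_pos (by linarith)]; ring
        · rw [Real.sign_of_pos h, Real.sign_of_neg (by linarith)]
      rw [hsn, ← htan]
      have hAS' : (A:ℂ) * S * (Real.cos (Real.pi * θ 2 / 2) : ℝ) = - ((θ 1 ^ (θ 2) : ℝ) : ℂ) := by exact_mod_cast hAS
      push_cast at hAS' ⊢
      linear_combination (-((|t| ^ (θ 2) : ℝ) : ℂ) * (1 - θ 3 * Real.sign t * Complex.tan (Real.pi * θ 2 / 2) * Complex.I)) * hAS'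

end

section
open MeasureTheory Filter Topology

lemma aux_pint {b : ℝ} (h1 : -1 < b) (h2 : b < 1) : IntegrableOn (fun t : ℝ => t^b / (1+t)^2) (Set.Ioi 0) := by
  have hm : ∀ s : Set ℝ, AEStronglyMeasurable (fun t : ℝ => t^b / (1+t)^2) (volume.restrict s) := fun s => by
    refine Measurable.aestronglyMeasurable ?_
    fun_prop
  rw [← Set.Ioc_union_Ioi_eq_Ioi (zero_le_one (α := ℝ))]
  refine IntegrableOn.union ?_ ?_
  · have := (intervalIntegral.intervalIntegrable_rpow' (a := 0) (b := 1) h1).1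
    refine Integrable.mono' this (hm _) ?_
    filter_upwards [ae_restrict_mem measurableSet_Ioc] with t ht
    have : 0 < t := ht.1
    rw [Real.norm_of_nonneg (by positivity)]
    refine div_le_self (by positivity) ?_
    nlinarith
  · refine Integrable.mono' (integrableOn_Ioi_rpow_of_lt (a := b-2) (by linarith) one_pos) (hm _) ?_
    filter_upwards [ae_restrict_mem measurableSet_Ioi] with t ht
    have h0 : 0 < t := lt_trans one_pos ht
    rw [Real.norm_of_nonneg (by positivity), Real.rpow_sub h0, Real.rpow_two]
    gcongr
    linarith

lemma aux_osc {γ C : ℝ} (hγ0 : 0 < γ) (hγ1 : γ < 1) {h G1 G2 : ℝ → ℂ}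
    (d1 : ∀ t, 0 < t → HasDerivAt h (G1 t / t) t) (d2 : ∀ t, 0 < t → HasDerivAt G1 (G2 t / t) t)
    (b0 : ∀ t, 0 < t → ‖h t‖ ≤ C * (t^γ / (1+t)^2)) (b1 : ∀ t, 0 < t → ‖G1 t‖ ≤ C * (t^γ / (1+t)^2))
    (b2 : ∀ t, 0 < t → ‖G2 t‖ ≤ C * (t^γ / (1+t)^2)) {x : ℝ} (hx : x ≠ 0) :
    ‖∫ t in Set.Ioi (0:ℝ), h t * Complex.exp (-Complex.I * t * x)‖ ≤ C * (1/γ + 1 + 2/(1-γ)) * |x|^(-1-γ) := by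
  have hC : 0 ≤ C := by
    have := (norm_nonneg _).trans (b0 1 one_pos)
    have h2 : (0:ℝ) < (1:ℝ)^γ/(1+1)^2 := by positivity
    exact nonneg_of_mul_nonneg_left this h2
  have hxa : 0 < |x| := abs_pos.2 hx
  have hxc : (x:ℂ) ≠ 0 := by exact_mod_cast hx
  have hIx : -Complex.I * (x:ℂ) ≠ 0 := mul_ne_zero (by simp) hxc
  have nIx : ‖-Complex.I * (x:ℂ)‖ = |x| := by simp
  have ne : ∀ t : ℝ, ‖Complex.exp (-Complex.I * t * x)‖ = 1 := by
    intro t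
    rw [show -Complex.I * (t : ℂ) * (x : ℂ) = ((-(t * x) : ℝ) : ℂ) * Complex.I by push_cast; ring, Complex.norm_exp_ofReal_mul_I]
  have nv : ∀ t : ℝ, ‖Complex.exp (-Complex.I * t * x) / (-Complex.I * x)‖ = |x|⁻¹ := by
    intro t
    rw [norm_div, ne, nIx, one_div]
  have dv : ∀ t : ℝ, HasDerivAt (fun t : ℝ => Complex.exp (-Complex.I * t * x) / (-Complex.I * x)) (Complex.exp (-Complex.I * t * x)) t := by
    intro t
    have h1 : HasDerivAt (fun t : ℝ => -Complex.I * (t:ℂ) * x) (-Complex.I * x) t := by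
      simpa using ((hasDerivAt_id t).ofReal_comp.const_mul (-Complex.I)).mul_const (x:ℂ)
    convert! h1.cexp.div_const (-Complex.I * x) using 1
    field_simp
  have hec : Continuous fun t : ℝ => Complex.exp (-Complex.I * t * x) := by fun_prop
  have hvc : Continuous fun t : ℝ => Complex.exp (-Complex.I * t * x) / (-Complex.I * x) := by fun_prop
  have hhc : ContinuousOn h (Set.Ioi 0) := fun t ht => (d1 t ht).continuousAt.continuousWithinAt
  have hG1c : ContinuousOn G1 (Set.Ioi 0) := fun t ht => (d2 t ht).continuousAt.continuousWithinAt
  have b0' : ∀ t, 0 < t → ‖h t‖ ≤ C * t^γ := fun t ht => (b0 t ht).trans (by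
    gcongr
    exact div_le_self (by positivity) (by nlinarith))
  have b01 : ∀ t, 0 < t → C * (t^γ / (1+t)^2) ≤ C * t^γ := fun t ht => by
    gcongr
    exact div_le_self (by positivity) (by nlinarith)
  have tg : ∀ t : ℝ, 0 < t → t^γ/(1+t)^2 ≤ 1/t := fun t ht => by
    rw [div_le_div_iff₀ (by positivity) ht]
    have : t^γ ≤ (1+t) := by
      calc t^γ ≤ (1+t)^γ := Real.rpow_le_rpow ht.le (by linarith) hγ0.le
        _ ≤ (1+t)^(1:ℝ) := Real.rpow_le_rpow_of_exponent_le (by linarith) hγ1.le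
        _ = 1+t := Real.rpow_one _
    nlinarith
  have hu1 : ∀ t : ℝ, 0 < t → ‖G1 t / t‖ ≤ C * (t^(γ-1) / (1+t)^2) := fun t ht => by
    rw [norm_div, Complex.norm_real, Real.norm_of_nonneg ht.le, Real.rpow_sub_one ht.ne', div_le_iff₀ ht]
    refine (b1 t ht).trans (le_of_eq ?_)
    field_simp
  have i0 : IntegrableOn (h * fun t : ℝ => Complex.exp (-Complex.I * t * x)) (Set.Ioi 0) := by
    refine Integrable.mono' ((aux_pint (by linarith) hγ1).const_mul C) ((hhc.mul hec.continuousOn).aestronglyMeasurable measurableSet_Ioi) ?_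
    filter_upwards [ae_restrict_mem measurableSet_Ioi] with t ht
    rw [Pi.mul_apply, norm_mul, ne, mul_one]
    exact b0 t ht
  have hcdiv : ContinuousOn (fun t : ℝ => G1 t / t) (Set.Ioi 0) := by
    refine hG1c.div (by fun_prop) fun t ht => ?_
    exact_mod_cast (ne_of_gt ht)
  have i1 : IntegrableOn (fun t : ℝ => G1 t / t) (Set.Ioi 0) := by
    refine Integrable.mono' ((aux_pint (b := γ-1) (by linarith) (by linarith)).const_mul C) (hcdiv.aestronglyMeasurable measurableSet_Ioi) ?_
    filter_upwards [ae_restrict_mem measurableSet_Ioi] with t ht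
    exact hu1 t ht
  have i1v : IntegrableOn ((fun t : ℝ => G1 t / t) * fun t : ℝ => Complex.exp (-Complex.I * t * x) / (-Complex.I * x)) (Set.Ioi 0) := by
    refine Integrable.mono' (i1.norm.mul_const |x|⁻¹) ((hcdiv.mul hvc.continuousOn).aestronglyMeasurable measurableSet_Ioi) ?_
    refine Eventually.of_forall fun t => ?_
    rw [Pi.mul_apply, norm_mul, nv]
  have i1e : IntegrableOn (fun t : ℝ => (G1 t / t) * Complex.exp (-Complex.I * t * x)) (Set.Ioi 0) := by
    refine Integrable.mono' i1.norm ((hcdiv.mul hec.continuousOn).aestronglyMeasurable measurableSet_Ioi) ?_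
    refine Eventually.of_forall fun t => ?_
    simp only [Pi.mul_apply, norm_mul, ne, mul_one, le_refl]
  have z0 : Tendsto (h * fun t : ℝ => Complex.exp (-Complex.I * t * x) / (-Complex.I * x)) (𝓝[>] 0) (𝓝 0) := by
    have : Tendsto (fun t : ℝ => C * t^γ * |x|⁻¹) (𝓝[>] 0) (𝓝 0) := by
      have h3 := (((Continuous.rpow_const continuous_id (fun _ => Or.inr hγ0.le) : Continuous fun ε : ℝ => ε ^ γ).const_mul C).mul_const |x|⁻¹).tendsto 0
      simp only [id, Real.zero_rpow hγ0.ne', mul_zero, zero_mul] at h3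
      exact h3.mono_left nhdsWithin_le_nhds
    refine squeeze_zero_norm' ?_ this
    filter_upwards [self_mem_nhdsWithin] with t ht
    rw [Pi.mul_apply, norm_mul, nv]
    gcongr
    exact b0' t ht
  have tinv : Tendsto (fun t : ℝ => C * (1/t) * |x|⁻¹) atTop (𝓝 0) := by
    have := (tendsto_inv_atTop_zero (𝕜 := ℝ)).const_mul C |>.mul_const |x|⁻¹
    simpa using this
  have zi : Tendsto (h * fun t : ℝ => Complex.exp (-Complex.I * t * x) / (-Complex.I * x)) atTop (𝓝 0) := by
    refine squeeze_zero_norm' ?_ tinv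
    filter_upwards [eventually_gt_atTop 0] with t ht
    rw [Pi.mul_apply, norm_mul, nv]
    gcongr
    exact (b0 t ht).trans (mul_le_mul_of_nonneg_left (tg t ht) hC)
  have S1 := integral_Ioi_mul_deriv_eq_deriv_mul (a := 0) (u := h) (v := fun t : ℝ => Complex.exp (-Complex.I * t * x) / (-Complex.I * x))
    (u' := fun t : ℝ => G1 t / t) (v' := fun t : ℝ => Complex.exp (-Complex.I * t * x)) d1 (fun t _ => dv t) i0 i1v z0 zi
  have e1 : (∫ t in Set.Ioi (0:ℝ), G1 t / t * (Complex.exp (-Complex.I * t * x) / (-Complex.I * x)))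
      = (∫ t in Set.Ioi (0:ℝ), G1 t / t * Complex.exp (-Complex.I * t * x)) / (-Complex.I * x) := by
    rw [← integral_div]
    congr 1; ext t; ring
  rw [S1, e1, sub_zero, zero_sub, norm_neg, norm_div, nIx]
  set c := |x|⁻¹ with hc
  have hc0 : 0 < c := inv_pos.2 hxa
  have hsp : (∫ t in Set.Ioi (0:ℝ), G1 t / t * Complex.exp (-Complex.I * t * x))
      = (∫ t in Set.Ioc (0:ℝ) c, G1 t / t * Complex.exp (-Complex.I * t * x)) + ∫ t in Set.Ioi c, G1 t / t * Complex.exp (-Complex.I * t * x) := by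
    rw [← setIntegral_union (Set.Ioc_disjoint_Ioi le_rfl) measurableSet_Ioi (i1e.mono_set Set.Ioc_subset_Ioi_self) (i1e.mono_set (Set.Ioi_subset_Ioi hc0.le)),
      Set.Ioc_union_Ioi_eq_Ioi hc0.le]
  have n1 : ‖∫ t in Set.Ioc (0:ℝ) c, G1 t / t * Complex.exp (-Complex.I * t * x)‖ ≤ C * (c^γ/γ) := by
    have hi := (intervalIntegral.intervalIntegrable_rpow' (a := 0) (b := c) (r := γ-1) (by linarith)).1
    refine (norm_integral_le_of_norm_le (hi.const_mul C) ?_).trans (le_of_eq ?_)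
    · filter_upwards [ae_restrict_mem measurableSet_Ioc] with t ht
      rw [norm_mul, ne, mul_one]
      refine (hu1 t ht.1).trans ?_
      have : 0 < t := ht.1
      gcongr
      exact div_le_self (by positivity) (by nlinarith)
    · rw [integral_const_mul, ← intervalIntegral.integral_of_le hc0.le, integral_rpow (Or.inl (by linarith))]
      simp [Real.zero_rpow hγ0.ne']
  have hu2 : ∀ t : ℝ, 0 < t → ‖(G2 t - G1 t)/t^2‖ ≤ 2 * C * t^(γ-2) := fun t ht => by
    rw [norm_div, norm_pow, Complex.norm_real, Real.norm_of_nonneg ht.le, Real.rpow_sub ht, Real.rpow_two, ← mul_div_assoc]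
    gcongr
    refine (norm_sub_le _ _).trans ?_
    linarith [(b1 t ht).trans (b01 t ht), (b2 t ht).trans (b01 t ht)]
  have du : ∀ t : ℝ, 0 < t → HasDerivAt (fun t : ℝ => G1 t / t) ((G2 t - G1 t)/t^2) t := fun t ht => by
    have ht' : (t:ℂ) ≠ 0 := by exact_mod_cast ht.ne'
    convert! (d2 t ht).div ((hasDerivAt_id t).ofReal_comp) (by simpa using ht.ne') using 1
    simp only [id]
    field_simp
    simp
  have i2 : IntegrableOn ((fun t : ℝ => (G2 t - G1 t)/t^2) * fun t : ℝ => Complex.exp (-Complex.I * t * x) / (-Complex.I * x)) (Set.Ioi c) := by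
    have hm : AEStronglyMeasurable (fun t : ℝ => (G2 t - G1 t)/t^2) (volume.restrict (Set.Ioi c)) := by
      have h3 : AEStronglyMeasurable (deriv (fun t : ℝ => G1 t / t)) (volume.restrict (Set.Ioi c)) := (stronglyMeasurable_deriv _).aestronglyMeasurable
      refine h3.congr ?_
      filter_upwards [ae_restrict_mem measurableSet_Ioi] with t ht
      exact (du t (hc0.trans ht)).deriv
    refine Integrable.mono' ((((integrableOn_Ioi_rpow_of_lt (a := γ-2) (by linarith) hc0)).const_mul (2*C)).mul_const |x|⁻¹) (hm.mul hvc.aestronglyMeasurable) ?_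
    filter_upwards [ae_restrict_mem measurableSet_Ioi] with t ht
    rw [Pi.mul_apply, norm_mul, nv]
    gcongr
    exact hu2 t (hc0.trans ht)
  have zc : Tendsto ((fun t : ℝ => G1 t / t) * fun t : ℝ => Complex.exp (-Complex.I * t * x) / (-Complex.I * x)) (𝓝[>] c)
      (𝓝 (G1 c / c * (Complex.exp (-Complex.I * c * x) / (-Complex.I * x)))) := by
    have := (du c hc0).continuousAt.mul hvc.continuousAt (x := c)
    exact this.tendsto.mono_left nhdsWithin_le_nhds
  have zi2 : Tendsto ((fun t : ℝ => G1 t / t) * fun t : ℝ => Complex.exp (-Complex.I * t * x) / (-Complex.I * x)) atTop (𝓝 0) := by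
    refine squeeze_zero_norm' ?_ tinv
    filter_upwards [eventually_gt_atTop 1] with t ht
    have ht0 : 0 < t := one_pos.trans ht
    rw [Pi.mul_apply, norm_mul, nv, norm_div, Complex.norm_real, Real.norm_of_nonneg ht0.le]
    gcongr
    refine (div_le_self (norm_nonneg _) ht.le).trans ?_
    exact (b1 t ht0).trans (mul_le_mul_of_nonneg_left (tg t ht0) hC)
  have S2 := integral_Ioi_mul_deriv_eq_deriv_mul (a := c) (u := fun t : ℝ => G1 t / t) (v := fun t : ℝ => Complex.exp (-Complex.I * t * x) / (-Complex.I * x))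
    (u' := fun t : ℝ => (G2 t - G1 t)/t^2) (v' := fun t : ℝ => Complex.exp (-Complex.I * t * x)) (fun t ht => du t (hc0.trans ht)) (fun t _ => dv t)
    (i1e.mono_set (Set.Ioi_subset_Ioi hc0.le)) i2 zc zi2
  have cg : c^(γ-1) * c = c^γ := by rw [← Real.rpow_add_one hc0.ne']; ring_nf
  have n2 : ‖∫ t in Set.Ioi c, G1 t / t * Complex.exp (-Complex.I * t * x)‖ ≤ C * c^γ + 2 * C * (c^γ/(1-γ)) := by
    rw [S2, zero_sub]
    refine (norm_sub_le _ _).trans (add_le_add ?_ ?_)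
    · rw [norm_neg, norm_mul, nv, ← cg, ← mul_assoc]
      gcongr
      refine (hu1 c hc0).trans ?_
      gcongr
      exact div_le_self (by positivity) (by nlinarith)
    · refine (norm_integral_le_of_norm_le ((((integrableOn_Ioi_rpow_of_lt (a := γ-2) (by linarith) hc0)).const_mul (2*C)).mul_const |x|⁻¹) ?_).trans (le_of_eq ?_)
      · filter_upwards [ae_restrict_mem measurableSet_Ioi] with t ht
        rw [norm_mul, nv]
        gcongr
        exact hu2 t (hc0.trans ht)
      · rw [integral_mul_const, integral_const_mul, integral_Ioi_rpow_of_lt (by linarith) hc0, ← hc, ← cg]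
        rw [show γ - 2 + 1 = -(1 - γ) by ring, show γ - 1 = -(1-γ) by ring, neg_div_neg_eq]
        ring
  have hfin : |x|^(-1-γ) = c^γ / |x| := by
    rw [hc, Real.inv_rpow hxa.le, show -1-γ = -γ - 1 by ring, Real.rpow_sub_one hxa.ne', Real.rpow_neg hxa.le]
  rw [hsp, hfin, div_le_iff₀ hxa, mul_assoc, div_mul_cancel₀ _ hxa.ne']
  refine (norm_add_le _ _).trans ((add_le_add n1 n2).trans (le_of_eq ?_))
  have : 1 - γ ≠ 0 := by linarith
  field_simp
  ring

lemma aux_osc' {γ C : ℝ} (hγ0 : 0 < γ) (hγ1 : γ < 1) {h G1 G2 : ℝ → ℂ}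
    (d1 : ∀ t, 0 < t → HasDerivAt h (G1 t / t) t) (d2 : ∀ t, 0 < t → HasDerivAt G1 (G2 t / t) t)
    (b0 : ∀ t, 0 < t → ‖h t‖ ≤ C * (t^γ / (1+t)^2)) (b1 : ∀ t, 0 < t → ‖G1 t‖ ≤ C * (t^γ / (1+t)^2))
    (b2 : ∀ t, 0 < t → ‖G2 t‖ ≤ C * (t^γ / (1+t)^2)) :
    ∃ K : ℝ, ∀ x : ℝ, ‖∫ t in Set.Ioi (0:ℝ), h t * Complex.exp (-Complex.I * t * x)‖ ≤ K * (1+|x|)^(-1-γ) := by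
  set K0 := C * (1/γ + 1 + 2/(1-γ))
  set M := ∫ t in Set.Ioi (0:ℝ), C * (t^γ / (1+t)^2)
  have hM : ∀ x : ℝ, ‖∫ t in Set.Ioi (0:ℝ), h t * Complex.exp (-Complex.I * t * x)‖ ≤ M := by
    intro x
    refine norm_integral_le_of_norm_le ((aux_pint (by linarith) hγ1).const_mul C) ?_
    filter_upwards [ae_restrict_mem measurableSet_Ioi] with t ht
    rw [norm_mul, show -Complex.I * (t : ℂ) * (x : ℂ) = ((-(t * x) : ℝ) : ℂ) * Complex.I by push_cast; ring, Complex.norm_exp_ofReal_mul_I, mul_one]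
    exact b0 t ht
  refine ⟨max M K0 * 2^(1+γ), fun x => ?_⟩
  have hK : 0 ≤ max M K0 := le_max_of_le_left ((norm_nonneg _).trans (hM 0))
  have e : ∀ y : ℝ, 0 < y → 2^(1+γ) * y^(-1-γ) = (y/2)^(-1-γ) := by
    intro y hy
    rw [Real.div_rpow hy.le (by norm_num), show -1-γ = -(1+γ) by ring, Real.rpow_neg (by norm_num : (0:ℝ) ≤ 2)]
    field_simp
  rw [mul_assoc, e _ (by positivity)]
  rcases le_or_gt |x| 1 with hx | hx
  · refine (hM x).trans ((le_max_left M K0).trans ?_)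
    refine le_mul_of_one_le_right hK ?_
    refine Real.one_le_rpow_of_pos_of_le_one_of_nonpos (by positivity) (by linarith) (by linarith)
  · refine (aux_osc hγ0 hγ1 d1 d2 b0 b1 b2 (x := x) (by rintro rfl; simp at hx; linarith)).trans ?_
    refine mul_le_mul (le_max_right _ _) ?_ (by positivity) hK
    refine Real.rpow_le_rpow_of_nonpos (by positivity) (by linarith) (by linarith)

end

section
open MeasureTheory Filter Topology

def NiceC (γ : ℝ) (F : ℝ → ℂ) : Prop := ∃ G1 G2 : ℝ → ℂ, ∃ C : ℝ, ∀ t : ℝ, 0 < t →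
  HasDerivAt F (G1 t / t) t ∧ HasDerivAt G1 (G2 t / t) t ∧ ‖F t‖ ≤ C * (t^γ * (1+t)^4) ∧
  ‖G1 t‖ ≤ C * (t^γ * (1+t)^4) ∧ ‖G2 t‖ ≤ C * (t^γ * (1+t)^4)

lemma aux_nice_add {γ : ℝ} {F G : ℝ → ℂ} (hF : NiceC γ F) (hG : NiceC γ G) : NiceC γ (fun t => F t + G t) := by
  obtain ⟨F1, F2, C, h⟩ := hF
  obtain ⟨G1, G2, C', h'⟩ := hG
  refine ⟨fun t => F1 t + G1 t, fun t => F2 t + G2 t, C + C', fun t ht => ?_⟩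
  obtain ⟨a1, a2, a3, a4, a5⟩ := h t ht
  obtain ⟨b1, b2, b3, b4, b5⟩ := h' t ht
  refine ⟨?_, ?_, ?_, ?_, ?_⟩
  · rw [add_div]; exact a1.add b1
  · rw [add_div]; exact a2.add b2
  all_goals
    rw [add_mul]
    refine (norm_add_le _ _).trans ?_
    linarith

lemma aux_nice_smul {γ : ℝ} {F : ℝ → ℂ} (c : ℂ) (hF : NiceC γ F) : NiceC γ (fun t => c * F t) := by
  obtain ⟨F1, F2, C, h⟩ := hF
  refine ⟨fun t => c * F1 t, fun t => c * F2 t, ‖c‖ * C, fun t ht => ?_⟩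
  obtain ⟨a1, a2, a3, a4, a5⟩ := h t ht
  refine ⟨?_, ?_, ?_, ?_, ?_⟩
  · rw [mul_div_assoc]; exact a1.const_mul c
  · rw [mul_div_assoc]; exact a2.const_mul c
  all_goals
    rw [norm_mul, mul_assoc]
    exact mul_le_mul_of_nonneg_left (by assumption) (norm_nonneg _)

lemma aux_nice_congr {γ : ℝ} {F G : ℝ → ℂ} (hF : NiceC γ F) (h : ∀ t, 0 < t → G t = F t) : NiceC γ G := by
  obtain ⟨F1, F2, C, h'⟩ := hF
  refine ⟨F1, F2, C, fun t ht => ?_⟩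
  obtain ⟨a1, a2, a3, a4, a5⟩ := h' t ht
  refine ⟨a1.congr_of_eventuallyEq ?_, a2, ?_, a4, a5⟩
  · filter_upwards [lt_mem_nhds ht] with s hs using h s hs
  · rwa [h t ht]

lemma aux_nice_comp {γ : ℝ} {F : ℝ → ℂ} {σ : ℝ} (hσ : 0 < σ) (hF : NiceC γ F) : NiceC γ (fun t => F (σ * t)) := by
  obtain ⟨F1, F2, C, h⟩ := hF
  have hC : 0 ≤ C := by
    have := (norm_nonneg _).trans (h 1 one_pos).2.2.1
    by_contra hc
    push Not at hc
    have h2 : (0:ℝ) < (1^γ * (1+1)^4) := by positivity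
    nlinarith
  refine ⟨fun t => F1 (σ * t), fun t => F2 (σ * t), C * (σ^γ * (1+σ)^4), fun t ht => ?_⟩
  have hst : 0 < σ * t := by positivity
  obtain ⟨a1, a2, a3, a4, a5⟩ := h (σ * t) hst
  have hl : HasDerivAt (fun t : ℝ => σ * t) σ t := by simpa using (hasDerivAt_id t).const_mul σ
  have key : C * ((σ*t)^γ * (1+σ*t)^4) ≤ C * (σ^γ * (1+σ)^4) * (t^γ * (1+t)^4) := by
    rw [Real.mul_rpow hσ.le ht.le]
    have : (1+σ*t)^4 ≤ ((1+σ)*(1+t))^4 := by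
      gcongr
      nlinarith
    rw [mul_pow] at this
    calc C * (σ^γ * t^γ * (1+σ*t)^4) ≤ C * (σ^γ * t^γ * ((1+σ)^4*(1+t)^4)) := by gcongr
      _ = _ := by ring
  have hs : (σ:ℂ) ≠ 0 := by exact_mod_cast hσ.ne'
  have htt : (t:ℂ) ≠ 0 := by exact_mod_cast ht.ne'
  refine ⟨?_, ?_, a3.trans key, a4.trans key, a5.trans key⟩
  · have := a1.scomp t hl
    convert! this using 1
    rw [Complex.real_smul]
    push_cast
    field_simp
  · have := a2.scomp t hl
    convert! this using 1
    rw [Complex.real_smul]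
    push_cast
    field_simp

lemma aux_abslog {ε s : ℝ} (hε : 0 < ε) (hs : 0 < s) : |Real.log s| ≤ (s^ε + s^(-ε))/ε := by
  have h1 := Real.log_le_rpow_div hs.le hε
  have h2 := Real.log_le_rpow_div (x := s⁻¹) (by positivity) hε
  rw [Real.log_inv, Real.inv_rpow hs.le, ← Real.rpow_neg hs.le] at h2
  have p1 : 0 < s^ε / ε := by positivity
  have p2 : 0 < s^(-ε) / ε := by positivity
  rw [add_div, abs_le]
  constructor <;> linarith

lemma aux_rpow_bd {γ e s : ℝ} (hs : 0 < s) (h1 : γ ≤ e) (h2 : e ≤ γ + 4) : s^e ≤ s^γ * (1+s)^4 := by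
  have : s^e = s^γ * s^(e-γ) := by rw [← Real.rpow_add hs]; congr 1; ring
  rw [this]
  refine mul_le_mul_of_nonneg_left ?_ (by positivity)
  calc s^(e-γ) ≤ (1+s)^(e-γ) := Real.rpow_le_rpow hs.le (by linarith) (by linarith)
    _ ≤ (1+s)^(4:ℝ) := Real.rpow_le_rpow_of_exponent_le (by linarith) (by linarith)
    _ = _ := by norm_cast

/-- monomials with logs, up to second power -/
lemma aux_mono_bd {γ a : ℝ} (h0 : γ < a) (h2 : a < γ + 2) : ∃ C : ℝ, 0 ≤ C ∧ ∀ s : ℝ, 0 < s →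
    s^a * (1 + |Real.log s| + |Real.log s|^2) ≤ C * (s^γ * (1+s)^4) := by
  set ε := (a-γ)/2 with hε
  have he : 0 < ε := by linarith
  refine ⟨2 + 8/ε^2, by positivity, fun s hs => ?_⟩
  have hl := aux_abslog he hs
  set l := |Real.log s|
  have hl0 : 0 ≤ l := abs_nonneg _
  have h3 : l^2 ≤ (2 * s^(2*ε) + 2 * s^(-(2*ε)))/ε^2 := by
    have : l^2 ≤ ((s^ε + s^(-ε))/ε)^2 := by gcongr
    refine this.trans ?_
    rw [div_pow]
    gcongr
    have e1 : s^(2*ε) = (s^ε)^2 := by rw [← Real.rpow_mul_natCast hs.le]; congr 1; push_cast; ring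
    have e2 : s^(-(2*ε)) = (s^(-ε))^2 := by rw [← Real.rpow_mul_natCast hs.le]; congr 1; push_cast; ring
    rw [e1, e2]
    nlinarith [sq_nonneg (s^ε - s^(-ε))]
  have h4 : 1 + l + l^2 ≤ 2 + 2 * l^2 := by nlinarith [sq_nonneg (l-1)]
  have b0 := aux_rpow_bd (γ := γ) (e := a) hs h0.le (by linarith)
  have b1 := aux_rpow_bd (γ := γ) (e := a + 2*ε) hs (by linarith) (by linarith)
  have b2 := aux_rpow_bd (γ := γ) (e := a - 2*ε) hs (by linarith) (by linarith)
  calc s^a * (1 + l + l^2) ≤ s^a * (2 + 2 * ((2 * s^(2*ε) + 2 * s^(-(2*ε)))/ε^2)) := by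
        refine mul_le_mul_of_nonneg_left (by linarith) (by positivity)
    _ = 2 * s^a + (4/ε^2) * (s^a * s^(2*ε)) + (4/ε^2) * (s^a * s^(-(2*ε))) := by field_simp; ring
    _ = 2 * s^a + (4/ε^2) * (s^(a+2*ε)) + (4/ε^2) * (s^(a-2*ε)) := by
        rw [← Real.rpow_add hs, ← Real.rpow_add hs, ← sub_eq_add_neg]
    _ ≤ 2 * (s^γ * (1+s)^4) + (4/ε^2) * (s^γ * (1+s)^4) + (4/ε^2) * (s^γ * (1+s)^4) := by gcongr
    _ = _ := by ring

lemma aux_nice_real {γ a : ℝ} (h0 : γ < a) (h2 : a < γ + 2) (p q r : ℝ) :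
    NiceC γ (fun s => ((s^a * (p + q * Real.log s + r * Real.log s^2) : ℝ) : ℂ)) := by
  obtain ⟨C, hC, h⟩ := aux_mono_bd h0 h2
  have der : ∀ p q r s : ℝ, 0 < s → HasDerivAt (fun s => ((s^a * (p + q * Real.log s + r * Real.log s^2) : ℝ) : ℂ))
      (((s^a * ((a*p+q) + (a*q+2*r) * Real.log s + (a*r) * Real.log s^2) : ℝ) : ℂ) / s) s := by
    intro p q r s hs
    rw [← Complex.ofReal_div]
    refine HasDerivAt.ofReal_comp ?_
    have d1 := Real.hasDerivAt_rpow_const (x := s) (p := a) (Or.inl hs.ne')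
    have d2 := Real.hasDerivAt_log hs.ne'
    have := d1.mul (((d2.const_mul q).const_add p).add ((d2.pow 2).const_mul r))
    convert! this using 1
    rw [Real.rpow_sub hs, Real.rpow_one]
    simp
    field_simp
    ring
  have bd : ∀ p q r s : ℝ, 0 < s → ‖((s^a * (p + q * Real.log s + r * Real.log s^2) : ℝ) : ℂ)‖ ≤
      ((|p|+|q|+|r|) * C) * (s^γ * (1+s)^4) := by
    intro p q r s hs
    rw [Complex.norm_real, Real.norm_eq_abs, abs_mul, abs_of_nonneg (by positivity : 0 ≤ s^a)]
    have : |p + q * Real.log s + r * Real.log s^2| ≤ (|p|+|q|+|r|) * (1 + |Real.log s| + |Real.log s|^2) := by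
      have := abs_add_three p (q * Real.log s) (r * Real.log s^2)
      rw [abs_mul, abs_mul, abs_pow] at this
      refine this.trans ?_
      have := abs_nonneg p; have := abs_nonneg q; have := abs_nonneg r; have := abs_nonneg (Real.log s)
      nlinarith [mul_nonneg (abs_nonneg p) (abs_nonneg (Real.log s)), mul_nonneg (abs_nonneg r) (abs_nonneg (Real.log s)), mul_nonneg (abs_nonneg p) (sq_nonneg |Real.log s|), mul_nonneg (abs_nonneg q) (sq_nonneg |Real.log s|)]
    calc _ ≤ s^a * ((|p|+|q|+|r|) * (1 + |Real.log s| + |Real.log s|^2)) := mul_le_mul_of_nonneg_left this (by positivity)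
      _ = (|p|+|q|+|r|) * (s^a * (1 + |Real.log s| + |Real.log s|^2)) := by ring
      _ ≤ (|p|+|q|+|r|) * (C * (s^γ * (1+s)^4)) := mul_le_mul_of_nonneg_left (h s hs) (by positivity)
      _ = _ := by ring
  let p1 := a*p+q
  let q1 := a*q+2*r
  let r1 := a*r
  let p2 := a*p1+q1
  let q2 := a*q1+2*r1
  let r2 := a*r1
  set K := (|p|+|q|+|r|) * C + (|p1|+|q1|+|r1|) * C + (|p2|+|q2|+|r2|) * C with hK
  have k0 : (|p|+|q|+|r|) * C ≤ K := by
    rw [hK]; nlinarith [show 0 ≤ (|p1|+|q1|+|r1|) * C by positivity, show 0 ≤ (|p2|+|q2|+|r2|) * C by positivity]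
  have k1 : (|p1|+|q1|+|r1|) * C ≤ K := by
    rw [hK]; nlinarith [show 0 ≤ (|p|+|q|+|r|) * C by positivity, show 0 ≤ (|p2|+|q2|+|r2|) * C by positivity]
  have k2 : (|p2|+|q2|+|r2|) * C ≤ K := by
    rw [hK]; nlinarith [show 0 ≤ (|p1|+|q1|+|r1|) * C by positivity, show 0 ≤ (|p|+|q|+|r|) * C by positivity]
  refine ⟨_, _, K, fun s hs => ⟨der p q r s hs, der p1 q1 r1 s hs, (bd p q r s hs).trans ?_, (bd p1 q1 r1 s hs).trans ?_, (bd p2 q2 r2 s hs).trans ?_⟩⟩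
  all_goals exact mul_le_mul_of_nonneg_right (by assumption) (by positivity)

lemma aux_poly_exp {c a : ℝ} (hc : 0 < c) (ha : 0 < a) (n : ℕ) : ∃ K : ℝ, 0 ≤ K ∧ ∀ t : ℝ, 0 < t →
    (1+t)^n * Real.exp (-(c*t)^a) ≤ K := by
  -- e^{y} ≥ y^m/m!, m*a ≥ n
  obtain ⟨m, hm⟩ := exists_nat_ge (n/a)
  have hma : (n:ℝ) ≤ m * a := by rwa [div_le_iff₀ ha] at hm
  refine ⟨2^n + 2^n * (m.factorial * c^(-(m*a))), by positivity, fun t ht => ?_⟩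
  have e1 : Real.exp (-(c*t)^a) ≤ 1 := by
    rw [Real.exp_le_one_iff]; simp; positivity
  rcases le_total t 1 with h | h
  · have : (1+t)^n ≤ 2^n := by gcongr; linarith
    have h2 : 0 ≤ 2^n * (m.factorial * c^(-(m*a))) := by positivity
    calc _ ≤ (1+t)^n * 1 := by gcongr
      _ ≤ _ := by linarith
  · have h3 : ((c*t)^a)^m / m.factorial ≤ Real.exp ((c*t)^a) := Real.pow_div_factorial_le_exp _ (by positivity) m
    have h4 : ((c*t)^a)^m = c^(m*a) * t^(m*a) := by
      rw [← Real.rpow_mul_natCast (by positivity), Real.mul_rpow hc.le ht.le, mul_comm a]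
    have h5 : t^n ≤ t^(m*a) := by
      rw [← Real.rpow_natCast]; exact Real.rpow_le_rpow_of_exponent_le h hma
    have h6 : (1+t)^n ≤ 2^n * t^n := by rw [← mul_pow]; gcongr; linarith
    have h7 : 0 ≤ (2:ℝ)^n := by positivity
    have : (1+t)^n * Real.exp (-(c*t)^a) ≤ 2^n * (m.factorial * c^(-(m*a))) := by
      rw [Real.exp_neg, ← div_eq_mul_inv, div_le_iff₀ (Real.exp_pos _)]
      refine h6.trans ?_
      rw [mul_assoc]
      refine mul_le_mul_of_nonneg_left ?_ h7
      rw [h4, div_le_iff₀ (by positivity)] at h3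
      rw [Real.rpow_neg hc.le]
      have : 0 < c^(m*a) := by positivity
      rw [← mul_le_mul_iff_right₀ this]
      calc c^(m*a) * t^n ≤ c^(m*a) * t^(m*a) := by gcongr
        _ ≤ _ := h3
        _ = _ := by field_simp
    linarith

set_option maxHeartbeats 1000000 in
lemma aux_main_bd {γ σ a : ℝ} (hγ0 : 0 < γ) (hγ1 : γ < 1) (hσ : 0 < σ) (ha : 0 < a) {P D : ℝ → ℂ}
    (hP : NiceC γ P) (hD : NiceC γ D) (hre : ∀ t, 0 < t → (P t).re = -(σ*t)^a) :
    ∃ K, ∀ x : ℝ, ‖∫ t in Set.Ioi (0:ℝ), Complex.exp (P t) * D t * Complex.exp (-Complex.I*t*x)‖ ≤ K*(1+|x|)^(-1-γ) := by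
  obtain ⟨P1, P2, A, h⟩ := hP
  obtain ⟨D1, D2, B, h'⟩ := hD
  obtain ⟨K, hK0, hK⟩ := aux_poly_exp hσ ha 17
  have hA : 0 ≤ A := by
    have := (norm_nonneg _).trans (h 1 one_pos).2.2.1
    by_contra hc
    push Not at hc
    have h2 : (0:ℝ) < (1^γ * (1+1)^4) := by positivity
    nlinarith
  have hB : 0 ≤ B := by
    have := (norm_nonneg _).trans (h' 1 one_pos).2.2.1
    by_contra hc
    push Not at hc
    have h2 : (0:ℝ) < (1^γ * (1+1)^4) := by positivity
    nlinarith
  -- master bound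
  have master : ∀ t : ℝ, 0 < t → ∀ z : ℂ, ‖z‖ ≤ (B * (t^γ * (1+t)^4)) * (2 + 3 * A * (1+t)^5 + A^2 * ((1+t)^5)^2) →
      ‖Complex.exp (P t) * z‖ ≤ ((B * (2 + 3*A + A^2)) * K) * (t^γ / (1+t)^2) := by
    intro t ht z hz
    rw [norm_mul, Complex.norm_exp, hre t ht]
    have u1 : (1:ℝ) ≤ (1+t) := by linarith
    have u : 2 + 3 * A * (1+t)^5 + A^2 * ((1+t)^5)^2 ≤ (2 + 3*A + A^2) * (1+t)^10 := by
      have h1 : (1:ℝ) ≤ (1+t)^10 := one_le_pow₀ u1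
      have h2 : (1+t)^5 ≤ (1+t)^10 := pow_le_pow_right₀ u1 (by norm_num)
      have h3 : ((1+t)^5)^2 = (1+t)^10 := by ring
      rw [h3]
      nlinarith [mul_le_mul_of_nonneg_left h2 hA]
    have hk := hK t ht
    rw [← mul_div_assoc, le_div_iff₀ (by positivity)]
    calc Real.exp (-(σ*t)^a) * ‖z‖ * (1+t)^2
        ≤ Real.exp (-(σ*t)^a) * ((B * (t^γ * (1+t)^4)) * ((2 + 3*A + A^2) * (1+t)^10)) * (1+t)^2 := by
          gcongr
          exact hz.trans (mul_le_mul_of_nonneg_left u (by positivity))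
      _ = (B * (2 + 3*A + A^2)) * t^γ * ((1+t)^16 * Real.exp (-(σ*t)^a)) := by ring
      _ ≤ (B * (2 + 3*A + A^2)) * t^γ * K := by
          refine mul_le_mul_of_nonneg_left (le_trans ?_ hk) (by positivity)
          gcongr
          · norm_num
      _ = _ := by ring
  have tg : ∀ t : ℝ, 0 < t → A * (t^γ * (1+t)^4) ≤ A * (1+t)^5 := by
    intro t ht
    refine mul_le_mul_of_nonneg_left ?_ hA
    have : t^γ ≤ 1 + t := by
      calc t^γ ≤ (1+t)^γ := Real.rpow_le_rpow ht.le (by linarith) hγ0.le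
        _ ≤ (1+t)^(1:ℝ) := Real.rpow_le_rpow_of_exponent_le (by linarith) hγ1.le
        _ = _ := Real.rpow_one _
    calc t^γ * (1+t)^4 ≤ (1+t) * (1+t)^4 := by gcongr
      _ = _ := by ring
  refine aux_osc' (C := (B * (2 + 3*A + A^2)) * K) hγ0 hγ1
    (G1 := fun t => Complex.exp (P t) * (P1 t * D t + D1 t))
    (G2 := fun t => Complex.exp (P t) * (P1 t * (P1 t * D t + D1 t) + (P2 t * D t + P1 t * D1 t + D2 t))) ?_ ?_ ?_ ?_ ?_
  · intro t ht
    obtain ⟨a1, a2, a3, a4, a5⟩ := h t ht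
    obtain ⟨b1, b2, b3, b4, b5⟩ := h' t ht
    have htt : (t:ℂ) ≠ 0 := by exact_mod_cast ht.ne'
    convert! (a1.cexp.mul b1) using 1
    field_simp
  · intro t ht
    obtain ⟨a1, a2, a3, a4, a5⟩ := h t ht
    obtain ⟨b1, b2, b3, b4, b5⟩ := h' t ht
    have htt : (t:ℂ) ≠ 0 := by exact_mod_cast ht.ne'
    convert! (a1.cexp.mul ((a2.mul b1).add b2)) using 1
    simp only [Pi.add_apply, Pi.mul_apply]
    field_simp
  all_goals
    intro t ht
    obtain ⟨a1, a2, a3, a4, a5⟩ := h t ht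
    obtain ⟨b1, b2, b3, b4, b5⟩ := h' t ht
    have c4 := a4.trans (tg t ht)
    have c5 := a5.trans (tg t ht)
    refine master t ht _ ?_
    have q0 : 0 ≤ B * (t^γ * (1+t)^4) := by positivity
    have r0 : 0 ≤ A * (1+t)^5 := by positivity
    set q := B * (t^γ * (1+t)^4)
    have hr : 2 + 3 * A * (1+t)^5 + A^2 * ((1+t)^5)^2 = 2 + 3 * (A*(1+t)^5) + (A * (1+t)^5)^2 := by ring
    rw [hr]
    set r := A * (1+t)^5
    have m0 : ‖P1 t * D t‖ ≤ r * q := by rw [norm_mul]; gcongr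
    have m1 : ‖P1 t * D1 t‖ ≤ r * q := by rw [norm_mul]; gcongr
    have m2 : ‖P2 t * D t‖ ≤ r * q := by rw [norm_mul]; gcongr
    have m3 : ‖P1 t * D t + D1 t‖ ≤ r * q + q := (norm_add_le _ _).trans (by linarith)
    have m4 : ‖P1 t * (P1 t * D t + D1 t)‖ ≤ r * (r * q + q) := by rw [norm_mul]; gcongr
    have m5 : ‖P2 t * D t + P1 t * D1 t + D2 t‖ ≤ r * q + r * q + q := norm_add₃_le.trans (by linarith)
    have rq : 0 ≤ r * q := by positivity
    have rq2 : 0 ≤ r * r * q := by positivity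
    have e0 : q * (2 + 3 * r + r^2) = 2 * q + 3 * (r * q) + r * r * q := by ring
    have e1 : q ≤ q * (2 + 3 * r + r^2) := by rw [e0]; linarith
    have e2 : r * q + q ≤ q * (2 + 3 * r + r^2) := by rw [e0]; linarith
    have e3 : r * (r * q + q) + (r * q + r * q + q) ≤ q * (2 + 3 * r + r^2) := by
      rw [e0, mul_add, ← mul_assoc]; linarith
    first
      | exact b3.trans e1
      | exact m3.trans e2
      | exact (norm_add_le _ _).trans ((add_le_add m4 m5).trans e3)

end

section
open MeasureTheory Filter Topology

lemma aux_par {k k' : ℝ → ℝ} (hk : ∀ y, HasDerivAt k (k' y) y) (hk' : Continuous k') (y : ℝ) :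
    HasDerivAt (fun y => ∫ r in (0:ℝ)..1, k (r*y)) (∫ r in (0:ℝ)..1, r * k' (r*y)) y := by
  have kc : Continuous k := continuous_iff_continuousAt.2 fun y => (hk y).continuousAt
  obtain ⟨B, hB⟩ := (isCompact_Icc (a := -(|y|+1)) (b := |y|+1)).exists_bound_of_continuousOn hk'.continuousOn
  have hy0 : (0:ℝ) ∈ Set.Icc (-(|y|+1)) (|y|+1) := by
    constructor <;> linarith [abs_nonneg y]
  have hB0 : 0 ≤ B := (norm_nonneg _).trans (hB 0 hy0)
  refine (intervalIntegral.hasDerivAt_integral_of_dominated_loc_of_deriv_le (μ := volume)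
    (F := fun y r => k (r*y)) (F' := fun y r => r * k' (r*y)) (bound := fun _ => B)
    (Metric.ball_mem_nhds y one_pos) ?_ ?_ ?_ ?_ ?_ ?_).2
  · filter_upwards with z
    exact (kc.comp (continuous_id.mul continuous_const)).aestronglyMeasurable
  · exact (kc.comp (continuous_id.mul continuous_const)).intervalIntegrable _ _
  · exact (continuous_id.mul (hk'.comp (continuous_id.mul continuous_const))).aestronglyMeasurable
  · filter_upwards with r hr z hz
    rw [Set.uIoc_of_le zero_le_one] at hr
    have h1 : |r * z| ≤ |y| + 1 := by
      rw [abs_mul, abs_of_pos hr.1]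
      rw [Metric.mem_ball, Real.dist_eq] at hz
      have := abs_sub_abs_le_abs_sub z y
      nlinarith [abs_nonneg z, hr.2, hr.1]
    have := hB (r*z) (abs_le.1 h1)
    rw [norm_mul, Real.norm_of_nonneg hr.1.le]
    nlinarith [norm_nonneg (k' (r*z)), hr.2, hr.1]
  · exact intervalIntegrable_const
  · filter_upwards with r hr z hz
    have := (hk (r*z)).comp z ((hasDerivAt_id z).const_mul r)
    simp only [mul_one] at this
    convert! this using 1
    ring

lemma aux_par2 {k k' : ℝ → ℝ} (hk : ∀ y, HasDerivAt k (k' y) y) (hk' : Continuous k') (y : ℝ) :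
    y * ∫ r in (0:ℝ)..1, k' (r*y) = k y - k 0 := by
  have := intervalIntegral.mul_integral_comp_mul_right (a := 0) (b := 1) (f := k') y
  rw [this, zero_mul, one_mul]
  exact intervalIntegral.integral_eq_sub_of_hasDerivAt (fun x _ => hk x) (hk'.intervalIntegrable _ _)

noncomputable def eE (y : ℝ) : ℝ := ∫ r in (0:ℝ)..1, Real.exp (r*y)
noncomputable def eE1 (y : ℝ) : ℝ := ∫ r in (0:ℝ)..1, r * Real.exp (r*y)
noncomputable def sS (y : ℝ) : ℝ := ∫ r in (0:ℝ)..1, Real.cos (r*y)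
noncomputable def sS1 (y : ℝ) : ℝ := ∫ r in (0:ℝ)..1, r * (-Real.sin (r*y))

lemma aux_eE (y : ℝ) : HasDerivAt eE (eE1 y) y := aux_par Real.hasDerivAt_exp Real.continuous_exp y
lemma aux_sS (y : ℝ) : HasDerivAt sS (sS1 y) y := aux_par Real.hasDerivAt_cos Real.continuous_sin.neg y
lemma aux_eE_mul (y : ℝ) : y * eE y = Real.exp y - 1 := by
  have := aux_par2 Real.hasDerivAt_exp Real.continuous_exp y
  rwa [Real.exp_zero] at this
lemma aux_sS_mul (y : ℝ) : y * sS y = Real.sin y := by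
  have := aux_par2 Real.hasDerivAt_sin Real.continuous_cos y
  rwa [Real.sin_zero, sub_zero] at this
lemma aux_eE_zero : eE 0 = 1 := by simp [eE]
lemma aux_sS_zero : sS 0 = 1 := by simp [sS]
lemma aux_eE1_zero : eE1 0 = 1/2 := by simp [eE1]
lemma aux_eE1_mul (y : ℝ) : y^2 * eE1 y = (y-1) * Real.exp y + 1 := by
  have h1 : HasDerivAt (fun y => y * eE y) (1 * eE y + y * eE1 y) y := (hasDerivAt_id y).mul (aux_eE y)
  have h2 : HasDerivAt (fun y => y * eE y) (Real.exp y) y := by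
    simp_rw [aux_eE_mul]
    exact (Real.hasDerivAt_exp y).sub_const 1
  have h3 := h1.unique h2
  have h4 := aux_eE_mul y
  have : y * (y * eE1 y) = y * Real.exp y - y * eE y := by rw [← h3]; ring
  rw [pow_two, mul_assoc, this, h4]; ring
lemma aux_exp_bd {r y : ℝ} (h0 : 0 ≤ r) (h1 : r ≤ 1) : Real.exp (r*y) ≤ 1 + Real.exp y := by
  rcases le_total y 0 with h | h
  · have : Real.exp (r*y) ≤ 1 := by rw [Real.exp_le_one_iff]; exact mul_nonpos_of_nonneg_of_nonpos h0 h
    linarith [Real.exp_pos y]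
  · have : Real.exp (r*y) ≤ Real.exp y := by rw [Real.exp_le_exp]; nlinarith
    linarith
lemma aux_eE_bd (y : ℝ) : |eE y| ≤ 1 + Real.exp y := by
  have := intervalIntegral.norm_integral_le_of_norm_le_const (a := 0) (b := 1) (C := 1 + Real.exp y) (f := fun r => Real.exp (r*y)) (by
    intro r hr
    rw [Set.uIoc_of_le zero_le_one] at hr
    rw [Real.norm_of_nonneg (Real.exp_pos _).le]
    exact aux_exp_bd hr.1.le hr.2)
  simpa [eE] using this
lemma aux_eE1_bd (y : ℝ) : |eE1 y| ≤ 1 + Real.exp y := by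
  have := intervalIntegral.norm_integral_le_of_norm_le_const (a := 0) (b := 1) (C := 1 + Real.exp y) (f := fun r => r * Real.exp (r*y)) (by
    intro r hr
    rw [Set.uIoc_of_le zero_le_one] at hr
    rw [norm_mul, Real.norm_of_nonneg (Real.exp_pos _).le, Real.norm_of_nonneg hr.1.le]
    refine le_trans ?_ (aux_exp_bd hr.1.le hr.2)
    nlinarith [Real.exp_pos (r*y), hr.2])
  simpa [eE1] using this
lemma aux_sS1_bd (y : ℝ) : |sS1 y| ≤ 1 := by
  have := intervalIntegral.norm_integral_le_of_norm_le_const (a := 0) (b := 1) (C := 1) (f := fun r => r * (-Real.sin (r*y))) (by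
    intro r hr
    rw [Set.uIoc_of_le zero_le_one] at hr
    rw [norm_mul, norm_neg, Real.norm_of_nonneg hr.1.le, Real.norm_eq_abs]
    have := Real.abs_sin_le_one (r*y)
    nlinarith [abs_nonneg (Real.sin (r*y)), hr.2, hr.1])
  simpa [sS1] using this
lemma aux_eE_ne (y : ℝ) : eE y ≠ 0 := by
  intro h
  have := aux_eE_mul y
  rw [h, mul_zero] at this
  have h2 : y = 0 := by
    have : Real.exp y = 1 := by linarith
    simpa using this
  rw [h2, aux_eE_zero] at h
  exact one_ne_zero h
lemma aux_sS_pos {y : ℝ} (h : |y| < Real.pi) : 0 < sS y := by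
  have hm := aux_sS_mul y
  rw [abs_lt] at h
  rcases lt_trichotomy y 0 with h0 | h0 | h0
  · have := Real.sin_neg_of_neg_of_neg_pi_lt h0 h.1
    rw [← hm] at this
    nlinarith
  · rw [h0, aux_sS_zero]; exact one_pos
  · have := Real.sin_pos_of_pos_of_lt_pi h0 h.2
    rw [← hm] at this
    nlinarith

noncomputable def tT (a : ℝ) : ℝ := 2 / Real.pi * (Real.cos (Real.pi/2*(a-1)) / sS (Real.pi/2*(a-1)))
noncomputable def tT1 (a : ℝ) : ℝ := (-Real.sin (Real.pi/2*(a-1)) * sS (Real.pi/2*(a-1)) - Real.cos (Real.pi/2*(a-1)) * sS1 (Real.pi/2*(a-1))) / sS (Real.pi/2*(a-1))^2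
noncomputable def wW (a s : ℝ) : ℝ := s * Real.log s * eE ((a-1) * Real.log s)
noncomputable def wW1 (a s : ℝ) : ℝ := s * Real.log s^2 * eE1 ((a-1) * Real.log s)

lemma aux_u_lt {a : ℝ} (ha : a ∈ Set.Ioo (0:ℝ) 2) : |Real.pi/2*(a-1)| < Real.pi/2 := by
  have := Real.pi_pos
  rw [abs_mul, abs_of_pos (by positivity)]
  have : |a-1| < 1 := by rw [abs_lt]; constructor <;> linarith [ha.1, ha.2]
  nlinarith

lemma aux_S_pos {a : ℝ} (ha : a ∈ Set.Ioo (0:ℝ) 2) : 0 < sS (Real.pi/2*(a-1)) :=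
  aux_sS_pos ((aux_u_lt ha).trans (by linarith [Real.pi_pos]))

lemma aux_tT {a : ℝ} (ha : a ∈ Set.Ioo (0:ℝ) 2) : HasDerivAt tT (tT1 a) a := by
  have hl : HasDerivAt (fun a : ℝ => Real.pi/2*(a-1)) (Real.pi/2) a := by
    simpa using ((hasDerivAt_id a).sub_const 1).const_mul (Real.pi/2)
  have h1 := (Real.hasDerivAt_cos (Real.pi/2*(a-1))).comp a hl
  have h2 := (aux_sS (Real.pi/2*(a-1))).comp a hl
  have h3 := (h1.div h2 (aux_S_pos ha).ne').const_mul (2/Real.pi)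
  convert! h3 using 1
  rw [tT1]
  simp only [Function.comp]
  have := (aux_S_pos ha).ne'
  have := Real.pi_pos.ne'
  field_simp

lemma aux_tT_ne {a : ℝ} (ha : a ∈ Set.Ioo (0:ℝ) 2) : tT a ≠ 0 := by
  have h1 : 0 < Real.cos (Real.pi/2*(a-1)) := by
    have := abs_lt.1 (aux_u_lt ha)
    exact Real.cos_pos_of_mem_Ioo ⟨by linarith [this.1], this.2⟩
  have := aux_S_pos ha
  have := Real.pi_pos
  unfold tT
  positivity

lemma aux_tT_one : tT 1 = 2/Real.pi := by simp [tT, aux_sS_zero]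

/-- local bound -/
lemma aux_tT_loc {a : ℝ} (ha : a ∈ Set.Ioo (0:ℝ) 2) : ∃ K, ∀ᶠ b in 𝓝 a, |tT b| ≤ K ∧ |tT1 b| ≤ K := by
  have hc : ContinuousAt (fun b : ℝ => sS (Real.pi/2*(b-1))) a := by
    have hl : HasDerivAt (fun a : ℝ => Real.pi/2*(a-1)) (Real.pi/2) a := by
      simpa using ((hasDerivAt_id a).sub_const 1).const_mul (Real.pi/2)
    exact ((aux_sS (Real.pi/2*(a-1))).comp a hl).continuousAt
  set m := sS (Real.pi/2*(a-1))/2 with hm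
  have hp := aux_S_pos ha
  have hm0 : 0 < m := by rw [hm]; linarith
  have ev : ∀ᶠ b in 𝓝 a, m < sS (Real.pi/2*(b-1)) := hc.eventually_const_lt (by rw [hm]; linarith)
  have hsb : ∀ᶠ b in 𝓝 a, |tT b| < |tT a| + 1 := by
    have := (aux_tT ha).continuousAt.abs
    exact this.eventually_lt_const (by linarith)
  refine ⟨|tT a| + 1 + (1/m + 1/m^2), ?_⟩
  filter_upwards [ev, hsb] with b h1 h2
  have hS : 0 < sS (Real.pi/2*(b-1)) := hm0.trans h1
  constructor
  · have : 0 < 1/m + 1/m^2 := by positivity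
    linarith
  · have h3 : |tT1 b| ≤ 1/m + 1/m^2 := by
      unfold tT1
      rw [sub_div, pow_two]
      refine (abs_sub _ _).trans ?_
      set u := Real.pi/2*(b-1)
      rw [mul_div_mul_right _ _ hS.ne', abs_div, abs_div, abs_neg, abs_mul, abs_of_pos hS, abs_mul, abs_of_pos hS]
      have c1 := Real.abs_sin_le_one u
      have c2 := Real.abs_cos_le_one u
      have c3 := aux_sS1_bd u
      refine add_le_add ?_ ?_
      · exact div_le_div₀ zero_le_one c1 hm0 h1.le
      · refine div_le_div₀ zero_le_one ?_ (by positivity) (by nlinarith)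
        nlinarith [abs_nonneg (Real.cos u), abs_nonneg (sS1 u)]
    linarith [abs_nonneg (tT a)]

lemma aux_wW_mul {a s : ℝ} (hs : 0 < s) : (a-1) * wW a s = s^a - s := by
  have := aux_eE_mul ((a-1) * Real.log s)
  have h2 : Real.exp ((a-1) * Real.log s) * s = s^a := by
    rw [mul_comm (a-1), ← Real.rpow_def_of_pos hs, Real.rpow_sub hs, Real.rpow_one, div_mul_cancel₀ _ hs.ne']
  rw [wW, ← h2]
  linear_combination s * this

lemma aux_wW1_mul {a s : ℝ} (hs : 0 < s) : (a-1)^2 * wW1 a s = ((a-1)*Real.log s - 1) * s^a + s := by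
  have := aux_eE1_mul ((a-1) * Real.log s)
  have h2 : Real.exp ((a-1) * Real.log s) * s = s^a := by
    rw [mul_comm (a-1), ← Real.rpow_def_of_pos hs, Real.rpow_sub hs, Real.rpow_one, div_mul_cancel₀ _ hs.ne']
  rw [wW1, ← h2]
  linear_combination s * this

lemma aux_wW_form (a : ℝ) : ∃ p0 p1 q1 : ℝ, ∀ s, 0 < s → wW a s = p0 * s^a + s * (p1 + q1 * Real.log s) := by
  by_cases h : a = 1
  · refine ⟨0, 0, 1, fun s hs => ?_⟩
    simp [wW, h, aux_eE_zero]
  · have h' : a - 1 ≠ 0 := sub_ne_zero.2 h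
    refine ⟨1/(a-1), -1/(a-1), 0, fun s hs => ?_⟩
    have := aux_wW_mul (a := a) hs
    field_simp
    linear_combination this

lemma aux_wW1_form (a : ℝ) : ∃ p0 q0 p1 r1 : ℝ, ∀ s, 0 < s → wW1 a s = s^a * (p0 + q0 * Real.log s) + s * (p1 + r1 * Real.log s^2) := by
  by_cases h : a = 1
  · refine ⟨0, 0, 0, 1/2, fun s hs => ?_⟩
    simp [wW1, h, aux_eE1_zero]
    ring
  · have h' : a - 1 ≠ 0 := sub_ne_zero.2 h
    refine ⟨-1/(a-1)^2, 1/(a-1), 1/(a-1)^2, 0, fun s hs => ?_⟩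
    have := aux_wW1_mul (a := a) hs
    field_simp
    linear_combination this

lemma aux_wW_deriv (a s : ℝ) : HasDerivAt (fun a => wW a s) (wW1 a s) a := by
  have hl : HasDerivAt (fun a : ℝ => (a-1) * Real.log s) (Real.log s) a := by
    simpa using ((hasDerivAt_id a).sub_const 1).mul_const (Real.log s)
  have := ((aux_eE ((a-1) * Real.log s)).comp a hl).const_mul (s * Real.log s)
  convert! this using 1
  rw [wW1]; ring

lemma aux_psi_pos {θ : Fin 4 → ℝ} (hθ : θ ∈ ThetaInt) {t : ℝ} (ht : 0 < t) :
    psiM θ t = ((-((θ 1*t)^(θ 2)) : ℝ) : ℂ) - Complex.I * ((θ 3 * tT (θ 2) * wW (θ 2) (θ 1*t) : ℝ) : ℂ) + Complex.I * ((θ 0*t : ℝ) : ℂ) := by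
  have hs : 0 < θ 1 * t := mul_pos hθ.1 ht
  by_cases h : θ 2 = 1
  · rw [psiM, if_pos h, h, aux_tT_one, wW, sub_self, zero_mul, aux_eE_zero, abs_of_pos hs, Real.rpow_one]
    congr 4
    ring
  · rw [aux_psi_ne hθ h, abs_of_pos hs, Real.sign_of_pos hs]
    congr 4
    have h' : θ 2 - 1 ≠ 0 := sub_ne_zero.2 h
    have hw := aux_wW_mul (a := θ 2) hs
    have hS := (aux_S_pos hθ.2.1).ne'
    have hS2 := aux_sS_mul (Real.pi/2*(θ 2 - 1))
    have hpi := Real.pi_pos.ne'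
    have htan : Real.tan (Real.pi * θ 2/2) * (θ 2 - 1) = - tT (θ 2) := by
      have : Real.pi * θ 2/2 = Real.pi/2*(θ 2 - 1) + Real.pi/2 := by ring
      rw [this, Real.tan_eq_sin_div_cos, Real.sin_add_pi_div_two, Real.cos_add_pi_div_two, ← hS2, tT]
      field_simp
    rw [one_mul, show θ 1 * t - (θ 1 * t)^(θ 2) = -((θ 2 - 1) * wW (θ 2) (θ 1 * t)) by rw [hw]; ring]
    linear_combination (-θ 3 * wW (θ 2) (θ 1 * t)) * htan

end

section
open MeasureTheory Filter Topology

lemma aux_psi_neg (θ : Fin 4 → ℝ) (t : ℝ) : psiM θ (-t) = (starRingEnd ℂ) (psiM θ t) := by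
  unfold psiM
  by_cases h : θ 2 = 1
  · simp only [h, if_true, mul_neg, abs_neg, map_add, map_sub, map_mul, Complex.conj_ofReal, Complex.conj_I]
    push_cast
    ring
  · simp only [h, if_false, mul_neg, abs_neg, map_add, map_mul, map_one, Complex.conj_ofReal, Complex.conj_I, Real.sign_neg]
    push_cast
    ring

lemma aux_ker_norm (t x : ℝ) : ‖Complex.exp (-Complex.I * t * x)‖ = 1 := by
  rw [show -Complex.I * t * x = ((-(t*x) : ℝ):ℂ) * Complex.I by push_cast; ring, Complex.norm_exp_ofReal_mul_I]

lemma aux_fint {θ : Fin 4 → ℝ} (hθ : θ ∈ ThetaInt) (x : ℝ) :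
    Integrable (fun t : ℝ => Complex.exp (-Complex.I * (t : ℂ) * (x : ℂ)) * phiM θ t) := by
  have h := aux_phi_int hθ
  refine (h.bdd_mul (c := 1) (f := fun t : ℝ => Complex.exp (-Complex.I * (t : ℂ) * (x : ℂ))) ?_ ?_)
  · exact Continuous.aestronglyMeasurable (by fun_prop)
  · filter_upwards with t using (aux_ker_norm t x).le

lemma aux_fM_half {θ : Fin 4 → ℝ} (hθ : θ ∈ ThetaInt) (x : ℝ) :
    fM θ x = (1/Real.pi) * (∫ t in Set.Ioi (0:ℝ), Complex.exp (-Complex.I * (t : ℂ) * (x : ℂ)) * phiM θ t).re := by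
  have hi := aux_fint hθ x
  unfold fM
  set g := fun t : ℝ => Complex.exp (-Complex.I * (t : ℂ) * (x : ℂ)) * phiM θ t with hg
  have hneg : ∀ t, g (-t) = (starRingEnd ℂ) (g t) := by
    intro t
    simp only [hg, phiM]
    rw [map_mul, ← Complex.exp_conj, ← Complex.exp_conj, aux_psi_neg]
    congr 2
    simp only [map_mul, map_neg, Complex.conj_I, Complex.conj_ofReal, Complex.ofReal_neg]
    ring
  have h1 : ∫ t, g t = (∫ t in Set.Iic (0:ℝ), g t) + ∫ t in Set.Ioi (0:ℝ), g t := by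
    rw [← Set.compl_Iic, integral_add_compl measurableSet_Iic hi]
  have h2 : ∫ t in Set.Iic (0:ℝ), g t = (starRingEnd ℂ) (∫ t in Set.Ioi (0:ℝ), g t) := by
    have := integral_comp_neg_Ioi (0:ℝ) g
    rw [neg_zero] at this
    rw [← this]
    simp_rw [hneg]
    exact integral_conj
  rw [h1, h2, Complex.add_re, Complex.conj_re]
  field_simp
  ring

lemma aux_fP_gen {θ : Fin 4 → ℝ} (hθ : θ ∈ ThetaInt) (i : Fin 4) {γ C c a : ℝ} (hγ0 : 0 < γ) (hγ1 : γ < 1)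
    (hc : 0 < c) (ha : 0 < a) {D : ℝ → ℝ → ℂ} {U : Set ℝ} (hU : U ∈ 𝓝 (θ i))
    (hUθ : ∀ s ∈ U, Function.update θ i s ∈ ThetaInt)
    (hD : ∀ s ∈ U, ∀ t, 0 < t → HasDerivAt (fun s => psiM (Function.update θ i s) t) (D s t) s)
    (hDb : ∀ s ∈ U, ∀ t, 0 < t → ‖D s t‖ ≤ C * (t^γ * (1+t)^4))
    (he : ∀ s ∈ U, ∀ t, 0 < t → (c*t)^a - 1 ≤ ((Function.update θ i s) 1 * t)^((Function.update θ i s) 2))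
    (hDc : ContinuousOn (D (θ i)) (Set.Ioi 0)) (x : ℝ) :
    fP i θ x = (1/Real.pi) * (∫ t in Set.Ioi (0:ℝ), phiM θ t * D (θ i) t * Complex.exp (-Complex.I * t * x)).re := by
  have hmem : θ i ∈ U := mem_of_mem_nhds hU
  have hC : 0 ≤ C := by
    have := (norm_nonneg _).trans (hDb _ hmem 1 one_pos)
    by_contra hc
    push Not at hc
    have h2 : (0:ℝ) < (1^γ * (1+1)^4) := by positivity
    nlinarith
  obtain ⟨K, hK0, hK⟩ := aux_poly_exp hc ha 6
  have hup : Function.update θ i (θ i) = θ := Function.update_eq_self i θ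
  have key := hasDerivAt_integral_of_dominated_loc_of_deriv_le (μ := volume.restrict (Set.Ioi (0:ℝ)))
    (F := fun s t => Complex.exp (-Complex.I * (t : ℂ) * (x : ℂ)) * phiM (Function.update θ i s) t)
    (F' := fun s t => Complex.exp (-Complex.I * (t : ℂ) * (x : ℂ)) * (phiM (Function.update θ i s) t * D s t))
    (bound := fun t => (C * Real.exp 1 * K) * (t^γ/(1+t)^2)) (x₀ := θ i) hU ?_ ?_ ?_ ?_ ?_ ?_
  · have h1 := key.2
    have h2 : HasDerivAt (fun s => fM (Function.update θ i s) x)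
        ((1/Real.pi) * (∫ t in Set.Ioi (0:ℝ), phiM θ t * D (θ i) t * Complex.exp (-Complex.I * t * x)).re) (θ i) := by
      have h3 := (Complex.reCLM.hasFDerivAt.comp_hasDerivAt (θ i) h1).const_mul (1/Real.pi)
      have h4 : HasDerivAt (fun s => fM (Function.update θ i s) x) _ (θ i) := h3.congr_of_eventuallyEq (by
        filter_upwards [hU] with s hs
        rw [aux_fM_half (hUθ s hs)]
        rfl)
      convert! h4 using 1
      rw [hup]
      simp only [Complex.reCLM_apply]
      congr 2
      refine integral_congr_ae ?_
      filter_upwards with t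
      ring
    exact h2.deriv
  · filter_upwards [hU] with s hs
    exact (aux_fint (hUθ s hs) x).aestronglyMeasurable.restrict
  · rw [hup]
    exact (aux_fint hθ x).integrableOn
  · rw [hup]
    have : ContinuousOn (fun t : ℝ => Complex.exp (-Complex.I * (t : ℂ) * (x : ℂ)) * (phiM θ t * D (θ i) t)) (Set.Ioi 0) := by
      refine ContinuousOn.mul (by fun_prop) (ContinuousOn.mul ?_ hDc)
      exact (Complex.continuous_exp.comp (aux_psi_cont hθ)).continuousOn
    exact this.aestronglyMeasurable measurableSet_Ioi
  · filter_upwards [ae_restrict_mem measurableSet_Ioi] with t ht s hs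
    have ht : 0 < t := ht
    rw [norm_mul, aux_ker_norm, one_mul, norm_mul, aux_phi_norm, abs_of_pos (mul_pos (hUθ s hs).1 ht)]
    have h1 := he s hs t ht
    have h2 : Real.exp (-((Function.update θ i s) 1 * t)^((Function.update θ i s) 2)) ≤ Real.exp 1 * Real.exp (-(c*t)^a) := by
      rw [← Real.exp_add, Real.exp_le_exp]; linarith
    have h3 := hK t ht
    rw [← mul_div_assoc, le_div_iff₀ (by positivity)]
    calc _ ≤ Real.exp 1 * Real.exp (-(c*t)^a) * (C * (t^γ * (1+t)^4)) * (1+t)^2 := by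
          gcongr
          exact hDb s hs t ht
      _ = C * Real.exp 1 * t^γ * ((1+t)^6 * Real.exp (-(c*t)^a)) := by ring
      _ ≤ C * Real.exp 1 * t^γ * K := by gcongr
      _ = _ := by ring
  · exact (aux_pint (by linarith) hγ1).const_mul _
  · filter_upwards [ae_restrict_mem measurableSet_Ioi] with t ht s hs
    have := (hD s hs t ht).cexp.const_mul (Complex.exp (-Complex.I * (t : ℂ) * (x : ℂ)))
    exact this

end

section
open MeasureTheory Filter Topology

noncomputable def dD (θ : Fin 4 → ℝ) : Fin 4 → ℝ → ℂ := ![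
  fun t => Complex.I * (t:ℂ),
  fun t => ((-(θ 2 * (θ 1*t)^(θ 2) / θ 1) : ℝ) : ℂ) - Complex.I * ((θ 3 * tT (θ 2) * (wW (θ 2) (θ 1*t) + (θ 1*t)^(θ 2)) / θ 1 : ℝ) : ℂ),
  fun t => ((-(Real.log (θ 1*t) * (θ 1*t)^(θ 2)) : ℝ) : ℂ) - Complex.I * ((θ 3 * (tT1 (θ 2) * wW (θ 2) (θ 1*t) + tT (θ 2) * wW1 (θ 2) (θ 1*t)) : ℝ) : ℂ),
  fun t => -Complex.I * ((tT (θ 2) * wW (θ 2) (θ 1*t) : ℝ) : ℂ)]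

lemma aux_wW_ds {a s : ℝ} (hs : 0 < s) : HasDerivAt (fun s => wW a s) ((wW a s + s^a)/s) s := by
  have d2 := Real.hasDerivAt_log hs.ne'
  have h1 := (aux_eE ((a-1) * Real.log s)).comp s (d2.const_mul (a-1))
  have h := ((hasDerivAt_id s).mul d2).mul h1
  convert! h using 1
  have k1 : eE ((a-1) * Real.log s) + ((a-1) * Real.log s) * eE1 ((a-1) * Real.log s) = Real.exp ((a-1) * Real.log s) := by
    have e1 : HasDerivAt (fun y => y * eE y) (1 * eE ((a-1) * Real.log s) + ((a-1) * Real.log s) * eE1 ((a-1) * Real.log s)) ((a-1) * Real.log s) := (hasDerivAt_id _).mul (aux_eE _)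
    have e2 : HasDerivAt (fun y => y * eE y) (Real.exp ((a-1) * Real.log s)) ((a-1) * Real.log s) := by
      simp_rw [aux_eE_mul]
      exact (Real.hasDerivAt_exp _).sub_const 1
    have := e1.unique e2
    rwa [one_mul] at this
  have h2 : Real.exp ((a-1) * Real.log s) * s = s^a := by
    rw [mul_comm (a-1), ← Real.rpow_def_of_pos hs, Real.rpow_sub hs, Real.rpow_one, div_mul_cancel₀ _ hs.ne']
  rw [← h2, ← k1, wW]
  simp only [Function.comp, id, Pi.mul_apply]
  field_simp
  ring

lemma aux_nice_wW {γ a : ℝ} (h0 : γ < a) (h1 : γ < 1) (hγ : 0 < γ) (h2 : a < 2) : NiceC γ (fun s => (wW a s : ℂ)) := by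
  obtain ⟨p0, p1, q1, h⟩ := aux_wW_form a
  refine aux_nice_congr (aux_nice_add (aux_nice_real (γ := γ) (a := a) h0 (by linarith) p0 0 0) (aux_nice_real (γ := γ) (a := 1) h1 (by linarith) p1 q1 0)) ?_
  intro s hs
  rw [h s hs, Real.rpow_one, ← Complex.ofReal_add]
  congr 1
  ring

lemma aux_nice_wW1 {γ a : ℝ} (h0 : γ < a) (h1 : γ < 1) (hγ : 0 < γ) (h2 : a < 2) : NiceC γ (fun s => (wW1 a s : ℂ)) := by
  obtain ⟨p0, q0, p1, r1, h⟩ := aux_wW1_form a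
  refine aux_nice_congr (aux_nice_add (aux_nice_real (γ := γ) (a := a) h0 (by linarith) p0 q0 0) (aux_nice_real (γ := γ) (a := 1) h1 (by linarith) p1 0 r1)) ?_
  intro s hs
  rw [h s hs, Real.rpow_one, ← Complex.ofReal_add]
  congr 1
  ring

lemma aux_nice_t {γ : ℝ} (h1 : γ < 1) (hγ : 0 < γ) : NiceC γ (fun t => (t : ℂ)) := by
  refine aux_nice_congr (aux_nice_real (γ := γ) (a := 1) h1 (by linarith) 1 0 0) ?_
  intro s hs
  simp

lemma aux_nice_pow {γ a : ℝ} (h0 : γ < a) (hγ : 0 < γ) (h2 : a < 2) : NiceC γ (fun s => ((s^a : ℝ) : ℂ)) := by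
  refine aux_nice_congr (aux_nice_real (γ := γ) (a := a) h0 (by linarith) 1 0 0) ?_
  intro s hs
  simp

lemma aux_nice_plog {γ a : ℝ} (h0 : γ < a) (hγ : 0 < γ) (h2 : a < 2) : NiceC γ (fun s => ((Real.log s * s^a : ℝ) : ℂ)) := by
  refine aux_nice_congr (aux_nice_real (γ := γ) (a := a) h0 (by linarith) 0 1 0) ?_
  intro s hs
  simp [mul_comm]

lemma aux_nice_psi {θ : Fin 4 → ℝ} (hθ : θ ∈ ThetaInt) {γ : ℝ} (h0 : 0 < γ) (h1 : γ < 1) (h2 : γ < θ 2) :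
    NiceC γ (psiM θ) := by
  have hα := hθ.2.1.2
  refine aux_nice_congr (aux_nice_add (aux_nice_add (aux_nice_smul (-1) (aux_nice_comp hθ.1 (aux_nice_pow h2 h0 hα)))
    (aux_nice_smul (-Complex.I * (θ 3 * tT (θ 2) : ℝ)) (aux_nice_comp hθ.1 (aux_nice_wW h2 h1 h0 hα)))) (aux_nice_smul (Complex.I * (θ 0 : ℝ)) (aux_nice_t h1 h0))) ?_
  intro t ht
  rw [aux_psi_pos hθ ht]
  push_cast
  ring

lemma aux_nice_dD {θ : Fin 4 → ℝ} (hθ : θ ∈ ThetaInt) {γ : ℝ} (h0 : 0 < γ) (h1 : γ < 1) (h2 : γ < θ 2) (i : Fin 4) :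
    NiceC γ (dD θ i) := by
  have hα := hθ.2.1.2
  have hσ : (θ 1 : ℂ) ≠ 0 := by exact_mod_cast hθ.1.ne'
  have nw := aux_nice_comp hθ.1 (aux_nice_wW h2 h1 h0 hα)
  have nw1 := aux_nice_comp hθ.1 (aux_nice_wW1 h2 h1 h0 hα)
  have np := aux_nice_comp hθ.1 (aux_nice_pow h2 h0 hα)
  have nl := aux_nice_comp hθ.1 (aux_nice_plog h2 h0 hα)
  fin_cases i
  · exact aux_nice_smul Complex.I (aux_nice_t h1 h0)
  · refine aux_nice_congr (aux_nice_add (aux_nice_smul (-(θ 2)/θ 1 - Complex.I * (θ 3 * tT (θ 2)/θ 1 : ℝ)) np)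
      (aux_nice_smul (-Complex.I * (θ 3 * tT (θ 2)/θ 1 : ℝ)) nw)) ?_
    intro t ht
    simp only [dD, Fin.mk_one, Matrix.cons_val_one, Matrix.cons_val_zero]
    push_cast
    field_simp
    ring
  · refine aux_nice_congr (aux_nice_add (aux_nice_add (aux_nice_smul (-1) nl)
      (aux_nice_smul (-Complex.I * (θ 3 * tT1 (θ 2) : ℝ)) nw)) (aux_nice_smul (-Complex.I * (θ 3 * tT (θ 2) : ℝ)) nw1)) ?_
    intro t ht
    change ((-(Real.log (θ 1*t) * (θ 1*t)^(θ 2)) : ℝ) : ℂ) - Complex.I * ((θ 3 * (tT1 (θ 2) * wW (θ 2) (θ 1*t) + tT (θ 2) * wW1 (θ 2) (θ 1*t)) : ℝ) : ℂ) = _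
    push_cast
    ring
  · refine aux_nice_congr (aux_nice_smul (-Complex.I * (tT (θ 2) : ℝ)) nw) ?_
    intro t ht
    change -Complex.I * ((tT (θ 2) * wW (θ 2) (θ 1*t) : ℝ) : ℂ) = _
    push_cast
    ring

lemma aux_nice_cont {γ : ℝ} {F : ℝ → ℂ} (h : NiceC γ F) : ContinuousOn F (Set.Ioi 0) := by
  obtain ⟨_, _, _, h⟩ := h
  exact fun t ht => (h t ht).1.continuousAt.continuousWithinAt

lemma aux_nice_bd {γ : ℝ} {F : ℝ → ℂ} (h : NiceC γ F) : ∃ C, 0 ≤ C ∧ ∀ t, 0 < t → ‖F t‖ ≤ C * (t^γ * (1+t)^4) := by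
  obtain ⟨_, _, C, h⟩ := h
  refine ⟨C, ?_, fun t ht => (h t ht).2.2.1⟩
  have := (norm_nonneg _).trans (h 1 one_pos).2.2.1
  by_contra hc
  push Not at hc
  have h2 : (0:ℝ) < (1^γ * (1+1)^4) := by positivity
  nlinarith

lemma aux_fP0 {θ : Fin 4 → ℝ} (hθ : θ ∈ ThetaInt) {γ : ℝ} (h0 : 0 < γ) (h1 : γ < 1) (h2 : γ < θ 2) (x : ℝ) :
    fP 0 θ x = (1/Real.pi) * (∫ t in Set.Ioi (0:ℝ), phiM θ t * dD θ 0 t * Complex.exp (-Complex.I * t * x)).re := by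
  obtain ⟨C, hC, hb⟩ := aux_nice_bd (aux_nice_dD hθ h0 h1 h2 0)
  refine aux_fP_gen (D := fun _ t => dD θ 0 t) (c := θ 1) (a := θ 2) (U := Set.univ) hθ 0 h0 h1 hθ.1 hθ.2.1.1 univ_mem ?_ ?_ (fun s _ t ht => hb t ht) ?_ (aux_nice_cont (aux_nice_dD hθ h0 h1 h2 0)) x
  · intro s _
    simpa [ThetaInt] using hθ
  · intro s _ t ht
    have hm : ∀ s, Function.update θ 0 s ∈ ThetaInt := fun s => by simpa [ThetaInt] using hθ
    simp_rw [aux_psi_pos (hm _) ht]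
    simp only [Function.update_self, ne_eq, Fin.reduceEq, not_false_eq_true, Function.update_of_ne]
    have := (((hasDerivAt_id s).mul_const t).ofReal_comp.const_mul Complex.I).const_add (((-((θ 1*t)^(θ 2)) : ℝ) : ℂ) - Complex.I * ((θ 3 * tT (θ 2) * wW (θ 2) (θ 1*t) : ℝ) : ℂ))
    convert! this using 1
    simp [dD]
  · intro s _ t ht
    simp

lemma aux_fP3 {θ : Fin 4 → ℝ} (hθ : θ ∈ ThetaInt) {γ : ℝ} (h0 : 0 < γ) (h1 : γ < 1) (h2 : γ < θ 2) (x : ℝ) :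
    fP 3 θ x = (1/Real.pi) * (∫ t in Set.Ioi (0:ℝ), phiM θ t * dD θ 3 t * Complex.exp (-Complex.I * t * x)).re := by
  obtain ⟨C, hC, hb⟩ := aux_nice_bd (aux_nice_dD hθ h0 h1 h2 3)
  have hm : ∀ s ∈ Set.Ioo (-1:ℝ) 1, Function.update θ 3 s ∈ ThetaInt := fun s hs => by
    refine ⟨?_, ?_, ?_⟩
    · simpa using hθ.1
    · simpa using hθ.2.1
    · simpa using hs
  refine aux_fP_gen (D := fun _ t => dD θ 3 t) (c := θ 1) (a := θ 2) (U := Set.Ioo (-1:ℝ) 1) hθ 3 h0 h1 hθ.1 hθ.2.1.1 (isOpen_Ioo.mem_nhds hθ.2.2) hm ?_ (fun s _ t ht => hb t ht) ?_ (aux_nice_cont (aux_nice_dD hθ h0 h1 h2 3)) x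
  · intro s hs t ht
    have hev : (fun s => psiM (Function.update θ 3 s) t) =ᶠ[𝓝 s] fun s => ((-((θ 1*t)^(θ 2)) : ℝ) : ℂ) - Complex.I * ((s * tT (θ 2) * wW (θ 2) (θ 1*t) : ℝ) : ℂ) + Complex.I * ((θ 0*t : ℝ) : ℂ) := by
      filter_upwards [isOpen_Ioo.mem_nhds hs] with u hu
      rw [aux_psi_pos (hm u hu) ht]
      simp
    refine HasDerivAt.congr_of_eventuallyEq ?_ hev
    have := ((((((hasDerivAt_id s).mul_const (tT (θ 2))).mul_const (wW (θ 2) (θ 1*t))).ofReal_comp.const_mul Complex.I)).const_sub ((-((θ 1*t)^(θ 2)) : ℝ) : ℂ)).add_const (Complex.I * ((θ 0*t : ℝ) : ℂ))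
    convert! this using 1
    change -Complex.I * ((tT (θ 2) * wW (θ 2) (θ 1*t) : ℝ) : ℂ) = _
    simp
  · intro s _ t ht
    simp

lemma aux_fP1 {θ : Fin 4 → ℝ} (hθ : θ ∈ ThetaInt) {γ : ℝ} (h0 : 0 < γ) (h1 : γ < 1) (h2 : γ < θ 2) (x : ℝ) :
    fP 1 θ x = (1/Real.pi) * (∫ t in Set.Ioi (0:ℝ), phiM θ t * dD θ 1 t * Complex.exp (-Complex.I * t * x)).re := by
  have hσ := hθ.1
  have hα := hθ.2.1.2
  have hα0 := hθ.2.1.1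
  -- bound in s
  set Q : ℝ → ℂ := fun s => ((-(θ 2 * s^(θ 2)) : ℝ) : ℂ) - Complex.I * ((θ 3 * tT (θ 2) * (wW (θ 2) s + s^(θ 2)) : ℝ) : ℂ) with hQ
  have nQ : NiceC γ Q := by
    refine aux_nice_congr (aux_nice_add (aux_nice_smul (-(θ 2) - Complex.I * (θ 3 * tT (θ 2) : ℝ)) (aux_nice_pow h2 h0 hα))
      (aux_nice_smul (-Complex.I * (θ 3 * tT (θ 2) : ℝ)) (aux_nice_wW h2 h1 h0 hα))) ?_
    intro t ht
    simp only [hQ]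
    push_cast
    ring
  obtain ⟨C, hC, hb⟩ := aux_nice_bd nQ
  have hm : ∀ s ∈ Set.Ioo (θ 1/2) (2*θ 1), Function.update θ 1 s ∈ ThetaInt := fun s hs => by
    refine ⟨?_, ?_, ?_⟩
    · simp; linarith [hs.1]
    · simpa using hθ.2.1
    · simpa using hθ.2.2
  have hD : dD θ 1 = fun t => Q (θ 1 * t) / θ 1 := by
    funext t
    have hσ : (θ 1 : ℂ) ≠ 0 := by exact_mod_cast hθ.1.ne'
    simp only [dD, Matrix.cons_val_one, Matrix.cons_val_zero, hQ]
    push_cast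
    field_simp
  have hcont := aux_nice_cont (aux_nice_dD hθ h0 h1 h2 1)
  rw [hD] at hcont
  rw [hD]
  refine aux_fP_gen (D := fun s t => Q (s * t) / s) (c := θ 1/2) (a := θ 2) (U := Set.Ioo (θ 1/2) (2*θ 1)) (C := C * ((2*θ 1)^γ * (1+2*θ 1)^4) / (θ 1/2)) hθ 1 h0 h1 (by linarith) hα0 (isOpen_Ioo.mem_nhds ⟨by linarith, by linarith⟩) hm ?_ ?_ ?_ hcont x
  · intro s hs t ht
    have hs0 : 0 < s := by linarith [hs.1]
    have hev : (fun s => psiM (Function.update θ 1 s) t) =ᶠ[𝓝 s] fun s => ((-((s*t)^(θ 2)) : ℝ) : ℂ) - Complex.I * ((θ 3 * tT (θ 2) * wW (θ 2) (s*t) : ℝ) : ℂ) + Complex.I * ((θ 0*t : ℝ) : ℂ) := by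
      filter_upwards [isOpen_Ioo.mem_nhds hs] with u hu
      rw [aux_psi_pos (hm u hu) ht]
      simp
    refine HasDerivAt.congr_of_eventuallyEq ?_ hev
    have hst : 0 < s * t := by positivity
    have hl : HasDerivAt (fun s : ℝ => s * t) t s := by simpa using (hasDerivAt_id s).mul_const t
    have e1 := ((Real.hasDerivAt_rpow_const (x := s*t) (p := θ 2) (Or.inl hst.ne')).comp s hl).neg.ofReal_comp
    have e2 := ((((aux_wW_ds (a := θ 2) hst).comp s hl).const_mul (θ 3 * tT (θ 2))).ofReal_comp).const_mul Complex.I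
    have := (e1.sub e2).add_const (Complex.I * ((θ 0*t : ℝ) : ℂ))
    convert! this using 1
    simp only [hQ]
    rw [Real.rpow_sub hst, Real.rpow_one]
    have z1 : (s:ℂ) ≠ 0 := by exact_mod_cast hs0.ne'
    have z2 : (t:ℂ) ≠ 0 := by exact_mod_cast ht.ne'
    push_cast
    field_simp
  · intro s hs t ht
    have hs0 : 0 < s := by linarith [hs.1]
    have hst : 0 < s * t := by positivity
    rw [norm_div, Complex.norm_real, Real.norm_of_nonneg hs0.le, div_mul_eq_mul_div]
    refine div_le_div₀ (by positivity) ?_ (by linarith) hs.1.le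
    refine (hb (s*t) hst).trans ?_
    rw [Real.mul_rpow hs0.le ht.le]
    have e1 : (1+s*t)^4 ≤ (1+2*θ 1)^4*(1+t)^4 := by
      rw [← mul_pow]
      gcongr
      nlinarith [hs.2]
    have e2 : s^γ ≤ (2*θ 1)^γ := Real.rpow_le_rpow hs0.le hs.2.le h0.le
    calc C * (s^γ * t^γ * (1+s*t)^4) ≤ C * ((2*θ 1)^γ * t^γ * ((1+2*θ 1)^4*(1+t)^4)) := by gcongr
      _ = _ := by ring
  · intro s hs t ht
    have : (θ 1/2 * t)^(θ 2) ≤ (s * t)^(θ 2) := by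
      gcongr
      exact hs.1.le
    simp
    linarith

lemma aux_f1 {R l : ℝ} (hR0 : 0 ≤ R) (hl0 : 0 ≤ l) : l * R ≤ R * (1 + l + l^2) := by
  nlinarith [mul_nonneg hR0 (sq_nonneg l)]
lemma aux_f2 {R l : ℝ} (hR0 : 0 ≤ R) (hl0 : 0 ≤ l) : l^2 * R ≤ R * (1 + l + l^2) := by
  nlinarith [mul_nonneg hR0 hl0]

lemma aux_fP2 {θ : Fin 4 → ℝ} (hθ : θ ∈ ThetaInt) {γ : ℝ} (h0 : 0 < γ) (h1 : γ < 1) (h2 : γ < θ 2) (x : ℝ) :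
    fP 2 θ x = (1/Real.pi) * (∫ t in Set.Ioi (0:ℝ), phiM θ t * dD θ 2 t * Complex.exp (-Complex.I * t * x)).re := by
  have hσ := hθ.1
  have hα := hθ.2.1.2
  have hα0 := hθ.2.1.1
  obtain ⟨K, hK⟩ := aux_tT_loc hθ.2.1
  set a1 := (γ + θ 2)/2 with ha1
  set a2 := (θ 2 + 2)/2 with ha2
  obtain ⟨C0, hC0, hb0⟩ := aux_mono_bd (γ := γ) (a := 1) h1 (by linarith)
  obtain ⟨C1, hC1, hb1⟩ := aux_mono_bd (γ := γ) (a := a1) (by linarith) (by linarith)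
  obtain ⟨C2, hC2, hb2⟩ := aux_mono_bd (γ := γ) (a := a2) (by linarith) (by linarith)
  set U := Set.Ioo a1 a2 ∩ {b | |tT b| ≤ K ∧ |tT1 b| ≤ K} with hU
  have hUn : U ∈ 𝓝 (θ 2) := inter_mem (isOpen_Ioo.mem_nhds ⟨by linarith, by linarith⟩) hK
  have hK0 : 0 ≤ K := (abs_nonneg _).trans (mem_of_mem_nhds hUn).2.1
  have hm' : ∀ s ∈ Set.Ioo a1 a2, Function.update θ 2 s ∈ ThetaInt := fun s hs => by
    refine ⟨?_, ?_, ?_⟩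
    · simpa using hθ.1
    · simp; constructor <;> linarith [hs.1, hs.2]
    · simpa using hθ.2.2
  have hm : ∀ s ∈ U, Function.update θ 2 s ∈ ThetaInt := fun s hs => hm' s hs.1
  have hcont := aux_nice_cont (aux_nice_dD hθ h0 h1 h2 2)
  have hps : ∀ s ∈ U, ∀ z : ℝ, 0 < z → z^s ≤ z^a1 + z^a2 := by
    intro s hs z hz
    have p1 : 0 < z^a1 := by positivity
    have p2 : 0 < z^a2 := by positivity
    rcases le_total z 1 with h | h
    · have := Real.rpow_le_rpow_of_exponent_ge hz h hs.1.1.le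
      linarith
    · have := Real.rpow_le_rpow_of_exponent_le h hs.1.2.le
      linarith
  refine aux_fP_gen (D := fun s t => ((-(Real.log (θ 1*t) * (θ 1*t)^s) : ℝ) : ℂ) - Complex.I * ((θ 3 * (tT1 s * wW s (θ 1*t) + tT s * wW1 s (θ 1*t)) : ℝ) : ℂ))
    (c := θ 1) (a := a1) (U := U) (C := ((1 + |θ 3| * (2 * K)) * (C0+C1+C2)) * (θ 1^γ * (1+θ 1)^4)) hθ 2 h0 h1 hσ (by linarith) hUn hm ?_ ?_ ?_ hcont x
  · intro s hs t ht
    have hst : 0 < θ 1 * t := by positivity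
    have hev : (fun s => psiM (Function.update θ 2 s) t) =ᶠ[𝓝 s] fun s => ((-((θ 1*t)^s) : ℝ) : ℂ) - Complex.I * ((θ 3 * (tT s * wW s (θ 1*t)) : ℝ) : ℂ) + Complex.I * ((θ 0*t : ℝ) : ℂ) := by
      filter_upwards [isOpen_Ioo.mem_nhds hs.1] with u hu
      rw [aux_psi_pos (hm' u hu) ht, mul_assoc]
      simp
    refine HasDerivAt.congr_of_eventuallyEq ?_ hev
    have hs02 : s ∈ Set.Ioo (0:ℝ) 2 := ⟨by linarith [hs.1.1], by linarith [hs.1.2]⟩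
    have e1 := ((hasDerivAt_id s).const_rpow hst).neg.ofReal_comp
    have e2 := ((((aux_tT hs02).mul (aux_wW_deriv s (θ 1*t))).const_mul (θ 3)).ofReal_comp).const_mul Complex.I
    have := (e1.sub e2).add_const (Complex.I * ((θ 0*t : ℝ) : ℂ))
    convert! this using 1
    simp [mul_comm]
  · intro s hs t ht
    have hst : 0 < θ 1 * t := by positivity
    set z := θ 1 * t with hz
    set l := |Real.log z| with hl
    have hl0 : 0 ≤ l := abs_nonneg _
    have exb : z * Real.exp ((s-1) * Real.log z) = z^s := by
      rw [mul_comm (s-1), ← Real.rpow_def_of_pos hst, Real.rpow_sub hst, Real.rpow_one, mul_div_cancel₀ _ hst.ne']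
    set R := (z^(1:ℝ) + z^a1 + z^a2) with hR
    have hzs := hps s hs z hst
    have hz1 : 0 < z^(1:ℝ) := by positivity
    have hR2 : z + z^s ≤ R := by rw [hR, Real.rpow_one]; linarith
    have hzs0 : 0 < z^s := by positivity
    have w1 : |wW s z| ≤ l * R := by
      rw [wW, abs_mul, abs_mul, abs_of_pos hst]
      have := aux_eE_bd ((s-1) * Real.log z)
      calc z * l * |eE ((s-1) * Real.log z)| ≤ z * l * (1 + Real.exp ((s-1) * Real.log z)) := by gcongr
        _ = l * (z + z^s) := by rw [← exb]; ring
        _ ≤ _ := by gcongr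
    have w2 : |wW1 s z| ≤ l^2 * R := by
      rw [wW1, abs_mul, abs_mul, abs_of_pos hst, abs_pow]
      have := aux_eE1_bd ((s-1) * Real.log z)
      calc z * l^2 * |eE1 ((s-1) * Real.log z)| ≤ z * l^2 * (1 + Real.exp ((s-1) * Real.log z)) := by gcongr
        _ = l^2 * (z + z^s) := by rw [← exb]; ring
        _ ≤ _ := by gcongr
    have w3 : ‖((-(Real.log z * z^s) : ℝ) : ℂ)‖ ≤ l * R := by
      rw [Complex.norm_real, Real.norm_eq_abs, abs_neg, abs_mul, abs_of_pos hzs0]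
      exact mul_le_mul_of_nonneg_left (le_trans (le_add_of_nonneg_left hst.le) hR2) hl0
    have w4 : ‖Complex.I * ((θ 3 * (tT1 s * wW s z + tT s * wW1 s z) : ℝ) : ℂ)‖ ≤ |θ 3| * (K * (l * R) + K * (l^2 * R)) := by
      rw [norm_mul, Complex.norm_I, one_mul, Complex.norm_real, Real.norm_eq_abs, abs_mul]
      gcongr
      refine (abs_add_le _ _).trans ?_
      rw [abs_mul, abs_mul]
      gcongr
      · exact hs.2.2
      · exact hs.2.1
    have hRb : R * (1 + l + l^2) ≤ (C0+C1+C2) * (z^γ * (1+z)^4) := by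
      have := hb0 z hst; have := hb1 z hst; have := hb2 z hst
      rw [hR]
      linarith
    have hR0 : 0 ≤ R := by rw [hR]; positivity
    have f1 : l * R ≤ R * (1 + l + l^2) := aux_f1 hR0 hl0
    have f2 : l^2 * R ≤ R * (1 + l + l^2) := aux_f2 hR0 hl0
    have hfin : z^γ * (1+z)^4 ≤ θ 1^γ * (1+θ 1)^4 * (t^γ * (1+t)^4) := by
      rw [hz, Real.mul_rpow hσ.le ht.le]
      have e1 : (1+θ 1*t)^4 ≤ (1+θ 1)^4*(1+t)^4 := by
        rw [← mul_pow]
        gcongr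
        nlinarith
      calc _ ≤ θ 1^γ * t^γ * ((1+θ 1)^4*(1+t)^4) := by gcongr
        _ = _ := by ring
    calc _ ≤ l * R + |θ 3| * (K * (l * R) + K * (l^2 * R)) := (norm_sub_le _ _).trans (add_le_add w3 w4)
      _ ≤ (R * (1 + l + l^2)) + |θ 3| * (K * (R * (1 + l + l^2)) + K * (R * (1 + l + l^2))) := by gcongr
      _ = (1 + |θ 3| * (2 * K)) * (R * (1 + l + l^2)) := by ring
      _ ≤ (1 + |θ 3| * (2 * K)) * ((C0+C1+C2) * (θ 1^γ * (1+θ 1)^4 * (t^γ * (1+t)^4))) := by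
          refine mul_le_mul_of_nonneg_left (hRb.trans ?_) (by positivity)
          gcongr
      _ = _ := by ring
  · intro s hs t ht
    have hst : 0 < θ 1 * t := by positivity
    simp only [Function.update_self, ne_eq, Fin.reduceEq, not_false_eq_true, Function.update_of_ne]
    rcases le_total (θ 1 * t) 1 with h | h
    · have : (θ 1 * t)^a1 ≤ 1 := Real.rpow_le_one hst.le h (by linarith)
      have : 0 < (θ 1 * t)^s := by positivity
      linarith
    · have := Real.rpow_le_rpow_of_exponent_le h hs.1.1.le
      linarith

lemma aux_fP_all {θ : Fin 4 → ℝ} (hθ : θ ∈ ThetaInt) {γ : ℝ} (h0 : 0 < γ) (h1 : γ < 1) (h2 : γ < θ 2) (i : Fin 4) (x : ℝ) :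
    fP i θ x = (1/Real.pi) * (∫ t in Set.Ioi (0:ℝ), phiM θ t * dD θ i t * Complex.exp (-Complex.I * t * x)).re := by
  fin_cases i
  · exact aux_fP0 hθ h0 h1 h2 x
  · exact aux_fP1 hθ h0 h1 h2 x
  · exact aux_fP2 hθ h0 h1 h2 x
  · exact aux_fP3 hθ h0 h1 h2 x

end

open MeasureTheory Filter Topology

lemma aux_four {h : ℝ → ℂ} (hi : IntegrableOn h (Set.Ioi 0)) (hc : ContinuousOn h (Set.Ioi 0))
    (hz : ∀ x : ℝ, (∫ t in Set.Ioi (0:ℝ), h t * Complex.exp (-Complex.I * t * x)).re = 0) :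
    ∀ t, 0 < t → h t = 0 := by
  intro t ht
  set h0 : ℝ → ℂ := (Set.Ioi (0:ℝ)).indicator h with hh0
  have i0 : Integrable h0 := (integrable_indicator_iff measurableSet_Ioi).2 hi
  set k2 : ℝ → ℂ := fun t => (starRingEnd ℂ) (h0 (-t)) with hk2
  have i2 : Integrable k2 := by
    have := i0.comp_neg
    exact (Complex.conjLIE.toContinuousLinearEquiv : ℂ →L[ℝ] ℂ).integrable_comp this
  set k : ℝ → ℂ := fun t => h0 t + k2 t with hk
  have ik : Integrable k := i0.add i2
  have bm : ∀ x : ℝ, ∀ f : ℝ → ℂ, Integrable f → Integrable (fun t : ℝ => f t * Complex.exp (-Complex.I * t * x)) := by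
    intro x f hf
    have := hf.bdd_mul (c := 1) (f := fun t : ℝ => Complex.exp (-Complex.I * (t : ℂ) * (x : ℂ))) (Continuous.aestronglyMeasurable (by fun_prop)) (by
      filter_upwards with t using (aux_ker_norm t x).le)
    simpa only [mul_comm] using this
  have hx : ∀ x : ℝ, ∫ t, k t * Complex.exp (-Complex.I * t * x) = 0 := by
    intro x
    have e1 : ∫ t, h0 t * Complex.exp (-Complex.I * t * x) = ∫ t in Set.Ioi (0:ℝ), h t * Complex.exp (-Complex.I * t * x) := by
      rw [← integral_indicator measurableSet_Ioi]
      congr 1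
      funext t
      by_cases htt : t ∈ Set.Ioi (0:ℝ)
      · simp [hh0, htt]
      · simp [hh0, htt]
    have e2 : ∫ t, k2 t * Complex.exp (-Complex.I * t * x) = (starRingEnd ℂ) (∫ t, h0 t * Complex.exp (-Complex.I * t * x)) := by
      rw [← integral_conj, ← integral_neg_eq_self]
      congr 1
      funext t
      simp only [hk2, neg_neg, map_mul, ← Complex.exp_conj, map_neg, Complex.conj_I, Complex.conj_ofReal]
      congr 2
      push_cast
      ring
    simp only [hk, add_mul]
    rw [integral_add (bm x h0 i0) (bm x k2 i2), e2, Complex.add_conj, e1, hz x]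
    simp
  have hF : FourierTransform.fourier k = 0 := by
    funext w
    rw [Real.fourier_real_eq_integral_exp_smul]
    rw [Pi.zero_apply, ← hx (2 * Real.pi * w)]
    congr 1
    funext v
    rw [smul_eq_mul, mul_comm]
    congr 2
    push_cast
    ring
  have ev : k =ᶠ[𝓝 t] h := by
    filter_upwards [lt_mem_nhds ht] with s hs
    have : ¬ (s < 0) := not_lt.2 hs.le
    simp [hk, hk2, hh0, hs, this]
  have hca : ContinuousAt k t := ((hc t ht).continuousAt (Ioi_mem_nhds ht)).congr ev.symm
  have := ik.fourierInv_fourier_eq (by rw [hF]; exact integrable_zero _ _ _) hca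
  rw [hF] at this
  rw [← ev.eq_of_nhds, ← this, Real.fourierInv_eq']
  simp

lemma aux_phiD_bd {θ : Fin 4 → ℝ} (hθ : θ ∈ ThetaInt) {γ : ℝ} {D : ℝ → ℂ} (hD : NiceC γ D) :
    ∃ C, ∀ t, 0 < t → ‖phiM θ t * D t‖ ≤ C * (t^γ / (1+t)^2) := by
  obtain ⟨C, hC, hb⟩ := aux_nice_bd hD
  obtain ⟨K, hK0, hK⟩ := aux_poly_exp hθ.1 hθ.2.1.1 6
  refine ⟨C * K, fun t ht => ?_⟩
  rw [norm_mul, aux_phi_norm, abs_of_pos (mul_pos hθ.1 ht), ← mul_div_assoc, le_div_iff₀ (by positivity)]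
  calc _ ≤ Real.exp (-(θ 1*t)^(θ 2)) * (C * (t^γ * (1+t)^4)) * (1+t)^2 := by
        gcongr
        exact hb t ht
    _ = C * t^γ * ((1+t)^6 * Real.exp (-(θ 1*t)^(θ 2))) := by ring
    _ ≤ C * t^γ * K := by gcongr; exact hK t ht
    _ = _ := by ring

lemma aux_phiD_cont {θ : Fin 4 → ℝ} (hθ : θ ∈ ThetaInt) {γ : ℝ} {D : ℝ → ℂ} (hD : NiceC γ D) :
    ContinuousOn (fun t => phiM θ t * D t) (Set.Ioi 0) :=
  ContinuousOn.mul (Complex.continuous_exp.comp (aux_psi_cont hθ)).continuousOn (aux_nice_cont hD)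

lemma aux_phiD_int {θ : Fin 4 → ℝ} (hθ : θ ∈ ThetaInt) {γ : ℝ} (h0 : 0 < γ) (h1 : γ < 1) {D : ℝ → ℂ} (hD : NiceC γ D) :
    IntegrableOn (fun t => phiM θ t * D t) (Set.Ioi 0) := by
  obtain ⟨C, hC⟩ := aux_phiD_bd hθ hD
  refine Integrable.mono' ((aux_pint (b := γ) (by linarith) h1).const_mul C) ((aux_phiD_cont hθ hD).aestronglyMeasurable measurableSet_Ioi) ?_
  filter_upwards [ae_restrict_mem measurableSet_Ioi] with t ht using hC t ht

lemma aux_ft_cont {μ : Measure ℝ} {g : ℝ → ℂ} (hg : Integrable g μ) :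
    Continuous (fun x : ℝ => ∫ t, g t * Complex.exp (-Complex.I * t * x) ∂μ) := by
  refine continuous_of_dominated (bound := fun t => ‖g t‖) ?_ ?_ hg.norm ?_
  · intro x
    exact hg.aestronglyMeasurable.mul (Continuous.aestronglyMeasurable (by fun_prop))
  · intro x
    filter_upwards with t
    rw [norm_mul, aux_ker_norm, mul_one]
  · filter_upwards with t
    fun_prop

lemma aux_fM_cont {θ : Fin 4 → ℝ} (hθ : θ ∈ ThetaInt) : Continuous (fM θ) := by
  have := aux_ft_cont (aux_phi_int hθ)
  unfold fM phiM
  simp only [mul_comm (Complex.exp (-Complex.I * _ * _))]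
  exact continuous_const.mul (Complex.continuous_re.comp this)

lemma aux_indep {θ : Fin 4 → ℝ} (hθ : θ ∈ ThetaInt) (v : Fin 4 → ℝ)
    (h : ∀ t, 0 < t → ∑ i, (v i : ℂ) * dD θ i t = 0) : v = 0 := by
  have hσ := hθ.1
  have he : ∀ s : ℝ, 0 < s → (v 1 * (θ 2 * s^(θ 2) / θ 1) + v 2 * (Real.log s * s^(θ 2)) = 0) ∧
      (v 0 * (s/θ 1) - v 1 * (θ 3 * tT (θ 2) * (wW (θ 2) s + s^(θ 2)) / θ 1) - v 2 * (θ 3 * (tT1 (θ 2) * wW (θ 2) s + tT (θ 2) * wW1 (θ 2) s)) - v 3 * (tT (θ 2) * wW (θ 2) s) = 0) := by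
    intro s hs
    have h1 := h (s/θ 1) (by positivity)
    rw [Fin.sum_univ_four] at h1
    have hs' : θ 1 * (s/θ 1) = s := by field_simp
    have d0 : dD θ 0 (s/θ 1) = Complex.I * ((s/θ 1 : ℝ) : ℂ) := rfl
    have d1 : dD θ 1 (s/θ 1) = ((-(θ 2 * (θ 1*(s/θ 1))^(θ 2) / θ 1) : ℝ) : ℂ) - Complex.I * ((θ 3 * tT (θ 2) * (wW (θ 2) (θ 1*(s/θ 1)) + (θ 1*(s/θ 1))^(θ 2)) / θ 1 : ℝ) : ℂ) := rfl
    have d2 : dD θ 2 (s/θ 1) = ((-(Real.log (θ 1*(s/θ 1)) * (θ 1*(s/θ 1))^(θ 2)) : ℝ) : ℂ) - Complex.I * ((θ 3 * (tT1 (θ 2) * wW (θ 2) (θ 1*(s/θ 1)) + tT (θ 2) * wW1 (θ 2) (θ 1*(s/θ 1))) : ℝ) : ℂ) := rfl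
    have d3 : dD θ 3 (s/θ 1) = -Complex.I * ((tT (θ 2) * wW (θ 2) (θ 1*(s/θ 1)) : ℝ) : ℂ) := rfl
    rw [d0, d1, d2, d3, hs'] at h1
    have hre := congrArg Complex.re h1
    have him := congrArg Complex.im h1
    simp only [Complex.add_re, Complex.add_im, Complex.sub_re, Complex.sub_im, Complex.mul_re, Complex.mul_im, Complex.neg_re, Complex.neg_im, Complex.ofReal_re, Complex.ofReal_im, Complex.I_re, Complex.I_im, Complex.zero_re, Complex.zero_im] at hre him
    constructor
    · linear_combination -hre
    · linear_combination him
  have hα := hθ.2.1.1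
  obtain ⟨a1, b1⟩ := he 1 one_pos
  obtain ⟨a2, b2⟩ := he (Real.exp 1) (Real.exp_pos 1)
  have hv1 : v 1 = 0 := by
    simp only [Real.one_rpow, Real.log_one, zero_mul, mul_zero, add_zero, mul_one] at a1
    rcases mul_eq_zero.1 a1 with h | h
    · exact h
    · exact absurd h (by positivity)
  have hv2 : v 2 = 0 := by
    rw [hv1, Real.log_exp, zero_mul, zero_add, one_mul] at a2
    rcases mul_eq_zero.1 a2 with h | h
    · exact h
    · exact absurd h (by positivity)
  have hw1 : wW (θ 2) 1 = 0 := by simp [wW]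
  have hv0 : v 0 = 0 := by
    rw [hv1, hv2, hw1] at b1
    simp at b1
    rcases b1 with h | h
    · exact h
    · exact absurd h hσ.ne'
  have hv3 : v 3 = 0 := by
    rw [hv1, hv2, hv0] at b2
    simp only [zero_mul, sub_zero, zero_sub, neg_eq_zero] at b2
    rcases mul_eq_zero.1 b2 with h | h
    · exact h
    · exfalso
      rcases mul_eq_zero.1 h with h | h
      · exact aux_tT_ne hθ.2.1 h
      · rw [wW, Real.log_exp, mul_one] at h
        exact (mul_ne_zero (Real.exp_pos 1).ne' (aux_eE_ne _)) h
  funext i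
  fin_cases i
  · exact hv0
  · exact hv1
  · exact hv2
  · exact hv3

theorem fisher_posDef :
    ∀ θ ∈ ThetaInt, (FisherInfo θ).PosDef ∧ (FisherInfo θ).det ≠ 0 := by
  intro θ hθ
  suffices hpd : (FisherInfo θ).PosDef from ⟨hpd, hpd.det_pos.ne'⟩
  have hα0 := hθ.2.1.1
  have hα2 := hθ.2.1.2
  obtain ⟨γ, hγα, hγ1, hγ2⟩ : ∃ γ : ℝ, θ 2/2 < γ ∧ γ < 1 ∧ γ < θ 2 := by
    obtain ⟨γ, h1, h2⟩ := exists_between (show θ 2/2 < min 1 (θ 2) from lt_min (by linarith) (by linarith))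
    exact ⟨γ, h1, h2.trans_le (min_le_left _ _), h2.trans_le (min_le_right _ _)⟩
  have hγ0 : 0 < γ := by linarith
  have hf := aux_fP_all hθ hγ0 hγ1 hγ2
  have hnice := aux_nice_dD hθ hγ0 hγ1 hγ2
  have hint := fun i => aux_phiD_int hθ hγ0 hγ1 (hnice i)
  have hcont : ∀ i, Continuous (fP i θ) := fun i => by
    have : fP i θ = fun x : ℝ => (1/Real.pi) * (∫ t in Set.Ioi (0:ℝ), phiM θ t * dD θ i t * Complex.exp (-Complex.I * t * x)).re := funext (hf i)
    rw [this]
    exact continuous_const.mul (Complex.continuous_re.comp (aux_ft_cont (hint i)))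
  obtain ⟨C, hC, hlow⟩ := aux_lower hθ
  have hpos : ∀ x, 0 < fM θ x := fun x => lt_of_lt_of_le (by positivity) (hlow x)
  have hfc := aux_fM_cont hθ
  have hbd : ∀ i, ∃ K, ∀ x, |fP i θ x| ≤ K * (1+|x|)^(-1-γ) := by
    intro i
    obtain ⟨K, hK⟩ := aux_main_bd hγ0 hγ1 hθ.1 hα0 (aux_nice_psi hθ hγ0 hγ1 hγ2) (hnice i) (fun t ht => by
      rw [aux_psi_re, abs_of_pos (mul_pos hθ.1 ht)])
    refine ⟨(1/Real.pi) * K, fun x => ?_⟩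
    rw [hf i x, abs_mul, abs_of_pos (by have := Real.pi_pos; positivity), mul_assoc]
    refine mul_le_mul_of_nonneg_left ((Complex.abs_re_le_norm _).trans (hK x)) (by have := Real.pi_pos; positivity)
  choose K hK using hbd
  have hcij : ∀ i j, Continuous (fun x => fP i θ x * fP j θ x / fM θ x) := fun i j =>
    ((hcont i).mul (hcont j)).div hfc (fun x => (hpos x).ne')
  have hIij : ∀ i j, Integrable (fun x => fP i θ x * fP j θ x / fM θ x) := by
    intro i j
    refine Integrable.mono' ((aux_k_int (α := 2*γ - θ 2) (by linarith)).const_mul (K i * K j / C)) (hcij i j).aestronglyMeasurable ?_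
    filter_upwards with x
    have hx : 0 < 1 + |x| := by positivity
    rw [Real.norm_eq_abs, abs_div, abs_mul, abs_of_pos (hpos x), div_le_iff₀ (hpos x)]
    have e : (1+|x|)^(-1-(2*γ-θ 2)) * (1+|x|)^(-1-θ 2) = (1+|x|)^(-1-γ) * (1+|x|)^(-1-γ) := by
      rw [← Real.rpow_add hx, ← Real.rpow_add hx]; congr 1; ring
    have k0 : ∀ i, 0 ≤ K i * (1+|x|)^(-1-γ) := fun i => (abs_nonneg _).trans (hK i x)
    have kk : ∀ i, 0 ≤ K i := fun i => by
      have := (abs_nonneg _).trans (hK i 0)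
      simpa using this
    have kki := kk i
    have kkj := kk j
    calc |fP i θ x| * |fP j θ x| ≤ (K i * (1+|x|)^(-1-γ)) * (K j * (1+|x|)^(-1-γ)) :=
          mul_le_mul (hK i x) (hK j x) (abs_nonneg _) (k0 i)
      _ = (K i * K j / C) * C * ((1+|x|)^(-1-γ) * (1+|x|)^(-1-γ)) := by field_simp
      _ = (K i * K j / C) * (1+|x|)^(-1-(2*γ-θ 2)) * (C * (1+|x|)^(-1-θ 2)) := by rw [← e]; ring
      _ ≤ _ := mul_le_mul_of_nonneg_left (hlow x) (by positivity)
  refine Matrix.PosDef.of_dotProduct_mulVec_pos ?_ ?_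
  · ext i j
    simp only [FisherInfo, Matrix.conjTranspose_apply, Matrix.of_apply, star_trivial]
    simp_rw [mul_comm (fP j θ _)]
  · intro v hv
    set g : ℝ → ℝ := fun x => ∑ i, v i * fP i θ x with hg
    have gc : Continuous g := continuous_finsetSum _ fun i _ => continuous_const.mul (hcont i)
    have hexp : ∀ x, g x * g x / fM θ x = ∑ i, ∑ j, v i * v j * (fP i θ x * fP j θ x / fM θ x) := by
      intro x
      simp only [hg]
      rw [Finset.sum_mul_sum, Finset.sum_div]
      refine Finset.sum_congr rfl fun i _ => ?_
      rw [Finset.sum_div]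
      refine Finset.sum_congr rfl fun j _ => ?_
      ring
    have gi : Integrable (fun x => g x * g x / fM θ x) := by
      simp_rw [hexp]
      exact integrable_finsetSum _ fun i _ => integrable_finsetSum _ fun j _ => (hIij i j).const_mul _
    have hq : star v ⬝ᵥ (FisherInfo θ).mulVec v = ∫ x, g x * g x / fM θ x := by
      simp_rw [hexp]
      rw [integral_finsetSum _ fun i _ => integrable_finsetSum _ fun j _ => (hIij i j).const_mul _]
      simp only [dotProduct, Matrix.mulVec, star_trivial]
      refine Finset.sum_congr rfl fun i _ => ?_
      rw [integral_finsetSum _ fun j _ => (hIij i j).const_mul _, Finset.mul_sum]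
      refine Finset.sum_congr rfl fun j _ => ?_
      rw [integral_const_mul]
      simp only [FisherInfo, Matrix.of_apply]
      ring
    have hnn : 0 ≤ fun x => g x * g x / fM θ x := fun x => div_nonneg (mul_self_nonneg _) (hpos x).le
    rw [hq]
    refine lt_of_le_of_ne (integral_nonneg hnn) ?_
    intro h0
    have h1 := (integral_eq_zero_iff_of_nonneg hnn gi).1 h0.symm
    have h2 : (fun x => g x * g x / fM θ x) = 0 :=
      (Continuous.ae_eq_iff_eq volume ((gc.mul gc).div hfc (fun x => (hpos x).ne')) continuous_zero).1 h1
    have hgz : ∀ x, g x = 0 := by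
      intro x
      have := congrFun h2 x
      simp only [Pi.zero_apply, div_eq_zero_iff, (hpos x).ne', or_false, mul_self_eq_zero] at this
      exact this
    apply hv
    refine aux_indep hθ v ?_
    have hfour := aux_four (h := fun t => ∑ i, (v i : ℂ) * (phiM θ t * dD θ i t)) (integrable_finsetSum _ fun i _ => (hint i).const_mul _)
      (continuousOn_finsetSum _ fun i _ => (aux_phiD_cont hθ (hnice i)).const_mul _) ?_
    · intro t ht
      have := hfour t ht
      have e : ∑ i, (v i : ℂ) * (phiM θ t * dD θ i t) = phiM θ t * ∑ i, (v i : ℂ) * dD θ i t := by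
        rw [Finset.mul_sum]
        refine Finset.sum_congr rfl fun i _ => ?_
        ring
      simp only [e] at this
      rcases mul_eq_zero.1 this with h | h
      · exact absurd h (Complex.exp_ne_zero _)
      · exact h
    · intro x
      have hgx := hgz x
      simp only [hg] at hgx
      have bm : ∀ i, Integrable (fun t : ℝ => phiM θ t * dD θ i t * Complex.exp (-Complex.I * t * x)) (volume.restrict (Set.Ioi 0)) := by
        intro i
        have := (hint i).bdd_mul (c := 1) (f := fun t : ℝ => Complex.exp (-Complex.I * (t : ℂ) * (x : ℂ))) (Continuous.aestronglyMeasurable (by fun_prop)) (by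
          filter_upwards with t using (aux_ker_norm t x).le)
        simpa only [mul_comm] using this
      have e : ∫ t in Set.Ioi (0:ℝ), (∑ i, (v i : ℂ) * (phiM θ t * dD θ i t)) * Complex.exp (-Complex.I * t * x)
          = ∑ i, (v i : ℂ) * ∫ t in Set.Ioi (0:ℝ), phiM θ t * dD θ i t * Complex.exp (-Complex.I * t * x) := by
        simp_rw [Finset.sum_mul, mul_assoc (v _ : ℂ)]
        rw [integral_finsetSum _ fun i _ => (bm i).const_mul _]
        refine Finset.sum_congr rfl fun i _ => ?_
        rw [integral_const_mul]
      rw [e, Complex.re_sum]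
      simp_rw [Complex.re_ofReal_mul]
      simp_rw [hf] at hgx
      have hpi := Real.pi_pos.ne'
      have : (1/Real.pi) * ∑ i, v i * (∫ t in Set.Ioi (0:ℝ), phiM θ t * dD θ i t * Complex.exp (-Complex.I * t * x)).re = 0 := by
        refine Eq.trans ?_ hgx
        rw [Finset.mul_sum]
        refine Finset.sum_congr rfl fun i _ => ?_
        ring
      rcases mul_eq_zero.1 this with h | h
      · exact absurd h (by positivity)
      · exact h
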